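/- arXiv:1912.10932 — 4 statements merged into one kernel-verified Lean document; each statement's English description precedes it below -/
import Mathlib

section
/- Let 𝒞 be a cocomplete category that is generated under colimits by its compact projective objects. Then an object X of 𝒞 is compact if and only if X is the coequalizer of a reflexive parallel pair of morphisms between two compact projective objects of 𝒞 (in particular, any coequalizer of a parallel pair between compact projective objects is compact). -/
open CategoryTheory CategoryTheory.Limits Opposite

universe v u

/-- An object `X` of a category `C` is compact (of finite presentation) if
`Hom_C(X, -)` preserves filtered colimits. -/
def IsCompactObj (C : Type u) [Category.{v} C] (X : C) : Prop :=
  ∀ (J : Type v) [SmallCategory J] [IsFiltered J],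
    Nonempty (PreservesColimitsOfShape J (coyoneda.obj (op X)))

/-- An object `X` of a category `C` is compact projective (strongly of finite presentation)
if `Hom_C(X, -)` preserves filtered colimits and reflexive coequalizers. -/
def IsCompactProjectiveObj (C : Type u) [Category.{v} C] (X : C) : Prop :=
  IsCompactObj C X ∧
    ∀ {Y Z : C} (f g : Y ⟶ Z) (s : Z ⟶ Y), s ≫ f = 𝟙 Z → s ≫ g = 𝟙 Z →
      Nonempty (PreservesColimit (parallelPair f g) (coyoneda.obj (op X)))

/-- A class of objects of `C` is closed under (small) colimits if the colimit point of any
small diagram all of whose objects belong to the class again belongs to the class. -/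
def ClosedUnderColimits (C : Type u) [Category.{v} C] (P : Set C) : Prop :=
  ∀ (J : Type v) [SmallCategory J], ∀ (F : J ⥤ C) (c : Cocone F),
    IsColimit c → (∀ j, F.obj j ∈ P) → c.pt ∈ P

/-- A cocomplete category `C` is generated under colimits by its compact projective
objects if the only class of objects of `C` containing all compact projective objects and
closed under colimits consists of all objects of `C`. -/
def GeneratedByCompactProjectives (C : Type u) [Category.{v} C] : Prop :=
  ∀ P : Set C, ClosedUnderColimits C P →
    (∀ X : C, IsCompactProjectiveObj C X → X ∈ P) → ∀ X : C, X ∈ P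


namespace CPAux

universe w

variable {C : Type u} [Category.{v} C]

/-- Elementary form of being a coequalizer. -/
def IsCoeq {Y Z X : C} (f g : Y ⟶ Z) (π : Z ⟶ X) : Prop :=
  f ≫ π = g ≫ π ∧ ∀ (T : C) (h : Z ⟶ T), f ≫ h = g ≫ h → ∃! k : X ⟶ T, π ≫ k = h

lemma isCoeq_of_isColimit {Y Z X : C} {f g : Y ⟶ Z} {π : Z ⟶ X} (w : f ≫ π = g ≫ π)
    (hc : IsColimit (Cofork.ofπ π w)) : IsCoeq f g π := by
  refine ⟨w, fun T h hh => ⟨Cofork.IsColimit.desc hc h hh, ?_, ?_⟩⟩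
  · exact Cofork.IsColimit.π_desc' hc h hh
  · intro k hk
    apply Cofork.IsColimit.hom_ext hc
    rw [Cofork.IsColimit.π_desc' hc h hh]
    exact hk

lemma IsCoeq.nonempty_isColimit {Y Z X : C} {f g : Y ⟶ Z} {π : Z ⟶ X} (h : IsCoeq f g π) :
    Nonempty (IsColimit (Cofork.ofπ π h.1)) := by
  choose d hd1 hd2 using fun (s : Cofork f g) => h.2 _ s.π s.condition
  exact ⟨Cofork.IsColimit.mk _ d hd1 (fun s m hm => hd2 s m hm)⟩

lemma IsCoeq.epi {Y Z X : C} {f g : Y ⟶ Z} {π : Z ⟶ X} (h : IsCoeq f g π) : Epi π := by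
  refine ⟨fun a b hab => ?_⟩
  exact (h.2 _ (π ≫ b) (by rw [← Category.assoc, h.1, Category.assoc])).unique hab rfl

/-- Elementary form of projectivity. -/
def IsProj (X : C) : Prop :=
  ∀ {Y Z W : C} (f g : Y ⟶ Z) (s : Z ⟶ Y) (π : Z ⟶ W), s ≫ f = 𝟙 Z → s ≫ g = 𝟙 Z →
    IsCoeq f g π → (∀ h : X ⟶ W, ∃ k, k ≫ π = h) ∧
      ∀ h h' : X ⟶ Z, h ≫ π = h' ≫ π →
        Relation.EqvGen (fun a b : X ⟶ Z => ∃ k : X ⟶ Y, k ≫ f = a ∧ k ≫ g = b) h h'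

lemma type_coeq_iff {Y Z W : Type v} (f g : Y ⟶ Z) (π : Z ⟶ W) (w : f ≫ π = g ≫ π) :
    Nonempty (IsColimit (Cofork.ofπ π w)) ↔
      (Function.Surjective π ∧ ∀ a b, π a = π b →
        Relation.EqvGen (fun a b => ∃ k, f k = a ∧ g k = b) a b) := by
  constructor
  · rintro ⟨hc⟩
    have key : π ≫ (hc.coconePointUniqueUpToIso (Types.coequalizerColimit f g).isColimit).hom
        = (↾(Function.Coequalizer.mk f g)) :=
      hc.comp_coconePointUniqueUpToIso_hom (Types.coequalizerColimit f g).isColimit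
        WalkingParallelPair.one
    constructor
    · have : Epi π := (isCoeq_of_isColimit w hc).epi
      exact (epi_iff_surjective π).1 this
    · intro a b hab
      have ha := ConcreteCategory.congr_hom key a
      have hb := ConcreteCategory.congr_hom key b
      have : Function.Coequalizer.mk f g a = Function.Coequalizer.mk f g b := by
        refine ha.symm.trans (Eq.trans ?_ hb)
        simp [hab]
      refine Relation.EqvGen.mono ?_ _ _ (Quot.eqvGen_exact this)
      rintro _ _ ⟨x⟩
      exact ⟨x, rfl, rfl⟩
  · rintro ⟨hs, hr⟩
    apply IsCoeq.nonempty_isColimit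
    refine ⟨w, fun T h hh => ?_⟩
    have : ∀ a b, π a = π b → h a = h b := by
      intro a b hab
      have := hr a b hab
      induction this with
      | rel x y hxy =>
        obtain ⟨k, rfl, rfl⟩ := hxy
        exact ConcreteCategory.congr_hom hh k
      | refl x => rfl
      | symm x y hxy ih => exact (ih hab.symm).symm
      | trans x y z h1 h2 ih1 ih2 =>
        have e : ∀ {x y}, Relation.EqvGen (fun a b => ∃ k, f k = a ∧ g k = b) x y →
            π x = π y := by
          intro x y h
          induction h with
          | rel x y hxy =>
            obtain ⟨k, rfl, rfl⟩ := hxy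
            exact ConcreteCategory.congr_hom w k
          | refl x => rfl
          | symm x y hxy ih => exact ih.symm
          | trans x y z h1 h2 ih1 ih2 => exact ih1.trans ih2
        exact (ih1 (e h1)).trans (ih2 (e h2))
    refine ⟨↾(fun x => h (Function.surjInv hs x)), ?_, ?_⟩
    · ext x
      exact this _ _ (Function.surjInv_eq hs _)
    · rintro k rfl
      ext x
      exact congrArg k (Function.surjInv_eq hs x).symm

lemma isProj_iff [HasColimits C] (X : C) : IsProj X ↔
    ∀ {Y Z : C} (f g : Y ⟶ Z) (s : Z ⟶ Y), s ≫ f = 𝟙 Z → s ≫ g = 𝟙 Z →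
      Nonempty (PreservesColimit (parallelPair f g) (coyoneda.obj (op X))) := by
  constructor
  · intro H Y Z f g s hf hg
    have h0 : IsCoeq f g (coequalizer.π f g) :=
      isCoeq_of_isColimit (coequalizer.condition f g) (coequalizerIsCoequalizer f g)
    obtain ⟨h1, h2⟩ := H f g s _ hf hg h0
    obtain ⟨h3⟩ := (type_coeq_iff ((coyoneda.obj (op X)).map f) ((coyoneda.obj (op X)).map g)
      ((coyoneda.obj (op X)).map (coequalizer.π f g))
      (by rw [← Functor.map_comp, ← Functor.map_comp, coequalizer.condition f g])).2 ⟨h1, h2⟩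
    exact ⟨preservesColimit_of_preserves_colimit_cocone (coequalizerIsCoequalizer f g)
      ((isColimitMapCoconeCoforkEquiv _ (coequalizer.condition f g)).symm h3)⟩
  · intro H Y Z W f g s π hf hg hc
    obtain ⟨hp⟩ := H f g s hf hg
    obtain ⟨hl⟩ := hc.nonempty_isColimit
    exact (type_coeq_iff ((coyoneda.obj (op X)).map f) ((coyoneda.obj (op X)).map g)
      ((coyoneda.obj (op X)).map π) _).1 ⟨isColimitCoforkMapOfIsColimit _ _ hl⟩

lemma eqvGen_pi {ι : Type*} [Finite ι] {α : ι → Type*} (r : ∀ i, α i → α i → Prop)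
    (hr : ∀ i a, r i a a) (x y : ∀ i, α i) (h : ∀ i, Relation.EqvGen (r i) (x i) (y i)) :
    Relation.EqvGen (fun x y : ∀ i, α i => ∀ i, r i (x i) (y i)) x y := by
  classical
  have := Fintype.ofFinite ι
  have upd : ∀ (i : ι) (z : ∀ i, α i) (a b : α i), Relation.EqvGen (r i) a b →
      Relation.EqvGen (fun x y : ∀ i, α i => ∀ i, r i (x i) (y i))
        (Function.update z i a) (Function.update z i b) := by
    intro i z a b hab
    induction hab with
    | rel a b hab =>
      apply Relation.EqvGen.rel
      intro j
      by_cases hj : j = i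
      · subst hj; simpa using hab
      · simpa [hj] using hr _ _
    | refl a => exact Relation.EqvGen.refl _
    | symm a b _ ih => exact ih.symm
    | trans a b c _ _ ih1 ih2 => exact ih1.trans _ _ _ ih2
  have main : ∀ S : Finset ι, Relation.EqvGen (fun x y : ∀ i, α i => ∀ i, r i (x i) (y i))
      x (fun i => if i ∈ S then y i else x i) := by
    intro S
    induction S using Finset.induction_on with
    | empty => simpa using Relation.EqvGen.refl _
    | insert i S hi ih =>
      refine ih.trans _ _ _ ?_
      have := upd i (fun i => if i ∈ S then y i else x i) (x i) (y i) (h i)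
      convert this using 1
      · ext j
        by_cases hj : j = i
        · subst hj; simp [hi]
        · simp [hj]
      · ext j
        by_cases hj : j = i
        · subst hj; simp
        · simp [hj]
  simpa using main Finset.univ

lemma isProj_cofan {ι : Type*} [Finite ι] (p : ι → C) (c : Cofan p) (hc : IsColimit c)
    (hp : ∀ i, IsProj (p i)) : IsProj c.pt := by
  intro Y Z W f g s π hf hg hq
  have hh := fun i => hp i f g s π hf hg hq
  constructor
  · intro h
    choose k hk using fun i => (hh i).1 (c.inj i ≫ h)
    refine ⟨Cofan.IsColimit.desc hc k, Cofan.IsColimit.hom_ext hc _ _ fun i => ?_⟩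
    rw [← Category.assoc, Cofan.IsColimit.fac, hk]
  · intro h h' e
    have h1 := eqvGen_pi (fun i (a b : p i ⟶ Z) => ∃ k : p i ⟶ Y, k ≫ f = a ∧ k ≫ g = b)
      (fun i a => ⟨a ≫ s, by simp [hf], by simp [hg]⟩) (fun i => c.inj i ≫ h)
      (fun i => c.inj i ≫ h') (fun i => (hh i).2 _ _ (by simp [e]))
    have h2 : ∀ x y : (∀ i, p i ⟶ Z), Relation.EqvGen (fun x y : (∀ i, p i ⟶ Z) =>
        ∀ i, ∃ k : p i ⟶ Y, k ≫ f = x i ∧ k ≫ g = y i) x y →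
        Relation.EqvGen (fun a b : c.pt ⟶ Z => ∃ k : c.pt ⟶ Y, k ≫ f = a ∧ k ≫ g = b)
          (Cofan.IsColimit.desc hc x) (Cofan.IsColimit.desc hc y) := by
      intro x y hxy
      induction hxy with
      | rel x y hxy =>
        choose k hk hk' using hxy
        refine Relation.EqvGen.rel _ _ ⟨Cofan.IsColimit.desc hc k, ?_, ?_⟩
        · refine Cofan.IsColimit.hom_ext hc _ _ fun i => ?_
          rw [← Category.assoc, Cofan.IsColimit.fac, hk, Cofan.IsColimit.fac]
        · refine Cofan.IsColimit.hom_ext hc _ _ fun i => ?_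
          rw [← Category.assoc, Cofan.IsColimit.fac, hk', Cofan.IsColimit.fac]
      | refl a => exact Relation.EqvGen.refl _
      | symm a b _ ih => exact ih.symm
      | trans a b c _ _ ih1 ih2 => exact ih1.trans _ _ _ ih2
    have h3 := h2 _ _ h1
    convert h3 using 1
    · refine Cofan.IsColimit.hom_ext hc _ _ fun i => ?_
      rw [Cofan.IsColimit.fac]
    · refine Cofan.IsColimit.hom_ext hc _ _ fun i => ?_
      rw [Cofan.IsColimit.fac]

attribute [local instance] Cardinal.fact_isRegular_aleph0

lemma isCompactObj_iff (X : C) : IsCompactObj C X ↔ IsFinitelyPresentable.{v} X := by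
  rw [isFinitelyPresentable_iff_preservesFilteredColimits]
  constructor
  · intro h
    exact ⟨fun J _ _ => (h J).some⟩
  · intro h J _ _
    exact ⟨inferInstance⟩

lemma isCompactObj_of_isColimit {K : Type w} [SmallCategory K] [FinCategory K] {F : K ⥤ C}
    (c : Cocone F) (hc : IsColimit c) (h : ∀ k, IsCompactObj C (F.obj k)) :
    IsCompactObj C c.pt := by
  simp only [isCompactObj_iff] at h ⊢
  exact isCardinalPresentable_of_isColimit' c hc _
    (by rw [hasCardinalLT_aleph0_iff]; infer_instance)

lemma isCP_cofan [HasColimits C] {ι : Type w} [Finite ι] (p : ι → C) (c : Cofan p)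
    (hc : IsColimit c) (hp : ∀ i, IsCompactProjectiveObj C (p i)) :
    IsCompactProjectiveObj C c.pt := by
  have := Fintype.ofFinite ι
  refine ⟨isCompactObj_of_isColimit c hc (fun k => (hp k.as).1), ?_⟩
  exact (isProj_iff _).1 (isProj_cofan p c hc fun i => (isProj_iff _).2 (hp i).2)

lemma isCP_coprod [HasColimits C] {A B : C} (hA : IsCompactProjectiveObj C A)
    (hB : IsCompactProjectiveObj C B) : IsCompactProjectiveObj C (A ⨿ B) := by
  let p : Bool → C := fun b => bif b then A else B
  let c : Cofan p := Cofan.mk (A ⨿ B) (fun b => match b with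
    | true => (coprod.inl : A ⟶ A ⨿ B)
    | false => (coprod.inr : B ⟶ A ⨿ B))
  have hc : IsColimit c := Cofan.IsColimit.mk _
    (fun s => coprod.desc (s.inj true : A ⟶ _) (s.inj false : B ⟶ _))
    (by
      rintro s (_ | _)
      · exact coprod.inr_desc _ _
      · exact coprod.inl_desc _ _)
    (by
      intro s m hm
      apply coprod.hom_ext
      · rw [coprod.inl_desc]; exact hm true
      · rw [coprod.inr_desc]; exact hm false)
  exact isCP_cofan p c hc (by rintro (_ | _) <;> assumption)

/-- Small coproducts of compact projective objects. -/
def IsQ [HasColimits C] (A : C) : Prop :=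
  ∃ (I : Type v) (p : I → C), (∀ i, IsCompactProjectiveObj C (p i)) ∧ Nonempty (A ≅ ∐ p)

lemma IsQ.of_cp [HasColimits C] {A : C} (hA : IsCompactProjectiveObj C A) : IsQ A :=
  ⟨PUnit.{v + 1}, fun _ => A, fun _ => hA, ⟨(coproductUniqueIso (fun _ : PUnit.{v + 1} => A)).symm⟩⟩

lemma IsQ.sigma [HasColimits C] {I : Type v} {A : I → C} (hA : ∀ i, IsQ (A i)) :
    IsQ (∐ A) := by
  choose K p hp e using hA
  exact ⟨Σ i, K i, fun x => p x.1 x.2, fun x => hp _ _,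
    ⟨(Sigma.mapIso fun i => (e i).some) ≪≫ sigmaSigmaIso K p⟩⟩

lemma IsQ.lift [HasColimits C] {A : C} (hA : IsQ A) {Y Z W : C} (f g : Y ⟶ Z) (s : Z ⟶ Y)
    (π : Z ⟶ W) (hf : s ≫ f = 𝟙 Z) (hg : s ≫ g = 𝟙 Z) (hq : IsCoeq f g π) (h : A ⟶ W) :
    ∃ k, k ≫ π = h := by
  obtain ⟨I, p, hp, ⟨e⟩⟩ := hA
  choose k hk using fun i =>
    ((isProj_iff _).2 (hp i).2 f g s π hf hg hq).1 (Sigma.ι p i ≫ e.inv ≫ h)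
  refine ⟨e.hom ≫ Sigma.desc k, ?_⟩
  rw [Category.assoc, ← Iso.eq_inv_comp]
  apply Sigma.hom_ext
  intro i
  simp [hk]

lemma IsQ.exists_filtered [HasColimits C] {A : C} (hA : IsQ A) :
    ∃ (J : Type v) (_ : SmallCategory J) (_ : IsFiltered J) (D : J ⥤ C) (c : Cocone D)
      (_ : IsColimit c) (_ : c.pt ≅ A), ∀ j, IsCompactProjectiveObj C (D.obj j) := by
  classical
  obtain ⟨I, p, hp, ⟨e⟩⟩ := hA
  refine ⟨Finset (Discrete I), inferInstance, inferInstance, _, _,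
    CoproductsFromFiniteFiltered.isColimitFiniteSubproductsCocone p, e.symm, fun j => ?_⟩
  exact isCP_cofan (fun x : j => (Discrete.functor p).obj x) _ (colimit.isColimit _)
    (fun i => hp i.1.as)

/-- Reflexive coequalizers of objects of `IsQ`. -/
def IsS [HasColimits C] (X : C) : Prop :=
  ∃ (A B : C) (f g : B ⟶ A) (s : A ⟶ B) (π : A ⟶ X), IsQ A ∧ IsQ B ∧ s ≫ f = 𝟙 A ∧
    s ≫ g = 𝟙 A ∧ IsCoeq f g π

lemma IsS.of_cp [HasColimits C] {A : C} (hA : IsCompactProjectiveObj C A) : IsS A := by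
  refine ⟨A, A, 𝟙 A, 𝟙 A, 𝟙 A, 𝟙 A, .of_cp hA, .of_cp hA, by simp, by simp, rfl, ?_⟩
  intro T h _
  exact ⟨h, by simp, by simp⟩

lemma exists_triple [HasColimits C] {I₁ I₂ I₃ : Type v} (A₁ : I₁ → C) (A₂ : I₂ → C) (A₃ : I₃ → C)
    (h₁ : ∀ i, IsQ (A₁ i)) (h₂ : ∀ i, IsQ (A₂ i)) (h₃ : ∀ i, IsQ (A₃ i)) :
    ∃ (S : C) (i₁ : ∀ i, A₁ i ⟶ S) (i₂ : ∀ i, A₂ i ⟶ S) (i₃ : ∀ i, A₃ i ⟶ S), IsQ S ∧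
      (∀ (T : C) (a₁ : ∀ i, A₁ i ⟶ T) (a₂ : ∀ i, A₂ i ⟶ T) (a₃ : ∀ i, A₃ i ⟶ T),
        ∃ m : S ⟶ T, (∀ i, i₁ i ≫ m = a₁ i) ∧ (∀ i, i₂ i ≫ m = a₂ i) ∧ ∀ i, i₃ i ≫ m = a₃ i) ∧
      ∀ (T : C) (m m' : S ⟶ T), (∀ i, i₁ i ≫ m = i₁ i ≫ m') → (∀ i, i₂ i ≫ m = i₂ i ≫ m') →
        (∀ i, i₃ i ≫ m = i₃ i ≫ m') → m = m' := by
  let fam : I₁ ⊕ (I₂ ⊕ I₃) → C := Sum.elim A₁ (Sum.elim A₂ A₃)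
  refine ⟨∐ fam, fun i => Sigma.ι fam (.inl i), fun i => Sigma.ι fam (.inr (.inl i)),
    fun i => Sigma.ι fam (.inr (.inr i)), .sigma ?_, ?_, ?_⟩
  · rintro (x | j | j)
    · exact h₁ _
    · exact h₂ _
    · exact h₃ _
  · intro T a₁ a₂ a₃
    exact ⟨Sigma.desc (fun x => match x with
      | .inl i => a₁ i
      | .inr (.inl i) => a₂ i
      | .inr (.inr i) => a₃ i), fun i => Sigma.ι_desc _ _, fun i => Sigma.ι_desc _ _,
      fun i => Sigma.ι_desc _ _⟩
  · intro T m m' e₁ e₂ e₃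
    apply Sigma.hom_ext
    rintro (x | j | j)
    · exact e₁ _
    · exact e₂ _
    · exact e₃ _

lemma isS_closed [HasColimits C] : ClosedUnderColimits C {X | IsS X} := by
  intro J _ F c hc hF
  choose A B f g s π hA hB hf hg hq using hF
  have hl : ∀ (x : Σ j k : J, j ⟶ k), ∃ l : A x.1 ⟶ A x.2.1, l ≫ π x.2.1 = π x.1 ≫ F.map x.2.2 :=
    fun x => (hA x.1).lift _ _ _ _ (hf x.2.1) (hg x.2.1) (hq x.2.1) _
  choose l hl using hl
  obtain ⟨S, i₁, i₂, i₃, hS, hdesc, hext⟩ :=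
    exists_triple (fun x : (Σ j k : J, j ⟶ k) => A x.1) B A (fun x => hA x.1) hB hA
  obtain ⟨f', f1, f2, f3⟩ := hdesc (∐ A) (fun x => l x ≫ Sigma.ι A x.2.1)
    (fun j => f j ≫ Sigma.ι A j) (fun j => Sigma.ι A j)
  obtain ⟨g', g1, g2, g3⟩ := hdesc (∐ A) (fun x => Sigma.ι A x.1)
    (fun j => g j ≫ Sigma.ι A j) (fun j => Sigma.ι A j)
  refine ⟨∐ A, S, f', g', Sigma.desc i₃,
    Sigma.desc (fun j => π j ≫ c.ι.app j), .sigma hA, hS, ?_, ?_, ?_, ?_⟩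
  · apply Sigma.hom_ext
    intro j
    rw [Sigma.ι_desc_assoc, f3, Category.comp_id]
  · apply Sigma.hom_ext
    intro j
    rw [Sigma.ι_desc_assoc, g3, Category.comp_id]
  · apply hext
    · intro x
      rw [← Category.assoc, f1, ← Category.assoc, g1, Category.assoc, Sigma.ι_desc, Sigma.ι_desc,
        ← c.w x.2.2, ← Category.assoc, ← Category.assoc, hl]
    · intro j
      rw [← Category.assoc, f2, ← Category.assoc, g2, Category.assoc, Category.assoc,
        Sigma.ι_desc, ← Category.assoc, ← Category.assoc, (hq j).1]
    · intro j
      rw [← Category.assoc, f3, ← Category.assoc, g3]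
  · intro T h hh
    have k1 : ∀ x, l x ≫ Sigma.ι A x.2.1 ≫ h = Sigma.ι A x.1 ≫ h := fun x => by
      rw [← Category.assoc, ← f1 x, ← g1 x, Category.assoc, Category.assoc, hh]
    have k2 : ∀ j, f j ≫ Sigma.ι A j ≫ h = g j ≫ Sigma.ι A j ≫ h := fun x => by
      rw [← Category.assoc, ← Category.assoc, ← f2 x, ← g2 x, Category.assoc, Category.assoc, hh]
    choose d hd hd' using fun j => (hq j).2 T (Sigma.ι A j ≫ h) (k2 j)
    have hd : ∀ j, π j ≫ d j = Sigma.ι A j ≫ h := hd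
    have nat : ∀ {j k : J} (u : j ⟶ k), F.map u ≫ d k = d j := by
      intro j k u
      have := (hq j).epi
      rw [← cancel_epi (π j), hd, ← Category.assoc, ← hl ⟨j, k, u⟩, Category.assoc, hd]
      exact k1 ⟨j, k, u⟩
    let cc : Cocone F := { pt := T, ι := { app := d, naturality := fun j k u => by
                                            simpa using nat u } }
    refine ⟨hc.desc cc, ?_, ?_⟩
    · apply Sigma.hom_ext
      intro j
      rw [Sigma.ι_desc_assoc, Category.assoc, hc.fac]
      exact hd j
    · intro m hm
      apply hc.hom_ext
      intro j
      have := (hq j).epi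
      rw [hc.fac, ← cancel_epi (π j)]
      refine Eq.trans ?_ (hd j).symm
      rw [← hm, Sigma.ι_desc_assoc, Category.assoc]

lemma factor_one [HasColimits C] {J : Type v} [SmallCategory J] [IsFiltered J] {D : J ⥤ C}
    {c : Cocone D} (hc : IsColimit c) {A X X' : C} (f g : c.pt ⟶ A) (π : A ⟶ X)
    (hq : IsCoeq f g π) (hX' : IsCompactObj C X') (m : X' ⟶ X) :
    ∃ (j : J) (i : X' ⟶ coequalizer (c.ι.app j ≫ f) (c.ι.app j ≫ g))
      (r : coequalizer (c.ι.app j ≫ f) (c.ι.app j ≫ g) ⟶ X), i ≫ r = m := by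
  let E : J ⥤ C :=
    { obj := fun j => coequalizer (c.ι.app j ≫ f) (c.ι.app j ≫ g)
      map := fun {j k} u => coequalizer.desc (coequalizer.π _ _) (by
        rw [← c.w u, Category.assoc, Category.assoc, Category.assoc, Category.assoc,
          ← Category.assoc _ f, coequalizer.condition, Category.assoc])
      map_id := fun j => by apply coequalizer.hom_ext; simp
      map_comp := fun u w => by apply coequalizer.hom_ext; simp }
  let cE : Cocone E :=
    { pt := X
      ι := { app := fun j => coequalizer.desc π (by simp [hq.1])
             naturality := fun j k u => by
              apply coequalizer.hom_ext
              simp [E] } }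
  have hE : IsColimit cE := by
    have key : ∀ (s : Cocone E), ∃ d : A ⟶ s.pt, ∀ j, coequalizer.π _ _ ≫ s.ι.app j = d := by
      intro s
      have step : ∀ {j k : J} (u : j ⟶ k),
          (coequalizer.π (c.ι.app j ≫ f) (c.ι.app j ≫ g) ≫ s.ι.app j : A ⟶ s.pt) =
          coequalizer.π (c.ι.app k ≫ f) (c.ι.app k ≫ g) ≫ s.ι.app k := by
        intro j k u
        rw [← s.w u, ← Category.assoc]
        congr 1
        exact coequalizer.π_desc _ _
      let j0 : J := IsFiltered.nonempty.some
      refine ⟨coequalizer.π (c.ι.app j0 ≫ f) (c.ι.app j0 ≫ g) ≫ s.ι.app j0, fun j => ?_⟩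
      rw [step (IsFiltered.leftToMax j j0), step (IsFiltered.rightToMax j j0)]
    choose d hd using key
    have hd2 : ∀ s, f ≫ d s = g ≫ d s := by
      intro s
      apply hc.hom_ext
      intro j
      rw [← hd s j, ← Category.assoc, ← Category.assoc, ← Category.assoc, ← Category.assoc,
        coequalizer.condition]
    choose e he he' using fun s => hq.2 _ (d s) (hd2 s)
    refine ⟨e, fun s j => ?_, fun s m hm => he' s m ?_⟩
    · apply coequalizer.hom_ext
      rw [hd s j]
      exact (coequalizer.π_desc_assoc _ _ _).trans (he s)
    · let j0 : J := IsFiltered.nonempty.some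
      rw [← hd s j0, ← hm j0]
      exact (coequalizer.π_desc_assoc _ _ _).symm
  have := (hX' J).some
  obtain ⟨j, p, hp⟩ := exists_hom_of_preservesColimit_coyoneda hE m
  exact ⟨j, p, _, hp⟩

lemma factor_two [HasColimits C] {J : Type v} [SmallCategory J] [IsFiltered J] {D : J ⥤ C}
    {c : Cocone D} (hc : IsColimit c) {B X X' : C} {j0 : J} (f g : B ⟶ D.obj j0) (π : c.pt ⟶ X)
    (hq : IsCoeq (f ≫ c.ι.app j0) (g ≫ c.ι.app j0) π) (hX' : IsCompactObj C X') (m : X' ⟶ X) :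
    ∃ (j : J) (u : j0 ⟶ j) (i : X' ⟶ coequalizer (f ≫ D.map u) (g ≫ D.map u))
      (r : coequalizer (f ≫ D.map u) (g ≫ D.map u) ⟶ X), i ≫ r = m := by
  let E : Under j0 ⥤ C :=
    { obj := fun j => coequalizer (f ≫ D.map j.hom) (g ≫ D.map j.hom)
      map := fun {j k} u => coequalizer.desc (D.map u.right ≫ coequalizer.π _ _) (by
        have := coequalizer.condition (f ≫ D.map k.hom) (g ≫ D.map k.hom)
        have e : D.map k.hom = D.map j.hom ≫ D.map u.right := by rw [← Under.w u, D.map_comp]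
        have e1 : (f ≫ D.map j.hom) ≫ D.map u.right = f ≫ D.map k.hom := by rw [e, Category.assoc]
        have e2 : (g ≫ D.map j.hom) ≫ D.map u.right = g ≫ D.map k.hom := by rw [e, Category.assoc]
        rw [← Category.assoc, ← Category.assoc, e1, e2, this])
      map_id := fun j => by apply coequalizer.hom_ext; simp
      map_comp := fun u w => by apply coequalizer.hom_ext; simp }
  let cE : Cocone E :=
    { pt := X
      ι := { app := fun j => coequalizer.desc (c.ι.app j.right ≫ π) (by
                        have := hq.1
                        simpa using this)
             naturality := fun j k u => by
              apply coequalizer.hom_ext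
              simp [E] } }
  have hc' : IsColimit (c.whisker (Under.forget j0)) :=
    (Functor.Final.isColimitWhiskerEquiv (Under.forget j0) c).symm hc
  have hE : IsColimit cE := by
    let sc : ∀ s : Cocone E, Cocone (Under.forget j0 ⋙ D) := fun s =>
      { pt := s.pt
        ι := { app := fun j => coequalizer.π (f ≫ D.map j.hom) (g ≫ D.map j.hom) ≫ s.ι.app j
               naturality := fun j k u => by
                rw [← s.w u]
                simp [E] } }
    have hd : ∀ (s : Cocone E) (j : Under j0), c.ι.app j.right ≫ hc'.desc (sc s) =
        coequalizer.π (f ≫ D.map j.hom) (g ≫ D.map j.hom) ≫ s.ι.app j := fun s j =>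
      hc'.fac (sc s) j
    have hd2 : ∀ s, (f ≫ c.ι.app j0) ≫ hc'.desc (sc s) = (g ≫ c.ι.app j0) ≫ hc'.desc (sc s) := by
      intro s
      have h1 := hd s (Under.mk (𝟙 j0))
      have h2 := coequalizer.condition (f ≫ D.map (Under.mk (𝟙 j0)).hom)
        (g ≫ D.map (Under.mk (𝟙 j0)).hom)
      have h3 := h2 =≫ s.ι.app (Under.mk (𝟙 j0))
      rw [Category.assoc, Category.assoc]
      erw [h1]
      simpa using h3
    choose e he he' using fun s => hq.2 _ _ (hd2 s)
    refine ⟨e, fun s j => ?_, fun s m hm => he' s m ?_⟩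
    · apply coequalizer.hom_ext
      rw [← hd s j]
      refine (coequalizer.π_desc_assoc _ _ _).trans ?_
      rw [Category.assoc]
      exact congrArg (c.ι.app j.right ≫ ·) (he s)
    · apply hc'.hom_ext
      intro j
      refine Eq.trans ?_ (hd s j).symm
      rw [← hm j]
      refine Eq.trans ?_ (coequalizer.π_desc_assoc _ _ _).symm
      exact (Category.assoc _ _ _).symm
  have := (hX' (Under j0)).some
  obtain ⟨j, p, hp⟩ := exists_hom_of_preservesColimit_coyoneda hE m
  exact ⟨_, j.hom, p, _, hp⟩

/-- Make a pair reflexive. -/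
lemma isCoeq_reflexive [HasColimits C] {A B X : C} {f g : B ⟶ A} {π : A ⟶ X}
    (h : IsCoeq f g π) : IsCoeq (coprod.desc f (𝟙 A)) (coprod.desc g (𝟙 A)) π := by
  refine ⟨by apply coprod.hom_ext <;> simp only [coprod.inl_desc_assoc, coprod.inr_desc_assoc, h.1], fun T k hk => h.2 T k ?_⟩
  have := coprod.inl ≫= hk
  rwa [coprod.inl_desc_assoc, coprod.inl_desc_assoc] at this

lemma isCoeq_retract [HasColimits C] {A B E X : C} {f g : B ⟶ A} {π : A ⟶ E}
    (h : IsCoeq f g π) (i : X ⟶ E) (r : E ⟶ X) (hir : i ≫ r = 𝟙 X) (e : A ⟶ A)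
    (he : e ≫ π = π ≫ r ≫ i) :
    IsCoeq (coprod.desc f (𝟙 A)) (coprod.desc g e) (π ≫ r) := by
  constructor
  · apply coprod.hom_ext
    · rw [coprod.inl_desc_assoc, coprod.inl_desc_assoc, reassoc_of% h.1]
    · rw [coprod.inr_desc_assoc, coprod.inr_desc_assoc, reassoc_of% he, hir, Category.id_comp,
        Category.comp_id]
  · intro T k hk
    have h1 : f ≫ k = g ≫ k := by
      have := coprod.inl ≫= hk
      simpa only [coprod.inl_desc_assoc, coprod.inr_desc_assoc, Category.id_comp] using this
    have h2 : k = e ≫ k := by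
      have := coprod.inr ≫= hk
      simpa only [coprod.inl_desc_assoc, coprod.inr_desc_assoc, Category.id_comp] using this
    obtain ⟨d, hd, -⟩ := h.2 T k h1
    have := h.epi
    have h3 : r ≫ i ≫ d = d := by
      rw [← cancel_epi π, ← reassoc_of% he, hd, ← h2]
    refine ⟨i ≫ d, by simp [h3, hd], fun m hm => ?_⟩
    have : r ≫ m = d := by
      rw [← cancel_epi π, hd, ← hm, Category.assoc]
    rw [← this, reassoc_of% hir]

lemma isCoeq_iso {A A' B B' X : C} {f g : B ⟶ A} {π : A ⟶ X} (h : IsCoeq f g π)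
    (a : A' ≅ A) (b : B' ≅ B) :
    IsCoeq (b.hom ≫ f ≫ a.inv) (b.hom ≫ g ≫ a.inv) (a.hom ≫ π) := by
  refine ⟨by simp [h.1], fun T k hk => ?_⟩
  obtain ⟨d, hd, hd'⟩ := h.2 T (a.inv ≫ k) (by simpa using hk)
  refine ⟨d, by simp [hd], fun m hm => hd' m ?_⟩
  simp [← hm]

lemma main_forward [HasColimits C] (hgen : GeneratedByCompactProjectives C) (X : C)
    (hX : IsCompactObj C X) :
    ∃ (Y Z : C) (f g : Y ⟶ Z) (s : Z ⟶ Y) (π : Z ⟶ X),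
        s ≫ f = 𝟙 Z ∧ s ≫ g = 𝟙 Z ∧
        IsCompactProjectiveObj C Y ∧ IsCompactProjectiveObj C Z ∧ IsCoeq f g π := by
  obtain ⟨A, B, f, g, s, π, hA, hB, -, -, hq⟩ : IsS X :=
    hgen {X | IsS X} isS_closed (fun _ => IsS.of_cp) X
  obtain ⟨J, _, _, D, c, hc, a, hD⟩ := hA.exists_filtered
  obtain ⟨J', _, _, D', c', hc', b, hD'⟩ := hB.exists_filtered
  replace hq := isCoeq_iso hq a b
  generalize b.hom ≫ f ≫ a.inv = f at hq
  generalize b.hom ≫ g ≫ a.inv = g at hq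
  obtain ⟨j', i, r, hir⟩ := factor_one hc' f g _ hq hX (𝟙 X)
  have := ((hD' j').1 J).some
  obtain ⟨j1, f1, hf1⟩ := exists_hom_of_preservesColimit_coyoneda hc (c'.ι.app j' ≫ f)
  obtain ⟨j2, g1, hg1⟩ := exists_hom_of_preservesColimit_coyoneda hc (c'.ι.app j' ≫ g)
  have hf2 : (f1 ≫ D.map (IsFiltered.leftToMax j1 j2)) ≫ c.ι.app _ = c'.ι.app j' ≫ f := by
    simp [hf1]
  have hg2 : (g1 ≫ D.map (IsFiltered.rightToMax j1 j2)) ≫ c.ι.app _ = c'.ι.app j' ≫ g := by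
    simp [hg1]
  have hq2 : IsCoeq (c'.ι.app j' ≫ f) (c'.ι.app j' ≫ g) (coequalizer.π _ _) :=
    isCoeq_of_isColimit (coequalizer.condition _ _) (coequalizerIsCoequalizer _ _)
  generalize c'.ι.app j' ≫ f = f0 at *
  generalize c'.ι.app j' ≫ g = g0 at *
  subst hf2 hg2
  obtain ⟨j, u, i', r', hir'⟩ := factor_two hc _ _ _ hq2 hX i
  generalize hF : (f1 ≫ D.map (IsFiltered.leftToMax j1 j2)) ≫ D.map u = F at *
  generalize hG : (g1 ≫ D.map (IsFiltered.rightToMax j1 j2)) ≫ D.map u = G at *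
  have hq4 : IsCoeq F G (coequalizer.π F G) :=
    isCoeq_of_isColimit (coequalizer.condition _ _) (coequalizerIsCoequalizer _ _)
  have hret : i' ≫ r' ≫ r = 𝟙 X := by rw [← Category.assoc, hir', hir]
  have hq5 := isCoeq_reflexive hq4
  have hcp := isCP_coprod (hD' j') (hD j)
  obtain ⟨e, he⟩ := (IsQ.of_cp (hD j)).lift _ _ coprod.inr _ (coprod.inr_desc _ _)
    (coprod.inr_desc _ _) hq5 (coequalizer.π F G ≫ (r' ≫ r) ≫ i')
  exact ⟨_, _, _, _, coprod.inr ≫ coprod.inl, _,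
    by rw [Category.assoc, coprod.inl_desc, coprod.inr_desc],
    by rw [Category.assoc, coprod.inl_desc, coprod.inr_desc], isCP_coprod hcp (hD j), hD j,
    isCoeq_retract hq5 i' (r' ≫ r) hret e he⟩

lemma compact_of_isCoeq {X Y Z : C} {f g : Y ⟶ Z} {π : Z ⟶ X} (hπ : f ≫ π = g ≫ π)
    (hY : IsCompactObj C Y) (hZ : IsCompactObj C Z) (hc : IsColimit (Cofork.ofπ π hπ)) :
    IsCompactObj C X :=
  isCompactObj_of_isColimit _ hc (by rintro (_ | _) <;> assumption)

end CPAux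

/-- In a cocomplete category generated under colimits by its compact projective objects,
an object is compact iff it is a reflexive coequalizer of compact projective objects;
in particular any coequalizer of a parallel pair between compact projectives is compact. -/
theorem compact_iff_reflexive_coequalizer_of_compactProjectives
    (C : Type u) [Category.{v} C] [HasColimits C]
    (hgen : GeneratedByCompactProjectives C) :
    (∀ X : C, IsCompactObj C X ↔
      ∃ (Y Z : C) (f g : Y ⟶ Z) (s : Z ⟶ Y) (π : Z ⟶ X) (hπ : f ≫ π = g ≫ π),
        s ≫ f = 𝟙 Z ∧ s ≫ g = 𝟙 Z ∧
        IsCompactProjectiveObj C Y ∧ IsCompactProjectiveObj C Z ∧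
        Nonempty (IsColimit (Cofork.ofπ π hπ))) ∧
    (∀ (X Y Z : C) (f g : Y ⟶ Z) (π : Z ⟶ X) (hπ : f ≫ π = g ≫ π),
      IsCompactProjectiveObj C Y → IsCompactProjectiveObj C Z →
      Nonempty (IsColimit (Cofork.ofπ π hπ)) → IsCompactObj C X) := by
  have key : ∀ (X Y Z : C) (f g : Y ⟶ Z) (π : Z ⟶ X) (hπ : f ≫ π = g ≫ π),
      IsCompactProjectiveObj C Y → IsCompactProjectiveObj C Z →
      Nonempty (IsColimit (Cofork.ofπ π hπ)) → IsCompactObj C X :=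
    fun X Y Z f g π hπ hY hZ ⟨hc⟩ => CPAux.compact_of_isCoeq hπ hY.1 hZ.1 hc
  refine ⟨fun X => ⟨fun hX => ?_, ?_⟩, key⟩
  · obtain ⟨Y, Z, f, g, s, π, hf, hg, hY, hZ, hq⟩ := CPAux.main_forward hgen X hX
    exact ⟨Y, Z, f, g, s, π, hq.1, hf, hg, hY, hZ, hq.nonempty_isColimit⟩
  · rintro ⟨Y, Z, f, g, s, π, hπ, -, -, hY, hZ, hc⟩
    exact key X Y Z f g π hπ hY hZ hc
end

section
/- Let 𝒞 be a cocomplete category that is generated under colimits by its compact projective objects. Then every object of 𝒞 is a filtered colimit of compact objects of 𝒞, i.e. 𝒞 is generated under filtered colimits by its compact objects. -/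
open CategoryTheory CategoryTheory.Limits Opposite

universe v u

/-- Data exhibiting the object `X` as a filtered colimit of compact objects of `C`. -/
structure CompactFilteredPresentation (C : Type u) [Category.{v} C] (X : C) where
  /-- the filtered index category -/
  J : Type v
  [cat : SmallCategory J]
  [filt : IsFiltered J]
  /-- the diagram of compact objects -/
  F : J ⥤ C
  compact : ∀ j, IsCompactObj C (F.obj j)
  /-- a colimit cocone for the diagram, whose point is isomorphic to `X` -/
  c : Cocone F
  isColimit : IsColimit c
  iso : c.pt ≅ X

attribute [local instance] Cardinal.fact_isRegular_aleph0

lemma isCompactObj_iff_presentable {C : Type u} [Category.{v} C] (X : C) :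
    IsCompactObj C X ↔ isCardinalPresentable C Cardinal.aleph0.{v} X := by
  constructor
  · intro h
    refine ⟨fun J _ _ => ?_⟩
    have : IsFiltered J := isFiltered_of_isCardinalFiltered J Cardinal.aleph0.{v}
    exact (h J).some
  · intro h J _ _
    have : IsCardinalFiltered J Cardinal.aleph0.{v} := (isCardinalFiltered_aleph0_iff J).2 inferInstance
    exact ⟨h.preservesColimitOfShape J⟩

/-- The class of objects to which a morphism is (uniquely) colocal is closed under colimits. -/
lemma closedUnderColimits_colocal {C : Type u} [Category.{v} C] {X' X : C} (e : X' ⟶ X) :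
    ClosedUnderColimits C
      {T | Function.Bijective (fun f : T ⟶ X' => f ≫ e)} := by
  intro J _ F c hc hF
  refine ⟨fun f g h => hc.hom_ext fun j => (hF j).1 ?_, fun f => ?_⟩
  · have h' : f ≫ e = g ≫ e := h
    simp [h']
  · choose t ht using fun j => (hF j).2 (c.ι.app j ≫ f)
    have ht' : ∀ j, t j ≫ e = c.ι.app j ≫ f := ht
    refine ⟨hc.desc ⟨X', { app := t, naturality := ?_ }⟩, ?_⟩
    · intro i j φ
      apply (hF i).1
      simp [ht']
    · apply hc.hom_ext
      intro j
      simp [ht']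

section

variable {C : Type u} [Category.{v} C] [HasColimits C]

/-- Objects generated under colimits by a small family of compact objects are
filtered colimits of compact objects. -/
lemma presentation_of_small (P : ObjectProperty C) [ObjectProperty.Small.{v} P]
    (hP : P ≤ isCardinalPresentable C Cardinal.aleph0.{v}) (X : C)
    (hX : ∀ Q : Set C, ClosedUnderColimits C Q → (∀ Y, P Y → Y ∈ Q) → X ∈ Q) :
    Nonempty (CompactFilteredPresentation C X) := by
  let S := P.colimitsCardinalClosure Cardinal.aleph0.{v}
  have hS : S ≤ isCardinalPresentable C Cardinal.aleph0.{v} :=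
    ObjectProperty.colimitsCardinalClosure_le_isCardinalPresentable.{v} P hP
  have hSc : S.IsClosedUnderColimitsOfShape WalkingParallelPair := by
    apply ObjectProperty.isClosedUnderColimitsOfShape_colimitsCardinalClosure
    simp only [hasCardinalLT_aleph0_iff]
    infer_instance
  have hSess : ObjectProperty.EssentiallySmall.{v} S := by
    dsimp only [S]; infer_instance
  have hfc : IsCardinalFiltered (CostructuredArrow S.ι X) Cardinal.aleph0.{v} := by
    dsimp only [S]; infer_instance
  let E := equivSmallModel.{v} (CostructuredArrow S.ι X)
  let J := SmallModel.{v} (CostructuredArrow S.ι X)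
  have hJc : IsCardinalFiltered J Cardinal.aleph0.{v} :=
    IsCardinalFiltered.of_equivalence _ E
  have hJ : IsFiltered J := isFiltered_of_isCardinalFiltered J Cardinal.aleph0.{v}
  have hf : IsFiltered (CostructuredArrow S.ι X) :=
    isFiltered_of_isCardinalFiltered _ Cardinal.aleph0.{v}
  have : HasColimitsOfShape (CostructuredArrow S.ι X) C :=
    hasColimitsOfShape_of_equivalence E.symm
  let Φ : CostructuredArrow S.ι X ⥤ C := CostructuredArrow.proj S.ι X ⋙ S.ι
  let cX : Cocone Φ := ⟨X,
    { app := fun j => j.hom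
      naturality := fun i j φ => by
        exact (CostructuredArrow.w φ).trans (Category.comp_id _).symm }⟩
  let e : colimit Φ ⟶ X := colimit.desc Φ cX
  have he : ∀ j, colimit.ι Φ j ≫ e = j.hom := fun j => colimit.ι_desc cX j
  let Q : Set C := {T | Function.Bijective (fun f : T ⟶ colimit Φ => f ≫ e)}
  have hQ : ClosedUnderColimits C Q := closedUnderColimits_colocal e
  have hSQ : ∀ G, S G → G ∈ Q := by
    intro G hG
    have hGp : IsCardinalPresentable G Cardinal.aleph0.{v} := hS _ hG
    refine ⟨fun g₁ g₂ h => ?_, fun f => ?_⟩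
    · replace h : g₁ ≫ e = g₂ ≫ e := h
      obtain ⟨j, φ₁, φ₂, rfl, rfl⟩ : ∃ (j : CostructuredArrow S.ι X)
          (φ₁ φ₂ : G ⟶ Φ.obj j), φ₁ ≫ colimit.ι _ _ = g₁ ∧ φ₂ ≫ colimit.ι _ _ = g₂ := by
        obtain ⟨j₁, f₁, hf₁⟩ := IsCardinalPresentable.exists_hom_of_isColimit
          Cardinal.aleph0.{v} (colimit.isColimit _) g₁
        obtain ⟨j₂, f₂, hf₂⟩ := IsCardinalPresentable.exists_hom_of_isColimit
          Cardinal.aleph0.{v} (colimit.isColimit _) g₂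
        exact ⟨IsFiltered.max j₁ j₂, f₁ ≫ Φ.map (IsFiltered.leftToMax j₁ j₂),
          f₂ ≫ Φ.map (IsFiltered.rightToMax j₁ j₂), by simpa, by simpa⟩
      let obj : S.FullSubcategory :=
        ⟨coequalizer φ₁ φ₂, by
          apply ObjectProperty.prop_colimit
          rintro (_ | _)
          · exact hG
          · exact j.left.2⟩
      let a : S.ι.obj obj ⟶ X := coequalizer.desc j.hom (by
        rw [← he]; simpa using h)
      let ψ : j ⟶ CostructuredArrow.mk a :=
        CostructuredArrow.homMk (ObjectProperty.homMk (coequalizer.π φ₁ φ₂))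
          (coequalizer.π_desc _ _)
      rw [← colimit.w Φ ψ]
      exact coequalizer.condition_assoc φ₁ φ₂ _
    · let γ : CostructuredArrow S.ι X := CostructuredArrow.mk (S := S.ι) (Y := ⟨G, hG⟩) (by exact f)
      exact ⟨colimit.ι Φ γ, he γ⟩
  have hX1 : X ∈ Q := hX Q hQ fun Y hY => hSQ _ (P.le_colimitsCardinalClosure _ _ hY)
  have hcol : IsColimit ((colimit.cocone Φ).whisker E.inverse) :=
    (colimit.isColimit Φ).whiskerEquivalence E.symm
  have hX2 : colimit Φ ∈ Q := hQ J (E.inverse ⋙ Φ) _ hcol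
    fun j => hSQ _ (E.inverse.obj j).left.2
  obtain ⟨s, hs⟩ := hX1.2 (𝟙 X)
  replace hs : s ≫ e = 𝟙 X := hs
  exact ⟨{
    J := J
    F := E.inverse ⋙ Φ
    compact := fun j => (isCompactObj_iff_presentable _).2 (hS _ (E.inverse.obj j).left.2)
    c := _
    isColimit := hcol
    iso := {
      hom := e
      inv := s
      hom_inv_id := hX2.1 (by
        change (e ≫ s) ≫ e = 𝟙 _ ≫ e
        simp [hs])
      inv_hom_id := hs } }⟩

/-- A compact object is a filtered colimit of compact objects. -/
lemma presentation_of_compact (X : C) (hX : IsCompactObj C X) :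
    Nonempty (CompactFilteredPresentation C X) := by
  have h := (isCompactObj_iff_presentable X).1 hX
  refine presentation_of_small (ObjectProperty.ofObj (fun _ : PUnit.{v + 1} => X)) ?_ X ?_
  · rintro _ ⟨_⟩
    exact h
  · intro Q _ hQ
    exact hQ X ⟨PUnit.unit⟩

end

/-- In a cocomplete category generated under colimits by its compact projective objects,
every object is a filtered colimit of compact objects. -/
theorem exists_filtered_presentation_by_compacts
    (C : Type u) [Category.{v} C] [HasColimits C]
    (hgen : GeneratedByCompactProjectives C) (X : C) :
    Nonempty (CompactFilteredPresentation C X) := by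
  refine hgen {X | Nonempty (CompactFilteredPresentation C X)} ?_
    (fun Y hY => presentation_of_compact Y hY.1) X
  intro J _ F c hc hF
  let p : ∀ j, CompactFilteredPresentation C (F.obj j) := fun j => (hF j).some
  let _ : ∀ j, SmallCategory (p j).J := fun j => (p j).cat
  refine presentation_of_small
    (ObjectProperty.ofObj (fun x : Σ j, (p j).J => (p x.1).F.obj x.2)) ?_ c.pt ?_
  · rintro _ ⟨x⟩
    exact (isCompactObj_iff_presentable _).1 ((p x.1).compact x.2)
  · intro Q hQ hPQ
    refine hQ J F c hc fun j => ?_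
    have h1 : IsColimit ((Cocone.extend (p j).c (p j).iso.hom)) :=
      IsColimit.extendIso _ (p j).isColimit
    exact hQ (p j).J (p j).F _ h1 fun i => hPQ _ ⟨(⟨j, i⟩ : Σ j, (p j).J)⟩
end

section
/- The forgetful functor from the category CommRing of commutative rings to the category Set of sets preserves reflexive coequalizers: if f, g : B ⇉ C is a parallel pair of ring homomorphisms admitting a common section s : C → B (f ∘ s = g ∘ s = id_C), then the coequalizer of (f, g) in CommRing has underlying set the coequalizer of the underlying pair of maps of sets (namely C modulo the equivalence relation generated by f(b) ∼ g(b)). -/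
open CategoryTheory CategoryTheory.Limits

universe u

/-- For a reflexive pair, the differences `f b - g b` already form an ideal, so two elements
identified in the coequalizer are of the form `f b`, `g b`. -/
theorem reflexive_pair_rel {B C : Type u} [CommRing B] [CommRing C] (f g : B →+* C) (s : C →+* B)
    (hf : ∀ c, f (s c) = c) (hg : ∀ c, g (s c) = c) (x y : C)
    (h : x - y ∈ Ideal.span (Set.range fun b => f b - g b)) : ∃ b, f b = x ∧ g b = y := by
  have key : ∃ b, f b - g b = x - y := by
    generalize x - y = z at h
    induction h using Submodule.span_induction with
    | mem z hz => exact hz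
    | zero => exact ⟨0, by simp⟩
    | add a b _ _ ha hb =>
      obtain ⟨p, rfl⟩ := ha
      obtain ⟨q, rfl⟩ := hb
      exact ⟨p + q, by simp only [map_add]; ring⟩
    | smul c a _ ha =>
      obtain ⟨p, rfl⟩ := ha
      exact ⟨s c * p, by simp only [map_mul, hf, hg, smul_eq_mul]; ring⟩
  obtain ⟨b, hb⟩ := key
  refine ⟨b + s y - s (g b), ?_, ?_⟩
  · simp only [map_sub, map_add, hf]
    linear_combination hb
  · simp only [map_sub, map_add, hg]
    ring

/-- The forgetful functor from commutative rings to sets preserves reflexive coequalizers: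
for any parallel pair `f, g : B ⇉ C` of ring homomorphisms admitting a common section `s`
(`s ≫ f = 𝟙 C` and `s ≫ g = 𝟙 C`), the coequalizer of `(f, g)` in `CommRing` is computed on
underlying sets. -/
theorem forget_commRingCat_preservesReflexiveCoequalizer
    {B C : CommRingCat.{u}} (f g : B ⟶ C) (s : C ⟶ B)
    (hf : s ≫ f = 𝟙 C) (hg : s ≫ g = 𝟙 C) :
    Nonempty (PreservesColimit (parallelPair f g) (forget CommRingCat.{u})) := by
  have hf' : ∀ c, f.hom (s.hom c) = c := fun c => by
    rw [← CommRingCat.comp_apply, hf, CommRingCat.id_apply]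
  have hg' : ∀ c, g.hom (s.hom c) = c := fun c => by
    rw [← CommRingCat.comp_apply, hg, CommRingCat.id_apply]
  have hrel := reflexive_pair_rel f.hom g.hom s.hom hf' hg'
  let I : Ideal C := Ideal.span (Set.range fun b => f.hom b - g.hom b)
  let p : C ⟶ CommRingCat.of (C ⧸ I) := CommRingCat.ofHom (Ideal.Quotient.mk I)
  have w : f ≫ p = g ≫ p := by
    ext b
    exact Ideal.Quotient.eq.2 (Ideal.subset_span ⟨b, rfl⟩)
  have hI : ∀ t : Cofork f g, ∀ a ∈ I, t.π.hom a = 0 := by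
    intro t a ha
    have hle : I ≤ RingHom.ker t.π.hom := by
      refine Ideal.span_le.2 ?_
      rintro _ ⟨b, rfl⟩
      have := ConcreteCategory.congr_hom t.condition b
      change t.π.hom (f.hom b) = t.π.hom (g.hom b) at this
      simp [RingHom.mem_ker, this]
    exact hle ha
  have hcol : IsColimit (Cofork.ofπ p w) := by
    refine Cofork.IsColimit.mk _
      (fun t => CommRingCat.ofHom (Ideal.Quotient.lift I t.π.hom (hI t))) ?_ ?_
    · intro t
      rfl
    · intro t m hm
      ext q
      obtain ⟨x, rfl⟩ := Ideal.Quotient.mk_surjective q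
      exact ConcreteCategory.congr_hom hm x
  refine ⟨preservesColimit_of_preserves_colimit_cocone hcol ?_⟩
  refine (isColimitMapCoconeCoforkEquiv (forget CommRingCat.{u}) w).symm ?_
  have hw : ∀ (t : Cofork ((forget CommRingCat.{u}).map f) ((forget CommRingCat.{u}).map g))
      (x y : C), x - y ∈ Ideal.span (Set.range fun b => f.hom b - g.hom b) →
      t.π x = t.π y := by
    intro t x y h
    obtain ⟨b, rfl, rfl⟩ := hrel x y h
    exact ConcreteCategory.congr_hom t.condition b
  refine Cofork.IsColimit.mk _
    (fun t => ↾(fun q => Quotient.liftOn' q (fun x : C => t.π x) (fun x y h =>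
      hw t x y ((Submodule.quotientRel_def _).1 h)))) ?_ ?_
  · intro t
    rfl
  · intro t m hm
    ext q
    obtain ⟨x, rfl⟩ := Ideal.Quotient.mk_surjective q
    exact ConcreteCategory.congr_hom hm x
end

section
/- Let R be a commutative ring and I ⊆ R an ideal contained in every maximal ideal of R. Then there exists a commutative R-algebra R̃ such that: (i) R̃ is faithfully flat over R; (ii) R̃ is a filtered colimit of flat, finitely presented R-algebras (R̃ is ind-fppf over R); (iii) the pair (R̃, I·R̃) is Henselian; and (iv) every faithfully flat, finitely presented R̃-algebra S admits an R̃-algebra homomorphism S → R̃, i.e. every fppf cover of R̃ splits. -/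
universe u

/-- Data witnessing that `R̃` (the field `At`) is a faithfully flat, ind-fppf `R`-algebra
which is Henselian along `I·R̃` and over which every fppf cover splits: it is exhibited as a
filtered colimit of flat, finitely presented `R`-algebras. -/
structure IndFppfSplittingAlgebra (R : Type u) [CommRing R] (I : Ideal R) where
  /-- the `R`-algebra `R̃` -/
  At : Type u
  [commRing : CommRing At]
  [alg : Algebra R At]
  /-- (i) `R̃` is faithfully flat over `R` -/
  faithfullyFlat : Module.FaithfullyFlat R At
  /-- the filtered index of the ind-fppf presentation -/
  ι : Type u
  [preorder : Preorder ι]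
  directed : IsDirected ι (· ≤ ·)
  nonempty_ι : Nonempty ι
  /-- the directed system of flat, finitely presented `R`-algebras -/
  A : ι → Type u
  [commRingA : ∀ i, CommRing (A i)]
  [algA : ∀ i, Algebra R (A i)]
  flatA : ∀ i, Module.Flat R (A i)
  fpA : ∀ i, Algebra.FinitePresentation R (A i)
  /-- the transition maps of the directed system -/
  t : ∀ {i j : ι}, i ≤ j → (A i →ₐ[R] A j)
  t_id : ∀ (i : ι) (x : A i), t (le_refl i) x = x
  t_comp : ∀ {i j k : ι} (hij : i ≤ j) (hjk : j ≤ k) (x : A i),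
    t hjk (t hij x) = t (hij.trans hjk) x
  /-- the maps to the colimit -/
  g : ∀ i, A i →ₐ[R] At
  g_comp : ∀ {i j : ι} (h : i ≤ j) (x : A i), g j (t h x) = g i x
  /-- (ii) `R̃` is the filtered colimit of the system: the maps to it are jointly
  surjective … -/
  g_jointly_surjective : ∀ x : At, ∃ (i : ι) (a : A i), g i a = x
  /-- … and two elements identified in `R̃` are identified already at a finite stage -/
  g_eq_eventually : ∀ (i : ι) (x y : A i), g i x = g i y → ∃ (j : ι) (h : i ≤ j), t h x = t h y
  /-- (iii) the pair `(R̃, I·R̃)` is Henselian -/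
  henselian : HenselianRing At (I.map (algebraMap R At))
  /-- (iv) every faithfully flat, finitely presented `R̃`-algebra admits an `R̃`-point,
  i.e. every fppf cover of `R̃` splits -/
  splits : ∀ (S : Type u) [CommRing S] [Algebra At S],
    Module.FaithfullyFlat At S → Algebra.FinitePresentation At S → Nonempty (S →ₐ[At] At)

namespace IndFppf
open TensorProduct
section Crit
variable {B : Type u} [CommRing B] (p : Ideal B) (M : Type u) [AddCommGroup M] [Module B M]

/-- `M / pM` is flat over `B / p`, phrased via `B`-modules killed by `p`. -/
def FM : Prop := ∀ (X Y : Type u) [AddCommGroup X] [AddCommGroup Y] [Module B X] [Module B Y]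
  (i : X →ₗ[B] Y), Function.Injective i → (∀ a ∈ p, ∀ y : Y, a • y = 0) →
    Function.Injective (i.lTensor M)

/-- `Tor₁(M, B/p) = 0`. -/
def TZ : Prop := Function.Injective (LinearMap.lTensor M p.subtype)

variable {p M}

lemma inj_zero {X Y : Type*} [AddCommGroup X] [AddCommGroup Y] [Module B X] [Module B Y]
    {f : X →ₗ[B] Y} (h : ∀ x, f x = 0 → x = 0) : Function.Injective f :=
  (injective_iff_map_eq_zero f).2 h

/-- the surjection `p ⊗ L → pL` -/
noncomputable def mulTo (p : Ideal B) (L : Type u) [AddCommGroup L] [Module B L] :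
    p ⊗[B] L →ₗ[B] (p • (⊤ : Submodule B L) : Submodule B L) :=
  TensorProduct.lift
    { toFun := fun a => 
        { toFun := fun l => ⟨(a : B) • l, Submodule.smul_mem_smul a.2 trivial⟩
          map_add' := by intros; ext; simp
          map_smul' := fun c l => Subtype.ext (smul_comm _ _ _) }
      map_add' := by intros; ext; simp [add_smul]
      map_smul' := by intros; ext; simp [mul_smul] }

lemma mulTo_tmul (L : Type u) [AddCommGroup L] [Module B L] (a : p) (l : L) :
    ((mulTo p L (a ⊗ₜ l) : _) : L) = (a : B) • l := rfl

lemma mulTo_surj (L : Type u) [AddCommGroup L] [Module B L] :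
    Function.Surjective (mulTo p L) := by
  rintro ⟨x, hx⟩
  refine Submodule.smul_induction_on hx (p := fun x => ∃ z, ((mulTo p L z : _) : L) = x) 
    ?_ ?_ |>.imp fun z hz => Subtype.ext hz
  · intro a ha l _
    exact ⟨(⟨a, ha⟩ : p) ⊗ₜ l, rfl⟩
  · rintro x y ⟨z, rfl⟩ ⟨w, rfl⟩
    exact ⟨z + w, by simp⟩

lemma TZ_free (h : TZ p M) (L : Type u) [AddCommGroup L] [Module B L] [Module.Flat B L] :
    Function.Injective (LinearMap.lTensor M (p • (⊤ : Submodule B L) : Submodule B L).subtype) := by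
  apply inj_zero
  intro x hx
  obtain ⟨y, rfl⟩ := LinearMap.lTensor_surjective M (mulTo_surj (p := p) L) x
  have h1 : Function.Injective (LinearMap.rTensor L (LinearMap.lTensor M p.subtype)) :=
    Module.Flat.rTensor_preserves_injective_linearMap _ h
  have h2 : (LinearMap.lTensor M (p • (⊤ : Submodule B L) : Submodule B L).subtype) ∘ₗ
      (LinearMap.lTensor M (mulTo p L)) = (LinearMap.lTensor M (TensorProduct.lid B L).toLinearMap)
        ∘ₗ (TensorProduct.assoc B M B L).toLinearMap ∘ₗ
        LinearMap.rTensor L (LinearMap.lTensor M p.subtype) ∘ₗ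
        (TensorProduct.assoc B M p L).symm.toLinearMap := by
    ext m a l
    simp [mulTo_tmul]
  have h3 := DFunLike.congr_fun h2 y
  simp only [LinearMap.comp_apply] at h3
  rw [hx] at h3
  have h4 : Function.Injective (LinearMap.lTensor M (TensorProduct.lid B L).toLinearMap) :=
    (LinearEquiv.lTensor M (TensorProduct.lid B L)).injective
  have h5 := (injective_iff_map_eq_zero _).1 h4 _ h3.symm
  have h6 := (TensorProduct.assoc B M B L).map_eq_zero_iff.1 h5
  have h7 := (injective_iff_map_eq_zero _).1 h1 _ h6
  have h8 := (TensorProduct.assoc B M p L).symm.map_eq_zero_iff.1 h7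
  rw [h8, map_zero]

/-- kernel step: if `pL ≤ K ≤ L` and `x ∈ M ⊗ K` dies in `M ⊗ L / pL`, then it comes from
`M ⊗ pL`. -/
lemma FM_step (h : FM p M) {L : Type u} [AddCommGroup L] [Module B L] (K : Submodule B L)
    (x : M ⊗[B] K)
    (hx : LinearMap.lTensor M ((p • (⊤ : Submodule B L) : Submodule B L).mkQ ∘ₗ K.subtype) x = 0) :
    ∃ y : M ⊗[B] (K ⊓ p • (⊤ : Submodule B L) : Submodule B L),
      LinearMap.lTensor M (Submodule.inclusion inf_le_left) y = x := by
  set q := (p • (⊤ : Submodule B L) : Submodule B L).mkQ ∘ₗ K.subtype with hq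
  have h1 : Function.Injective (LinearMap.lTensor M (LinearMap.range q).subtype) := by
    apply h _ _ _ (Submodule.subtype_injective _)
    intro a ha y
    obtain ⟨y, rfl⟩ := Submodule.mkQ_surjective _ y
    rw [← map_smul]
    exact (Submodule.Quotient.mk_eq_zero _).2 (Submodule.smul_mem_smul ha Submodule.mem_top)
  have h2 : LinearMap.lTensor M q.rangeRestrict x = 0 := by
    apply (injective_iff_map_eq_zero _).1 h1
    rw [← LinearMap.comp_apply, ← LinearMap.lTensor_comp]
    exact hx
  have hex : Function.Exact (Submodule.inclusion (inf_le_left : (K ⊓ p • (⊤ : Submodule B L) : Submodule B L) ≤ K)) q.rangeRestrict := by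
    intro k
    constructor
    · intro hk
      have : q k = 0 := congrArg Subtype.val hk
      rw [hq] at this
      simp only [LinearMap.comp_apply, Submodule.mkQ_apply, Submodule.Quotient.mk_eq_zero,
        Submodule.subtype_apply] at this
      exact ⟨⟨k, k.2, this⟩, rfl⟩
    · rintro ⟨k, rfl⟩
      apply Subtype.ext
      simpa [hq] using k.2.2
  exact (lTensor_exact M hex q.surjective_rangeRestrict x).1 h2

lemma G1_aux (h : FM p M) (h' : TZ p M) {X Y : Type u} [AddCommGroup X] [AddCommGroup Y] [Module B X]
    [Module B Y] (i : X →ₗ[B] Y) (hi : Function.Injective i)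
    (hp : ∀ a ∈ p, ∀ y : Y, a • y ∈ LinearMap.range i)
    {L : Type u} [AddCommGroup L] [Module B L] [Module.Flat B L] (π : L →ₗ[B] Y)
    (hπ : Function.Surjective π) : Function.Injective (i.lTensor M) := by
  let K : Submodule B L := (LinearMap.range i).comap π
  have hpK : (p • (⊤ : Submodule B L) : Submodule B L) ≤ K := by
    rw [Submodule.smul_le]
    intro a ha l _
    simpa [K] using hp a ha (π l)
  have hK : Function.Injective (LinearMap.lTensor M K.subtype) := by
    apply inj_zero
    intro x hx
    obtain ⟨y, rfl⟩ := FM_step h K x (by rw [LinearMap.lTensor_comp, LinearMap.comp_apply, hx, map_zero])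
    have hy : LinearMap.lTensor M (p • (⊤ : Submodule B L) : Submodule B L).subtype
        (LinearMap.lTensor M (Submodule.inclusion inf_le_right) y) = 0 := by
      rw [← hx, ← LinearMap.comp_apply, ← LinearMap.comp_apply, ← LinearMap.lTensor_comp,
        ← LinearMap.lTensor_comp]
      rfl
    have hy2 := (injective_iff_map_eq_zero _).1 (TZ_free h' L) _ hy
    have : (Submodule.inclusion (inf_le_left : (K ⊓ p • (⊤ : Submodule B L) : Submodule B L) ≤ K))
      = Submodule.inclusion hpK ∘ₗ Submodule.inclusion inf_le_right := rfl
    rw [this, LinearMap.lTensor_comp, LinearMap.comp_apply, hy2, map_zero]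
  let κ : K →ₗ[B] X := (LinearEquiv.ofInjective i hi).symm.toLinearMap ∘ₗ
    (π.restrict (p := K) (q := LinearMap.range i) (fun x hx => hx))
  have hκ : ∀ k, i (κ k) = π k := by
    intro k
    have := LinearEquiv.apply_symm_apply (LinearEquiv.ofInjective i hi) 
      ((π.restrict (p := K) (q := LinearMap.range i) (fun x hx => hx)) k)
    exact congrArg Subtype.val this
  let θ : K →ₗ[B] X × L := κ.prod K.subtype
  let σ : X × L →ₗ[B] Y := i.coprod (-π)
  have hex : Function.Exact θ σ := by
    rintro ⟨x, l⟩
    constructor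
    · intro hxl
      have hxl : i x = π l := by
        simpa [σ, ← sub_eq_add_neg, sub_eq_zero] using hxl
      refine ⟨⟨l, ⟨x, hxl⟩⟩, Prod.ext (hi ?_) rfl⟩
      rw [hxl]; exact hκ _
    · rintro ⟨k, hk⟩
      rw [← hk]
      simp [σ, θ, hκ]
  have hσ : Function.Surjective σ := by
    intro y
    obtain ⟨l, hl⟩ := hπ (-y)
    exact ⟨(0, l), by simp [σ, hl]⟩
  apply inj_zero
  intro x hx
  have h1 : LinearMap.lTensor M σ (LinearMap.lTensor M (LinearMap.inl B X L) x) = 0 := by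
    rw [← LinearMap.comp_apply, ← LinearMap.lTensor_comp, LinearMap.coprod_inl, hx]
  obtain ⟨η, hη⟩ := (lTensor_exact (f := θ) (g := σ) M hex hσ _).1 h1
  have h2 : LinearMap.lTensor M K.subtype η = 0 := by
    have := congrArg (LinearMap.lTensor M (LinearMap.snd B X L)) hη
    rw [← LinearMap.comp_apply, ← LinearMap.comp_apply, ← LinearMap.lTensor_comp,
      ← LinearMap.lTensor_comp, LinearMap.snd_comp_inl] at this
    simpa [θ] using this
  have h3 := (injective_iff_map_eq_zero _).1 hK _ h2
  rw [h3, map_zero] at hη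
  have := congrArg (LinearMap.lTensor M (LinearMap.fst B X L)) hη
  rw [← LinearMap.comp_apply, ← LinearMap.lTensor_comp, LinearMap.fst_comp_inl] at this
  simpa using this.symm

lemma G1 (h : FM p M) (h' : TZ p M) {X Y : Type u} [AddCommGroup X] [AddCommGroup Y] [Module B X]
    [Module B Y] (i : X →ₗ[B] Y) (hi : Function.Injective i)
    (hp : ∀ a ∈ p, ∀ y : Y, a • y ∈ LinearMap.range i) : Function.Injective (i.lTensor M) :=
  G1_aux h h' i hi hp (L := Y →₀ B) (Finsupp.linearCombination B id)
    (Finsupp.linearCombination_id_surjective B Y)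

lemma Gn (h : FM p M) (h' : TZ p M) (n : ℕ) : ∀ {X Y : Type u} [AddCommGroup X] [AddCommGroup Y]
    [Module B X] [Module B Y] (i : X →ₗ[B] Y) (_ : Function.Injective i)
    (_ : ∀ a ∈ p ^ n, ∀ y : Y, a • y ∈ LinearMap.range i), Function.Injective (i.lTensor M) := by
  induction n with
  | zero =>
    intro X Y _ _ _ _ i hi hp
    have : Function.Surjective i := fun y => by simpa using hp 1 (by simp) y
    exact (LinearEquiv.lTensor M (LinearEquiv.ofBijective i ⟨hi, this⟩)).injective
  | succ n ih =>
    intro X Y _ _ _ _ i hi hp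
    let X' : Submodule B Y := LinearMap.range i ⊔ p • ⊤
    let i' : X →ₗ[B] X' := i.codRestrict X' (fun x => le_sup_left (a := LinearMap.range i) ⟨x, rfl⟩)
    have h1 : Function.Injective (LinearMap.lTensor M X'.subtype) := by
      apply G1 h h' _ (Submodule.subtype_injective _)
      intro a ha y
      rw [Submodule.range_subtype]
      exact le_sup_right (a := LinearMap.range i) (Submodule.smul_mem_smul ha trivial)
    have h2 : Function.Injective (i'.lTensor M) := by
      apply ih
      · intro x y hxy
        exact hi (congrArg Subtype.val hxy)
      · rintro a ha ⟨y, hy⟩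
        obtain ⟨_, ⟨x, rfl⟩, z, hz, rfl⟩ := Submodule.mem_sup.1 hy
        suffices a • z ∈ LinearMap.range i by
          obtain ⟨w, hw⟩ := this
          refine ⟨a • x + w, Subtype.ext ?_⟩
          simp [i', hw]
        refine Submodule.smul_induction_on hz ?_ ?_
        · intro b hb y _
          rw [smul_smul]
          exact hp _ (by rw [pow_succ]; exact Ideal.mul_mem_mul ha hb) _
        · intro y z hy hz
          rw [smul_add]; exact add_mem hy hz
    have : i = X'.subtype ∘ₗ i' := rfl
    rw [this, LinearMap.lTensor_comp]
    exact h1.comp h2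

end Crit
end IndFppf

namespace IndFppf
open TensorProduct
lemma tmul_mem_pow {B : Type u} [CommRing B] (p : Ideal B) (S : Type u) [CommRing S] [Algebra B S]
    (N : Type u) [AddCommGroup N] [Module B N] (n : ℕ) (s : S) (a : N)
    (ha : a ∈ (p ^ n • ⊤ : Submodule B N)) :
    s ⊗ₜ[B] a ∈ ((p.map (algebraMap B S)) ^ n • ⊤ : Submodule S (S ⊗[B] N)) := by
  refine Submodule.smul_induction_on ha ?_ ?_
  · intro c hc a' _
    have : s ⊗ₜ[B] (c • a') = algebraMap B S c • (s ⊗ₜ[B] a') := by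
      rw [TensorProduct.tmul_smul, algebraMap_smul]
    rw [this, ← Ideal.map_pow]
    exact Submodule.smul_mem_smul (Ideal.mem_map_of_mem _ hc) trivial
  · intro a b ha hb
    rw [TensorProduct.tmul_add]; exact add_mem ha hb

/-- Local criterion of flatness. -/
lemma local_crit {B : Type u} [CommRing B] [IsNoetherianRing B] (p : Ideal B) (S : Type u)
    [CommRing S] [Algebra B S] [IsNoetherianRing S] (h : FM p S) (h' : TZ p S)
    (𝔞 : Ideal B) (x : S ⊗[B] 𝔞) (hx : LinearMap.lTensor S 𝔞.subtype x = 0) :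
    ∃ r ∈ p.map (algebraMap B S), r • x = x := by
  suffices hs : x ∈ (⨅ i : ℕ, (p.map (algebraMap B S)) ^ i • ⊤ : Submodule S (S ⊗[B] 𝔞)) by
    obtain ⟨r, hr⟩ := (Ideal.mem_iInf_smul_pow_eq_bot_iff _ _).1 hs
    exact ⟨r, r.2, hr⟩
  rw [Submodule.mem_iInf]
  intro n
  obtain ⟨k, hk⟩ := Ideal.exists_pow_inf_eq_pow_smul p (𝔞 : Submodule B B)
  have hk := hk (n + k) (by omega)
  set P : Submodule B B := p ^ (n + k) with hP
  let q : 𝔞 →ₗ[B] B ⧸ P := P.mkQ ∘ₗ 𝔞.subtype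
  have h1 : Function.Injective (LinearMap.lTensor S (LinearMap.range q).subtype) := by
    apply Gn h h' (n + k) _ (Submodule.subtype_injective _)
    intro a ha y
    obtain ⟨y, rfl⟩ := Submodule.mkQ_surjective _ y
    have : a • P.mkQ y = 0 := by
      rw [← map_smul]
      exact (Submodule.Quotient.mk_eq_zero _).2 (Ideal.mul_mem_right _ _ ha)
    rw [this]; exact zero_mem _
  have h2 : LinearMap.lTensor S q.rangeRestrict x = 0 := by
    apply (injective_iff_map_eq_zero _).1 h1
    rw [← LinearMap.comp_apply, ← LinearMap.lTensor_comp]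
    change LinearMap.lTensor S (P.mkQ ∘ₗ 𝔞.subtype) x = 0
    rw [LinearMap.lTensor_comp, LinearMap.comp_apply, hx, map_zero]
  have hex : Function.Exact (LinearMap.ker q).subtype q.rangeRestrict := by
    intro k
    simp [Subtype.ext_iff]
  obtain ⟨y, hy⟩ := (lTensor_exact S hex q.surjective_rangeRestrict x).1 h2
  rw [← hy]
  clear hy
  induction y with
  | zero => rw [map_zero]; exact zero_mem _
  | add y z hy hz => rw [map_add]; exact add_mem hy hz
  | tmul s a =>
    rw [LinearMap.lTensor_tmul]
    apply tmul_mem_pow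
    have ha : ((a : 𝔞) : B) ∈ p ^ (n + k) • (⊤ : Submodule B B) ⊓ (𝔞 : Submodule B B) := by
      refine ⟨?_, (a : 𝔞).2⟩
      have := a.2
      rw [LinearMap.mem_ker] at this
      have := (Submodule.Quotient.mk_eq_zero _).1 this
      simpa using this
    rw [hk, Nat.add_sub_cancel] at ha
    have ha : ((a : 𝔞) : B) ∈ p ^ n • (𝔞 : Submodule B B) := Submodule.smul_mono le_rfl inf_le_right ha
    have e : p ^ n • (𝔞 : Submodule B B) = Submodule.map 𝔞.subtype (p ^ n • ⊤ : Submodule B 𝔞) := by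
      rw [Submodule.map_smul'', Submodule.map_top, Submodule.range_subtype]
    rw [e] at ha
    obtain ⟨b, hb, hb'⟩ := ha
    have : b = a := Subtype.ext hb'
    rw [Submodule.subtype_apply, ← this]; exact hb
end IndFppf

namespace IndFppf
open TensorProduct
section
variable {A B : Type u} [CommRing A] [CommRing B] [Algebra A B] (M : Type u) [AddCommGroup M]
  [Module A M]

/-- `(B ⊗ M) ⊗_B X = M ⊗_A X` -/
noncomputable def bcE (X : Type u) [AddCommGroup X] [Module A X] [Module B X] [IsScalarTower A B X] :
    (B ⊗[A] M) ⊗[B] X ≃+ M ⊗[A] X :=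
  (TensorProduct.comm B (B ⊗[A] M) X).toAddEquiv.trans
    ((AlgebraTensorModule.cancelBaseChange A B B X M).toAddEquiv.trans
      (TensorProduct.comm A X M).toAddEquiv)

lemma bcE_tmul (X : Type u) [AddCommGroup X] [Module A X] [Module B X] [IsScalarTower A B X]
    (b : B) (m : M) (x : X) : bcE (A := A) (B := B) M X ((b ⊗ₜ m) ⊗ₜ x) = m ⊗ₜ (b • x) := rfl

lemma bcE_nat {X Y : Type u} [AddCommGroup X] [Module A X] [Module B X] [IsScalarTower A B X]
    [AddCommGroup Y] [Module A Y] [Module B Y] [IsScalarTower A B Y] (i : X →ₗ[B] Y)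
    (z : (B ⊗[A] M) ⊗[B] X) :
    (i.restrictScalars A).lTensor M (bcE M X z) = bcE M Y (i.lTensor (B ⊗[A] M) z) := by
  induction z with
  | zero => simp
  | add x y hx hy => simp [hx, hy]
  | tmul t x =>
    induction t with
    | zero => simp
    | add a b ha hb => simp only [add_tmul, map_add, ha, hb]
    | tmul b m =>
      rw [LinearMap.lTensor_tmul, bcE_tmul, bcE_tmul, LinearMap.lTensor_tmul]
      simp

lemma bc_inj {X Y : Type u} [AddCommGroup X] [Module A X] [Module B X] [IsScalarTower A B X]
    [AddCommGroup Y] [Module A Y] [Module B Y] [IsScalarTower A B Y] (i : X →ₗ[B] Y) :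
    Function.Injective (i.lTensor (B ⊗[A] M)) ↔
      Function.Injective ((i.restrictScalars A).lTensor M) := by
  have h : (i.restrictScalars A).lTensor M ∘ (bcE (A := A) (B := B) M X) = bcE (A := A) (B := B) M Y ∘ (i.lTensor (B ⊗[A] M)) :=
    funext (bcE_nat M i)
  rw [← (bcE (A := A) (B := B) M Y).toEquiv.comp_injective, ← (bcE (A := A) (B := B) M X).toEquiv.injective_comp]
  change Function.Injective (bcE (A := A) (B := B) M Y ∘ (i.lTensor (B ⊗[A] M))) ↔
    Function.Injective ((i.restrictScalars A).lTensor M ∘ (bcE (A := A) (B := B) M X))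
  rw [h]

lemma FM_bc {p : Ideal A} (h : FM p M) : FM (p.map (algebraMap A B)) (B ⊗[A] M) := by
  intro X Y _ _ _ _ i hi hp
  let _ : Module A X := Module.compHom X (algebraMap A B)
  let _ : Module A Y := Module.compHom Y (algebraMap A B)
  have : IsScalarTower A B X := ⟨fun a b x => by
    rw [Algebra.smul_def, mul_smul]; rfl⟩
  have : IsScalarTower A B Y := ⟨fun a b x => by
    rw [Algebra.smul_def, mul_smul]; rfl⟩
  rw [bc_inj]
  apply h _ _ _ hi
  intro a ha y
  exact hp _ (Ideal.mem_map_of_mem _ ha) y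

/-- converse for quotient base change -/
lemma FM_of_flat {p : Ideal A} [Module.Flat (A ⧸ p) ((A ⧸ p) ⊗[A] M)] : FM p M := by
  intro X Y _ _ _ _ i hi hp
  have hY : Module.IsTorsionBySet A Y p := fun y a => hp a a.2 y
  have hX : Module.IsTorsionBySet A X p := fun y a => hi (by rw [map_smul, map_zero]; exact hp a a.2 _)
  let _ : Module (A ⧸ p) X := hX.module
  let _ : Module (A ⧸ p) Y := hY.module
  have : IsScalarTower A (A ⧸ p) X := hX.isScalarTower
  have : IsScalarTower A (A ⧸ p) Y := hY.isScalarTower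
  let i' : X →ₗ[A ⧸ p] Y := 
    { i with
      map_smul' := by
        intro c x
        obtain ⟨c, rfl⟩ := Ideal.Quotient.mk_surjective c
        exact i.map_smul c x }
  exact (bc_inj M i').1 (Module.Flat.lTensor_preserves_injective_linearMap _ hi)

/-- the key propagation lemma -/
lemma TZ_prop {p : Ideal A} (h : FM p M) (N : Type u) [AddCommGroup N] [Module A N]
    (hN : ∀ η : M ⊗[A] p, LinearMap.lTensor M p.subtype η = 0 → ∀ b : N,
      LinearMap.lTensor M (mulTo p N) (TensorProduct.assoc A M p N (η ⊗ₜ b)) = 0)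
    {L : Type u} [AddCommGroup L] [Module A L] [Module.Flat A L] (π : L →ₗ[A] N)
    (hπ : Function.Surjective π) :
    Function.Injective (LinearMap.lTensor M (p • (⊤ : Submodule A N)).subtype) := by
  apply inj_zero
  intro z hz
  let ρ : p ⊗[A] L →ₗ[A] (p • (⊤ : Submodule A N) : Submodule A N) := mulTo p N ∘ₗ π.lTensor p
  have hρ : Function.Surjective ρ := (mulTo_surj N).comp (LinearMap.lTensor_surjective _ hπ)
  have hπr : ∀ x ∈ (p • (⊤ : Submodule A L) : Submodule A L), π x ∈ (p • (⊤ : Submodule A N) : Submodule A N) := by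
    intro x hx
    have : π x ∈ Submodule.map π (p • ⊤) := ⟨x, hx, rfl⟩
    rw [Submodule.map_smul''] at this
    exact Submodule.smul_mono le_rfl le_top this
  let πr : (p • (⊤ : Submodule A L) : Submodule A L) →ₗ[A] (p • (⊤ : Submodule A N) : Submodule A N) :=
    π.restrict hπr
  have e1 : πr ∘ₗ mulTo p L = ρ := by
    ext a l
    simp [ρ, πr, mulTo_tmul]
  have e2 : (p • (⊤ : Submodule A N)).subtype ∘ₗ πr = π ∘ₗ (p • (⊤ : Submodule A L)).subtype := rfl
  obtain ⟨l, rfl⟩ := LinearMap.lTensor_surjective M hρ z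
  set w := LinearMap.lTensor M ((p • (⊤ : Submodule A L)).subtype ∘ₗ mulTo p L) l with hw
  have hw0 : LinearMap.lTensor M π w = 0 := by
    rw [← hz, hw, ← LinearMap.comp_apply, ← LinearMap.lTensor_comp, ← LinearMap.comp_apply,
      ← LinearMap.lTensor_comp, ← e1, ← LinearMap.comp_assoc, ← LinearMap.comp_assoc, e2]
  obtain ⟨μ, hμ⟩ := (lTensor_exact M π.exact_subtype_ker_map hπ w).1 hw0
  obtain ⟨y, hy⟩ := FM_step h _ μ (by
    rw [LinearMap.lTensor_comp, LinearMap.comp_apply, hμ, hw, ← LinearMap.comp_apply,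
      ← LinearMap.lTensor_comp, ← LinearMap.comp_assoc]
    have : (p • (⊤ : Submodule A L)).mkQ ∘ₗ (p • (⊤ : Submodule A L)).subtype = 0 := by
      ext x; simp
    rw [this]; simp)
  obtain ⟨l', hl'⟩ := LinearMap.lTensor_surjective M (mulTo_surj (p := p) L)
    (LinearMap.lTensor M (Submodule.inclusion inf_le_right) y)
  have h1 : LinearMap.lTensor M ((p • (⊤ : Submodule A L)).subtype ∘ₗ mulTo p L) l' = w := by
    rw [LinearMap.lTensor_comp, LinearMap.comp_apply, hl', ← hμ, ← hy, ← LinearMap.comp_apply,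
       ← LinearMap.comp_apply, ← LinearMap.lTensor_comp, ← LinearMap.lTensor_comp]
    rfl
  have h2 : LinearMap.lTensor M ρ l' = 0 := by
    rw [← e1, LinearMap.lTensor_comp, LinearMap.comp_apply, hl', ← LinearMap.comp_apply,
      ← LinearMap.lTensor_comp]
    have : πr ∘ₗ Submodule.inclusion (inf_le_right : (LinearMap.ker π ⊓ p • (⊤ : Submodule A L) : Submodule A L) ≤ _) = 0 := by
      ext x
      simpa [πr] using x.2.1
    rw [this]; simp
  have h3 : LinearMap.lTensor M ((p • (⊤ : Submodule A L)).subtype ∘ₗ mulTo p L) (l - l') = 0 := by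
    rw [map_sub, h1, hw, sub_self]
  suffices LinearMap.lTensor M ρ (l - l') = 0 by
    rw [map_sub, h2, sub_zero] at this; exact this
  generalize l - l' = δ at h3
  obtain ⟨δ, rfl⟩ := (TensorProduct.assoc A M p L).surjective δ
  have h4 : LinearMap.rTensor L (LinearMap.lTensor M p.subtype) δ = 0 := by
    have e3 : (LinearMap.lTensor M (TensorProduct.lid A L).toLinearMap)
        ∘ₗ (TensorProduct.assoc A M A L).toLinearMap ∘ₗ
        LinearMap.rTensor L (LinearMap.lTensor M p.subtype) = 
        LinearMap.lTensor M ((p • (⊤ : Submodule A L)).subtype ∘ₗ mulTo p L) ∘ₗ 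
          (TensorProduct.assoc A M p L).toLinearMap := by
      ext m a l
      simp [mulTo_tmul]
    have := DFunLike.congr_fun e3 δ
    simp only [LinearMap.comp_apply, LinearEquiv.coe_coe, h3] at this
    have h4 : Function.Injective (LinearMap.lTensor M (TensorProduct.lid A L).toLinearMap) :=
      (LinearEquiv.lTensor M (TensorProduct.lid A L)).injective
    exact (TensorProduct.assoc A M A L).map_eq_zero_iff.1 ((injective_iff_map_eq_zero _).1 h4 _ this)
  have hex := Module.Flat.rTensor_exact L (LinearMap.exact_subtype_ker_map (LinearMap.lTensor M p.subtype))
  obtain ⟨ε, rfl⟩ := (hex δ).1 h4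
  clear h4 h3 hex
  induction ε with
  | zero => simp
  | add a b ha hb => simp only [map_add, ha, hb, add_zero]
  | tmul η l =>
    have := hN η.1 η.2 (π l)
    rw [LinearMap.rTensor_tmul, LinearMap.lTensor_comp, LinearMap.comp_apply]
    convert this using 2
    rw [Submodule.subtype_apply]
    generalize (η : M ⊗[A] p) = η
    change _ = TensorProduct.assoc A M p N (LinearMap.lTensor _ π (η ⊗ₜ l))
    have e : LinearMap.lTensor M (π.lTensor p) ∘ₗ (TensorProduct.assoc A M p L).toLinearMap = 
      (TensorProduct.assoc A M p N).toLinearMap ∘ₗ LinearMap.lTensor (M ⊗[A] p) π := by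
      ext; simp
    exact DFunLike.congr_fun e (η ⊗ₜ l)
end
end IndFppf

namespace IndFppf
open TensorProduct
section
variable {A : Type u} [CommRing A] (p : Ideal A)

/-- `a ↦ a • b` -/
noncomputable def mulAt (N : Type u) [AddCommGroup N] [Module A N] (b : N) :
    p →ₗ[A] (p • (⊤ : Submodule A N) : Submodule A N) :=
  mulTo p N ∘ₗ (TensorProduct.mk A p N).flip b

lemma mulAt_coe (N : Type u) [AddCommGroup N] [Module A N] (b : N) (a : p) :
    (mulAt p N b a : N) = (a : A) • b := rfl

lemma mulAt_lTensor (M : Type u) [AddCommGroup M] [Module A M]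
    (N : Type u) [AddCommGroup N] [Module A N] (b : N) (η : M ⊗[A] p) :
    LinearMap.lTensor M (mulTo p N) (TensorProduct.assoc A M p N (η ⊗ₜ b)) =
      LinearMap.lTensor M (mulAt p N b) η := by
  induction η with
  | zero => simp
  | add x y hx hy => simp [add_tmul, hx, hy]
  | tmul m a => simp [mulAt]

noncomputable def smulTopMap {N N' : Type u} [AddCommGroup N] [Module A N] [AddCommGroup N'] [Module A N']
    (f : N →ₗ[A] N') : (p • (⊤ : Submodule A N) : Submodule A N) →ₗ[A]
      (p • (⊤ : Submodule A N') : Submodule A N') :=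
  f.restrict (by
    intro x hx
    have : f x ∈ Submodule.map f (p • ⊤) := ⟨x, hx, rfl⟩
    rw [Submodule.map_smul''] at this
    exact Submodule.smul_mono le_rfl le_top this)

lemma smulTopMap_mulAt {N N' : Type u} [AddCommGroup N] [Module A N] [AddCommGroup N'] [Module A N']
    (f : N →ₗ[A] N') (b : N) : smulTopMap p f ∘ₗ mulAt p N b = mulAt p N' (f b) := by
  ext a
  exact f.map_smul _ _

lemma TZ_iff (M : Type u) [AddCommGroup M] [Module A M] (B : Type u) [CommRing B] [Algebra A B] :
    TZ (p.map (algebraMap A B)) (B ⊗[A] M) ↔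
      Function.Injective (LinearMap.lTensor M (p • (⊤ : Submodule A B)).subtype) := by
  rw [Ideal.smul_top_eq_map, TZ, bc_inj]
  rfl

lemma exists_fg_smul (C : Type u) [CommRing C] [Algebra A C] (q : C)
    (hq : q ∈ (p • (⊤ : Submodule A C) : Submodule A C)) : ∃ B : Subalgebra A C, B.FG ∧
      q ∈ p • Subalgebra.toSubmodule B := by
  refine Submodule.smul_induction_on hq ?_ ?_
  · intro a ha c _
    refine ⟨Algebra.adjoin A {c}, ⟨{c}, by simp⟩, ?_⟩
    exact Submodule.smul_mem_smul ha (Algebra.subset_adjoin rfl)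
  · rintro x y ⟨B, hB, hx⟩ ⟨B', hB', hy⟩
    refine ⟨B ⊔ B', hB.sup hB', add_mem ?_ ?_⟩
    · exact Submodule.smul_mono le_rfl (fun b hb => (le_sup_left : B ≤ B ⊔ B') hb) hx
    · exact Submodule.smul_mono le_rfl (fun b hb => (le_sup_right : B' ≤ B ⊔ B') hb) hy

lemma exists_fg_smul_set (C : Type u) [CommRing C] [Algebra A C] (Q : Submodule A C) (hQ : Q.FG)
    (hq : Q ≤ (p • (⊤ : Submodule A C) : Submodule A C)) : ∃ B : Subalgebra A C, B.FG ∧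
      Q ≤ p • Subalgebra.toSubmodule B := by
  obtain ⟨s, rfl⟩ := hQ
  choose! F hF hF' using exists_fg_smul p C
  refine ⟨s.sup F, ?_, ?_⟩
  · have : ∀ x ∈ s, (F x).FG := fun x hx => hF x (hq (Submodule.subset_span hx))
    exact Finset.sup_induction (Subalgebra.fg_bot) (fun a ha b hb => ha.sup hb) this
  · rw [Submodule.span_le]
    intro x hx
    exact Submodule.smul_mono le_rfl (fun b hb => (Finset.le_sup hx : F x ≤ s.sup F) hb)
      (hF' x (hq (Submodule.subset_span hx)))

lemma exists_fg_sub [IsNoetherianRing A] (M : Type u) [AddCommGroup M] [Module A M]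
    (C : Type u) [CommRing C] [Algebra A C] (η : M ⊗[A] p)
    (hη : LinearMap.lTensor M (mulAt p C 1) η = 0) :
    ∃ B : Subalgebra A C, B.FG ∧ LinearMap.lTensor M (mulAt p B 1) η = 0 := by
  have hP : (LinearMap.range (mulAt p C 1)).FG := by
    rw [← Submodule.map_top]
    exact Submodule.FG.map _ (Module.Finite.fg_top)
  have h0 : LinearMap.rTensor M (LinearMap.range (mulAt p C 1)).subtype
      (LinearMap.rTensor M (mulAt p C 1).rangeRestrict (TensorProduct.comm A M p η)) = 0 := by
    rw [← LinearMap.comp_apply, ← LinearMap.rTensor_comp]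
    change LinearMap.rTensor M (mulAt p C 1) (TensorProduct.comm A M p η) = 0
    rw [← LinearMap.comm_comp_lTensor_comp_comm_eq]
    simp [hη]
  obtain ⟨Q, hPQ, hQ, hQ0⟩ := TensorProduct.eq_zero_of_fg_of_subtype_eq_zero hP h0
  obtain ⟨B, hB, hQB⟩ := exists_fg_smul_set p C (Q.map (Submodule.subtype _)) (hQ.map _) (by
    rintro _ ⟨x, _, rfl⟩; exact x.2)
  refine ⟨B, hB, ?_⟩
  let ι : (p • (⊤ : Submodule A B) : Submodule A B) →ₗ[A] C :=
    B.val.toLinearMap ∘ₗ Submodule.subtype _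
  have hι : Function.Injective ι := Subtype.val_injective.comp Subtype.val_injective
  have hr : LinearMap.range ι = p • Subalgebra.toSubmodule B := by
    rw [LinearMap.range_comp, Submodule.range_subtype, Submodule.map_smul'']
    congr 1
    ext x; simp
  have hQr : ∀ q : Q, ((q : (p • (⊤ : Submodule A C) : Submodule A C)) : C) ∈ LinearMap.range ι := by
    intro q
    rw [hr]
    exact hQB ⟨_, q.2, rfl⟩
  let g : Q →ₗ[A] (p • (⊤ : Submodule A B) : Submodule A B) :=
    (LinearEquiv.ofInjective ι hι).symm.toLinearMap ∘ₗ
      ((Submodule.subtype _ ∘ₗ Q.subtype).codRestrict (LinearMap.range ι) hQr)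
  have hg : ∀ q, ι (g q) = q := by
    intro q
    have := LinearEquiv.apply_symm_apply (LinearEquiv.ofInjective ι hι) 
      ((Submodule.subtype _ ∘ₗ Q.subtype).codRestrict (LinearMap.range ι) hQr q)
    exact congrArg Subtype.val this
  clear_value g
  have e : g ∘ₗ Submodule.inclusion hPQ ∘ₗ (mulAt p C 1).rangeRestrict = mulAt p B 1 := by
    refine LinearMap.ext fun a => ?_
    have : ι (g (Submodule.inclusion hPQ ((mulAt p C 1).rangeRestrict a))) = ι (mulAt p B 1 a) := by
      rw [hg]
      simp [ι, mulAt_coe]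
    exact hι this
  have h1 : LinearMap.rTensor M (mulAt p B 1) (TensorProduct.comm A M p η) = 0 := by
    rw [← e, LinearMap.rTensor_comp, LinearMap.rTensor_comp, LinearMap.comp_apply,
      LinearMap.comp_apply, hQ0, map_zero]
  rw [← LinearMap.comm_comp_lTensor_comp_comm_eq] at h1
  simpa using h1

lemma TZ_descent [IsNoetherianRing A] (S : Type u) [CommRing S] [Algebra A S] [IsNoetherianRing S]
    (h : FM p S) (C : Type u) [CommRing C] [Algebra A C]
    (hC : Function.Injective (LinearMap.lTensor S (p • (⊤ : Submodule A C)).subtype)) :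
    ∃ B : Subalgebra A C, B.FG ∧ ∀ B' : Subalgebra A C, B ≤ B' →
      TZ (p.map (algebraMap A B')) (B' ⊗[A] S) := by
  let κ := TensorProduct.AlgebraTensorModule.lTensor S S p.subtype
  have hκ : ∀ x, κ x = LinearMap.lTensor S p.subtype x := fun _ => rfl
  obtain ⟨s, hs⟩ : (LinearMap.ker κ).FG := IsNoetherian.noetherian _
  have h1 : ∀ η : S ⊗[A] p, η ∈ LinearMap.ker κ → LinearMap.lTensor S (mulAt p C 1) η = 0 := by
    intro η hη
    apply (injective_iff_map_eq_zero _).1 hC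
    rw [← LinearMap.comp_apply, ← LinearMap.lTensor_comp]
    have : (p • (⊤ : Submodule A C)).subtype ∘ₗ mulAt p C 1 = Algebra.linearMap A C ∘ₗ p.subtype := by
      ext a; simp [mulAt_coe, Algebra.smul_def]
    rw [this, LinearMap.lTensor_comp, LinearMap.comp_apply, ← hκ, hη, map_zero]
  have h2 : ∀ η : S ⊗[A] p, η ∈ LinearMap.ker κ → ∃ B : Subalgebra A C, B.FG ∧
    LinearMap.lTensor S (mulAt p B 1) η = 0 := fun η hη => exists_fg_sub p S C η (h1 η hη)
  choose! F hF hF' using h2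
  have hsk : ∀ x ∈ s, x ∈ LinearMap.ker κ := fun x hx => hs ▸ Submodule.subset_span hx
  refine ⟨s.sup F, ?_, ?_⟩
  · exact Finset.sup_induction (Subalgebra.fg_bot) (fun a ha b hb => ha.sup hb)
      (fun x hx => hF x (hsk x hx))
  · intro B' hB'
    rw [TZ_iff]
    refine TZ_prop S h B' ?_ (L := B' →₀ A) (Finsupp.linearCombination A id)
      (Finsupp.linearCombination_id_surjective A B')
    intro η hη b
    rw [mulAt_lTensor]
    have hη : η ∈ LinearMap.ker κ := hη
    have e : mulAt p B' b = smulTopMap p (LinearMap.mulRight A b) ∘ₗ mulAt p B' 1 := by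
      rw [smulTopMap_mulAt]; simp
    rw [e, LinearMap.lTensor_comp, LinearMap.comp_apply]
    suffices LinearMap.lTensor S (mulAt p B' 1) η = 0 by rw [this, map_zero]
    have hle : LinearMap.ker κ ≤ LinearMap.ker (TensorProduct.AlgebraTensorModule.lTensor S S (mulAt p B' 1)) := by
      rw [← hs, Submodule.span_le]
      intro x hx
      have hle : F x ≤ B' := (Finset.le_sup hx).trans hB'
      have e : mulAt p B' 1 = smulTopMap p (Subalgebra.inclusion hle).toLinearMap ∘ₗ mulAt p (F x) 1 := by
        rw [smulTopMap_mulAt]; simp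
      change LinearMap.lTensor S (mulAt p B' 1) x = 0
      rw [e, LinearMap.lTensor_comp, LinearMap.comp_apply, hF' x (hsk x hx), map_zero]
    exact hle hη
end
end IndFppf

namespace IndFppf
open TensorProduct
section
open MvPolynomial

lemma pseudo_div {D : Type u} [CommRing D] [IsDomain D] {n : ℕ} (I : Ideal (MvPolynomial (Fin n) D)) :
    ∃ (f : D) (Γ : Set (Fin n →₀ ℕ)), f ≠ 0 ∧ (I.restrictScalars D ⊓ restrictSupport D Γ = ⊥) ∧
      ∀ h, ∃ N : ℕ, f ^ N • h ∈ I.restrictScalars D ⊔ restrictSupport D Γ := by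
  classical
  let m : MonomialOrder (Fin n) := MonomialOrder.lex
  let Γ : (Fin n →₀ ℕ) → Prop := fun d => ∃ g ∈ I, g ≠ 0 ∧ m.degree g = d
  have hfin : {d | Minimal Γ d}.Finite := WellQuasiOrderedLE.finite_of_isAntichain (setOfPred_minimal_antichain Γ)
  have hmin : ∀ d, Γ d → ∃ e ∈ hfin.toFinset, e ≤ d := by
    intro d hd
    obtain ⟨e, h1, h2⟩ := exists_minimal_le_of_wellFoundedLT Γ d hd
    exact ⟨e, by simpa using h2, h1⟩
  have hg : ∀ d ∈ hfin.toFinset, ∃ g ∈ I, g ≠ 0 ∧ m.degree g = d := by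
    intro d hd
    have : Minimal Γ d := by simpa using hd
    exact this.prop
  choose! g hgI hg0 hgd using hg
  let f := ∏ d ∈ hfin.toFinset, m.leadingCoeff (g d)
  have hf : f ≠ 0 := by
    rw [Finset.prod_ne_zero_iff]
    intro d hd
    exact m.leadingCoeff_ne_zero_iff.2 (hg0 d hd)
  refine ⟨f, {d | ¬ Γ d}, hf, ?_, ?_⟩
  · rw [eq_bot_iff]
    rintro h ⟨hI, hV⟩
    by_contra h0
    have h1 := hV (m.degree_mem_support h0)
    exact h1 ⟨h, hI, h0, rfl⟩
  · intro h
    suffices ∀ e : m.syn, ∀ h : MvPolynomial (Fin n) D, m.toSyn (m.degree h) ≤ e → ∃ N : ℕ, f ^ N • h ∈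
      I.restrictScalars D ⊔ restrictSupport D {d | ¬ Γ d} from this _ h le_rfl
    intro e
    induction e using WellFoundedLT.induction with
    | ind e ih =>
    intro h he
    obtain ⟨d, rfl⟩ := m.toSyn.surjective e
    have step : ∀ h' : MvPolynomial (Fin n) D, m.toSyn (m.degree h') ≤ m.toSyn d → coeff d h' = 0 → 
        ∃ N : ℕ, f ^ N • h' ∈ I.restrictScalars D ⊔ restrictSupport D {d | ¬ Γ d} := by
      intro h' h1 h2
      by_cases h0 : h' = 0
      · exact ⟨0, by rw [h0, smul_zero]; exact zero_mem _⟩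
      · apply ih _ (lt_of_le_of_ne h1 _) _ le_rfl
        intro h3
        have := m.toSyn.injective h3
        rw [← this] at h2
        exact h0 (m.coeff_degree_eq_zero_iff.1 h2)
    by_cases hd : Γ d
    · obtain ⟨e, he1, he2⟩ := hmin d hd
      obtain ⟨c, hc⟩ : m.leadingCoeff (g e) ∣ f := Finset.dvd_prod_of_mem _ he1
      let t := monomial (d - e) (c * coeff d h) * g e
      have htI : t ∈ I := Ideal.mul_mem_left _ _ (hgI e he1)
      have ht1 : m.toSyn (m.degree t) ≤ m.toSyn d := by
        refine m.degree_mul_le.trans ?_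
        rw [hgd e he1, map_add]
        calc _ ≤ m.toSyn (d - e) + m.toSyn e := by gcongr; exact m.degree_monomial_le _
          _ = _ := by rw [← map_add, tsub_add_cancel_of_le he2]
      have ht2 : coeff d t = f * coeff d h := by
        have : d = (d - e) + e := (tsub_add_cancel_of_le he2).symm
        conv_lhs => rw [this]
        rw [coeff_monomial_mul, hc]
        have : coeff e (g e) = m.leadingCoeff (g e) := by
          rw [MonomialOrder.leadingCoeff, hgd e he1]
        rw [this]; ring
      obtain ⟨N, hN⟩ := step (f • h - t) (m.degree_sub_le.trans (max_le (m.degree_smul_le.trans he) ht1))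
        (by rw [coeff_sub, ht2, coeff_smul, smul_eq_mul, sub_self])
      refine ⟨N + 1, ?_⟩
      have : f ^ (N + 1) • h = f ^ N • (f • h - t) + f ^ N • t := by
        rw [← smul_add, sub_add_cancel, smul_smul, pow_succ]
      rw [this]
      refine add_mem hN (Submodule.mem_sup_left (Submodule.smul_mem _ _ htI))
    · let t := monomial d (coeff d h)
      have htV : t ∈ restrictSupport D {d | ¬ Γ d} := by
        intro x hx
        have := support_monomial_subset hx
        simp at this
        rw [this]; exact hd
      obtain ⟨N, hN⟩ := step (h - t) (m.degree_sub_le.trans (max_le he (m.degree_monomial_le _)))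
        (by rw [coeff_sub]; simp [t])
      refine ⟨N, ?_⟩
      have : f ^ N • h = f ^ N • (h - t) + f ^ N • t := by
        rw [← smul_add, sub_add_cancel]
      rw [this]
      refine add_mem hN (Submodule.mem_sup_right (Submodule.smul_mem _ _ htV))

lemma flat_of_localized {D : Type u} [CommRing D] (W : Submonoid D) {V V' : Type u} [AddCommGroup V]
    [AddCommGroup V'] [Module D V] [Module D V'] [Module.Flat D V] (g : V →ₗ[D] V')
    [IsLocalizedModule W g] : Module.Flat D V' := by
  have e := (LocalizedModule.equivTensorProduct W V).restrictScalars D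
  have : Module.Flat D (Localization W ⊗[D] V) := by
    have : Module.Flat D (Localization W) := IsLocalization.flat _ W
    infer_instance
  exact Module.Flat.of_linearEquiv ((e.symm.trans (IsLocalizedModule.iso W g)).symm)

lemma generic_flat {D : Type u} [CommRing D] [IsDomain D] (S : Type u) [CommRing S] [Algebra D S]
    [Algebra.FiniteType D S] : ∃ f : D, f ≠ 0 ∧ ∀ (S' : Type u) [CommRing S'] [Algebra S S']
      [Algebra D S'] [IsScalarTower D S S'] [IsLocalization.Away (algebraMap D S f) S'],
      Module.Flat D S' := by
  obtain ⟨n, π, hπ⟩ := Algebra.FiniteType.iff_quotient_mvPolynomial''.1 ‹Algebra.FiniteType D S›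
  obtain ⟨f, Γ, hf, h1, h2⟩ := pseudo_div (RingHom.ker π)
  refine ⟨f, hf, ?_⟩
  intro S' _ _ _ _ _
  let g : restrictSupport D Γ →ₗ[D] S' := (Algebra.linearMap S S').restrictScalars D ∘ₗ 
    π.toLinearMap ∘ₗ Submodule.subtype _
  have hg : ∀ v, g v = algebraMap S S' (π v) := fun _ => rfl
  have hu : IsUnit (algebraMap D S' f) := by
    rw [IsScalarTower.algebraMap_apply D S S']
    exact IsLocalization.Away.algebraMap_isUnit _
  have : IsLocalizedModule (Submonoid.powers f) g := by
    constructor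
    · rintro ⟨_, k, rfl⟩
      rw [Module.End.isUnit_iff]
      have := (hu.pow k)
      rw [← map_pow] at this
      obtain ⟨u, hu⟩ := this
      have : ⇑(algebraMap D (Module.End D S') (f ^ k)) = fun x : S' => (u : S') * x := by
        ext x; rw [hu]; exact Algebra.smul_def _ _
      simp only [this]
      exact u.mulLeft_bijective
    · intro y
      obtain ⟨k, s, hs⟩ := IsLocalization.Away.surj (algebraMap D S f) y
      obtain ⟨h, rfl⟩ := hπ s
      obtain ⟨N, hN⟩ := h2 h
      obtain ⟨i, hi, v, hv, hiv⟩ := Submodule.mem_sup.1 hN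
      refine ⟨(⟨v, hv⟩, ⟨f ^ (N + k), N + k, rfl⟩), ?_⟩
      have e : π v = f ^ N • π h := by
        rw [← map_smul, ← hiv, map_add]
        have : π i = 0 := hi
        rw [this, zero_add]
      change f ^ (N + k) • y = g ⟨v, hv⟩
      rw [hg, e, Algebra.smul_def, Algebra.smul_def, map_mul, ← hs, ← IsScalarTower.algebraMap_apply,
        pow_add]
      simp only [map_mul, map_pow, ← IsScalarTower.algebraMap_apply]
      ring
    · intro v w hvw
      rw [hg, hg] at hvw
      obtain ⟨⟨_, k, rfl⟩, hc⟩ := (IsLocalization.eq_iff_exists (Submonoid.powers (algebraMap D S f)) S').1 hvw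
      refine ⟨⟨f ^ k, k, rfl⟩, ?_⟩
      have : (f ^ k • v - f ^ k • w : restrictSupport D Γ).1 ∈ ((RingHom.ker π).restrictScalars D ⊓ restrictSupport D Γ) := by
        refine ⟨?_, (f ^ k • v - f ^ k • w : restrictSupport D Γ).2⟩
        change π (f ^ k • v.1 - f ^ k • w.1) = 0
        rw [map_sub, map_smul, map_smul, Algebra.smul_def, Algebra.smul_def, map_pow, sub_eq_zero]
        exact hc
      rw [h1] at this
      have h3 : (f ^ k • v - f ^ k • w : restrictSupport D Γ) = 0 := Subtype.ext this
      exact sub_eq_zero.1 h3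
  have : Module.Free D (restrictSupport D Γ) := Module.Free.of_basis (basisRestrictSupport D Γ)
  exact flat_of_localized (Submonoid.powers f) g

end
end IndFppf

namespace IndFppf
open TensorProduct
section

lemma loc_inj {R T T' X Y : Type u} [CommRing R] [CommRing T] [CommRing T'] [Algebra R T] [Algebra T T']
    [Algebra R T'] [IsScalarTower R T T'] (t : T) [IsLocalization.Away t T'] [AddCommGroup X]
    [AddCommGroup Y] [Module R X] [Module R Y] (i : X →ₗ[R] Y)
    (h : Function.Injective (LinearMap.lTensor T i)) : Function.Injective (LinearMap.lTensor T' i) := by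
  have := IsLocalizedModule.map_injective (Submonoid.powers t)
    (AlgebraTensorModule.rTensor R X (Algebra.linearMap T T'))
    (AlgebraTensorModule.rTensor R Y (Algebra.linearMap T T')) (AlgebraTensorModule.lTensor T T i) h
  rw [IsLocalizedModule.map_lTensor] at this
  exact this

/-- algebra structure for base change -/
noncomputable abbrev bcAlg (A S S' B : Type u) [CommRing A] [CommRing S] [CommRing S'] [CommRing B] [Algebra A S]
    [Algebra S S'] [Algebra A S'] [IsScalarTower A S S'] [Algebra A B] :
    Algebra (B ⊗[A] S) (B ⊗[A] S') :=
  (Algebra.TensorProduct.map (AlgHom.id B B) (IsScalarTower.toAlgHom A S S')).toAlgebra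

lemma bcAlg_away (A S S' B : Type u) [CommRing A] [CommRing S] [CommRing S'] [CommRing B] [Algebra A S]
    [Algebra S S'] [Algebra A S'] [IsScalarTower A S S'] [Algebra A B] (f : A)
    [IsLocalization.Away (algebraMap A S f) S'] :
    letI := bcAlg A S S' B
    IsScalarTower B (B ⊗[A] S) (B ⊗[A] S') ∧ 
    IsLocalization.Away (algebraMap B (B ⊗[A] S) (algebraMap A B f)) (B ⊗[A] S') := by
  letI := bcAlg A S S' B
  have h1 : IsScalarTower B (B ⊗[A] S) (B ⊗[A] S') := IsScalarTower.of_algebraMap_eq' (by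
    ext b
    simp [RingHom.algebraMap_toAlgebra])
  refine ⟨h1, ?_⟩
  have := IsLocalization.tensorProduct_tensorProduct_right A B (Submonoid.powers (algebraMap A S f)) S' (by
    ext s
    simp [RingHom.algebraMap_toAlgebra])
  rw [Submonoid.map_powers] at this
  convert this using 2
  simp only [Algebra.TensorProduct.algebraMap_apply, Algebra.algebraMap_self, RingHom.id_apply,
    Algebra.TensorProduct.includeRight_apply]
  rw [Algebra.algebraMap_eq_smul_one, Algebra.algebraMap_eq_smul_one, TensorProduct.smul_tmul]

lemma FM_away {A : Type u} [CommRing A] (p : Ideal A) [p.IsPrime] (S : Type u) [CommRing S] [Algebra A S]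
    [Algebra.FiniteType A S] : ∃ f : A, f ∉ p ∧ ∀ (S' : Type u) [CommRing S'] [Algebra S S']
      [Algebra A S'] [IsScalarTower A S S'] [IsLocalization.Away (algebraMap A S f) S'],
      FM p S' := by
  obtain ⟨f, hf, h⟩ := generic_flat (D := A ⧸ p) ((A ⧸ p) ⊗[A] S)
  obtain ⟨f, rfl⟩ := Ideal.Quotient.mk_surjective f
  refine ⟨f, fun h => hf (Ideal.Quotient.eq_zero_iff_mem.2 h), ?_⟩
  intro S' _ _ _ _ _
  letI := bcAlg A S S' (A ⧸ p)
  obtain ⟨h1, h2⟩ := bcAlg_away A S S' (A ⧸ p) f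
  have := h ((A ⧸ p) ⊗[A] S')
  exact FM_of_flat S'

/-- Flatness over `B` up to `J`. -/
def FlatUpTo {A : Type u} [CommRing A] (S : Type u) [CommRing S] [Algebra A S] 
    (B : Type u) [CommRing B] [Algebra A B] (J : Ideal A) : Prop :=
  ∀ (𝔞 : Ideal B) (x : (B ⊗[A] S) ⊗[B] 𝔞), LinearMap.lTensor (B ⊗[A] S) 𝔞.subtype x = 0 →
    ∃ r ∈ J.map (algebraMap A (B ⊗[A] S)), r • x = x

lemma prime_step {A : Type u} [CommRing A] (S : Type u) [CommRing S] [Algebra A S] 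
    (B : Type u) [CommRing B] [Algebra A B] [IsNoetherianRing B] (p : Ideal A) (f : A)
    (S' : Type u) [CommRing S'] [Algebra S S']
      [Algebra A S'] [IsScalarTower A S S'] [IsLocalization.Away (algebraMap A S f) S']
    [IsNoetherianRing (B ⊗[A] S')]
    (h : FM p S') (hB : TZ (p.map (algebraMap A B)) (B ⊗[A] S'))
    (hf : FlatUpTo S B (p ⊔ Ideal.span {f})) : FlatUpTo S B p := by
  intro 𝔞 x hx
  letI := bcAlg A S S' B
  obtain ⟨h1, h2⟩ := bcAlg_away A S S' B f
  let T := B ⊗[A] S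
  let T' := B ⊗[A] S'
  let F : T := algebraMap B T (algebraMap A B f)
  have hF : F = algebraMap A T f := (IsScalarTower.algebraMap_apply A B T f).symm
  let L := AlgebraTensorModule.rTensor B 𝔞 (Algebra.linearMap T T')
  have hL : IsLocalizedModule (Submonoid.powers F) L := 
    IsLocalizedModule.rTensor _ (Submonoid.powers F) (Algebra.linearMap T T')
  have hx' : LinearMap.lTensor T' 𝔞.subtype (L x) = 0 := by
    have e : ∀ y : T ⊗[B] 𝔞, LinearMap.lTensor T' 𝔞.subtype (L y) =
      AlgebraTensorModule.rTensor B B (Algebra.linearMap T T') (LinearMap.lTensor T 𝔞.subtype y) := by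
      intro y
      induction y with
      | zero => simp
      | add y z hy hz => rw [map_add, map_add, map_add, map_add, hy, hz]
      | tmul t a => rfl
    rw [e]
    erw [hx]
    rw [map_zero]
  obtain ⟨r', hr', hrx⟩ := local_crit (p.map (algebraMap A B)) T' (FM_bc S' h) hB 𝔞 (L x) hx'
  rw [Ideal.map_map, ← IsScalarTower.algebraMap_eq] at hr'
  have hAT : IsScalarTower A T T' := by
    refine IsScalarTower.of_algebraMap_eq' ?_
    rw [IsScalarTower.algebraMap_eq A B T', IsScalarTower.algebraMap_eq B T T', 
      IsScalarTower.algebraMap_eq A B T, RingHom.comp_assoc]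
  have hr'' : r' ∈ (p.map (algebraMap A T)).map (algebraMap T T') := by
    rw [Ideal.map_map, ← IsScalarTower.algebraMap_eq A T T']
    exact hr'
  obtain ⟨⟨⟨r, hr⟩, ⟨_, k, rfl⟩⟩, hrk⟩ := (IsLocalization.mem_map_algebraMap_iff (Submonoid.powers F) T').1 hr''
  have h3 : L (F ^ k • x) = L (r • x) := by
    rw [map_smul, map_smul, ← hrx, ← algebraMap_smul T' (F ^ k), ← algebraMap_smul T' r, smul_smul,
      mul_comm]
    have : r' * algebraMap T T' (F ^ k) = algebraMap T T' r := hrk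
    rw [this, hrx]
  obtain ⟨⟨_, l, rfl⟩, hl⟩ := (IsLocalizedModule.eq_iff_exists (Submonoid.powers F) L).1 h3
  have hl : F ^ l • F ^ k • x = F ^ l • r • x := hl
  rw [smul_smul, smul_smul, ← pow_add] at hl
  have hr1 : F ^ l * r ∈ p.map (algebraMap A T) := Ideal.mul_mem_left _ _ hr
  obtain ⟨q, hq, hqx⟩ := hf 𝔞 x hx
  set N := l + k
  have hqN : ∀ n : ℕ, q ^ n • x = x := by
    intro n
    induction n with
    | zero => simp
    | succ n ih => rw [pow_succ, mul_smul, hqx, ih]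
  rw [Ideal.map_sup, Ideal.map_span, Set.image_singleton] at hq
  obtain ⟨j, hj, t, ht, rfl⟩ := Submodule.mem_sup.1 hq
  obtain ⟨t, rfl⟩ := Ideal.mem_span_singleton'.1 ht
  have h4 : (j + t * algebraMap A T f) ^ N - (t * algebraMap A T f) ^ N ∈ p.map (algebraMap A T) := by
    have := sub_dvd_pow_sub_pow (j + t * algebraMap A T f) (t * algebraMap A T f) N
    rw [add_sub_cancel_right] at this
    exact Ideal.mem_of_dvd _ this hj
  refine ⟨((j + t * algebraMap A T f) ^ N - (t * algebraMap A T f) ^ N) + t ^ N * (F ^ l * r),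
    add_mem h4 (Ideal.mul_mem_left _ _ hr1), ?_⟩
  rw [add_smul, sub_smul, hqN, mul_pow, mul_smul (t ^ N) (F ^ l * r), ← hl, ← hF, mul_smul]
  simp

lemma flat_of_flatUpTo {A : Type u} [CommRing A] (S : Type u) [CommRing S] [Algebra A S] 
    (B : Type u) [CommRing B] [Algebra A B] (h : FlatUpTo S B (⊥ : Ideal A)) :
    Module.Flat B (B ⊗[A] S) := by
  rw [Module.Flat.iff_lTensor_injective']
  intro 𝔞
  apply inj_zero
  intro x hx
  obtain ⟨r, hr, hrx⟩ := h 𝔞 x hx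
  rw [Ideal.map_bot, Ideal.mem_bot] at hr
  rw [← hrx, hr, zero_smul]

lemma flatUpTo_top {A : Type u} [CommRing A] (S : Type u) [CommRing S] [Algebra A S] 
    (B : Type u) [CommRing B] [Algebra A B] : FlatUpTo S B (⊤ : Ideal A) := by
  intro 𝔞 x _
  refine ⟨1, ?_, one_smul _ _⟩
  rw [Ideal.map_top]; trivial

lemma flatUpTo_mul {A : Type u} [CommRing A] (S : Type u) [CommRing S] [Algebra A S] 
    (B : Type u) [CommRing B] [Algebra A B] (J : Ideal A) (a b : A) (hab : a * b ∈ J)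
    (h1 : FlatUpTo S B (J ⊔ Ideal.span {a})) (h2 : FlatUpTo S B (J ⊔ Ideal.span {b})) :
    FlatUpTo S B J := by
  intro 𝔞 x hx
  obtain ⟨r1, hr1, e1⟩ := h1 𝔞 x hx
  obtain ⟨r2, hr2, e2⟩ := h2 𝔞 x hx
  refine ⟨r1 * r2, ?_, by rw [mul_smul, e2, e1]⟩
  have := Ideal.mul_mem_mul hr1 hr2
  rw [← Ideal.map_mul] at this
  refine Ideal.map_mono ?_ this
  rw [Ideal.sup_mul, Ideal.mul_sup, Ideal.mul_sup, Ideal.span_singleton_mul_span_singleton]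
  refine sup_le (sup_le Ideal.mul_le_left Ideal.mul_le_left) (sup_le Ideal.mul_le_right ?_)
  rw [Ideal.span_singleton_le_iff_mem]; exact hab

lemma flat_descent {A : Type u} [CommRing A] [IsNoetherianRing A] (S : Type u) [CommRing S] [Algebra A S] 
    [Algebra.FiniteType A S] (C : Type u) [CommRing C] [Algebra A C] [hC : Module.Flat C (C ⊗[A] S)] :
    ∃ B : Subalgebra A C, B.FG ∧ Module.Flat B (B ⊗[A] S) := by
  suffices ∀ J : Ideal A, ∃ B : Subalgebra A C, B.FG ∧ ∀ B' : Subalgebra A C, B ≤ B' → B'.FG →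
      FlatUpTo S B' J by
    obtain ⟨B, hB, h⟩ := this ⊥
    exact ⟨B, hB, flat_of_flatUpTo _ _ (h B le_rfl hB)⟩
  intro J
  refine IsNoetherian.induction (R := A) (M := A) (P := fun J : Ideal A => ∃ B : Subalgebra A C, B.FG ∧
    ∀ B' : Subalgebra A C, B ≤ B' → B'.FG → FlatUpTo S B' J) ?_ J
  intro (J : Ideal A) ih
  by_cases hJ : J.IsPrime
  · obtain ⟨f, hf, hFM⟩ := FM_away J S
    have hlt : J < J ⊔ Ideal.span {f} := by
      refine lt_of_le_of_ne le_sup_left fun h => hf ?_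
      rw [h]; exact Ideal.mem_sup_right (Ideal.mem_span_singleton_self f)
    obtain ⟨B1, hB1, h1⟩ := ih _ hlt
    let S' := Localization.Away (algebraMap A S f)
    have : Algebra.FiniteType S S' := IsLocalization.finiteType_of_monoid_fg (Submonoid.powers (algebraMap A S f)) S'
    have : Algebra.FiniteType A S' := Algebra.FiniteType.trans (S := S) inferInstance inferInstance
    have : IsNoetherianRing S' := Algebra.FiniteType.isNoetherianRing A S'
    have h2 : Function.Injective (LinearMap.lTensor S' (J • (⊤ : Submodule A C)).subtype) := by
      apply loc_inj (T := S) (algebraMap A S f)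
      rw [← TZ_iff]
      exact Module.Flat.lTensor_preserves_injective_linearMap _ (Submodule.subtype_injective _)
    obtain ⟨B2, hB2, h3⟩ := TZ_descent J S' (hFM S') C h2
    refine ⟨B1 ⊔ B2, hB1.sup hB2, ?_⟩
    intro B' hB' hfg
    have : Algebra.FiniteType A B' := (Subalgebra.fg_iff_finiteType _).1 hfg
    have : IsNoetherianRing B' := Algebra.FiniteType.isNoetherianRing A B'
    have : IsNoetherianRing (B' ⊗[A] S') := Algebra.FiniteType.isNoetherianRing B' _
    exact prime_step S B' J f S' (hFM S') (h3 B' (le_sup_right.trans hB'))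
      (h1 B' (le_sup_left.trans hB') hfg)
  · rcases Ideal.not_isPrime_iff.1 hJ with rfl | ⟨a, ha, b, hb, hab⟩
    · refine ⟨⊥, Subalgebra.fg_bot, ?_⟩
      intro B' _ _
      exact flatUpTo_top S B'
    · have hlt : ∀ f ∉ J, J < J ⊔ Ideal.span {f} := by
        intro f hf
        refine lt_of_le_of_ne le_sup_left fun h => hf ?_
        rw [h]; exact Ideal.mem_sup_right (Ideal.mem_span_singleton_self f)
      obtain ⟨B1, hB1, h1⟩ := ih _ (hlt a ha)
      obtain ⟨B2, hB2, h2⟩ := ih _ (hlt b hb)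
      refine ⟨B1 ⊔ B2, hB1.sup hB2, ?_⟩
      intro B' hB' hfg
      exact flatUpTo_mul S B' J a b hab (h1 B' (le_sup_left.trans hB') hfg) (h2 B' (le_sup_right.trans hB') hfg)
end
end IndFppf

namespace IndFppf
open TensorProduct
section

lemma descentZ (A S : Type u) [CommRing A] [CommRing S] [Algebra A S] [Module.Flat A S]
    [Algebra.FinitePresentation A S] :
    ∃ (A0 : Type u) (_ : CommRing A0) (_ : Algebra A0 A) (S0 : Type u) (_ : CommRing S0)
      (_ : Algebra A0 S0), Algebra.FinitePresentation ℤ A0 ∧ Module.Flat A0 S0 ∧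
      Algebra.FinitePresentation A0 S0 ∧ Nonempty (A ⊗[A0] S0 ≃ₐ[A] S) := by
  let P := Algebra.Presentation.ofFinitePresentation A S
  let A₀ := Algebra.adjoin ℤ P.coeffs
  have : P.HasCoeffs A₀ := ⟨by simp [A₀]⟩
  have hA₀ : Algebra.FiniteType ℤ A₀ := (Subalgebra.fg_iff_finiteType _).1
    ⟨P.finite_coeffs.toFinset, by simp [A₀]⟩
  have hN : IsNoetherianRing A₀ := Algebra.FiniteType.isNoetherianRing ℤ A₀
  let M := P.ModelOfHasCoeffs A₀
  have hM : Algebra.FinitePresentation A₀ M := inferInstance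
  have e := P.tensorModelOfHasCoeffsEquiv A₀
  have hF : Module.Flat A (A ⊗[A₀] M) := Module.Flat.of_linearEquiv (R := A) (M := S) (N := A ⊗[A₀] M) e.toLinearEquiv
  obtain ⟨B, hB, hBF⟩ := flat_descent (A := A₀) M A
  have hB1 : Algebra.FiniteType A₀ B := (Subalgebra.fg_iff_finiteType _).1 hB
  have hB2 : Algebra.FiniteType ℤ B := Algebra.FiniteType.trans (S := A₀) inferInstance inferInstance
  refine ⟨B, inferInstance, inferInstance, B ⊗[A₀] M, inferInstance, inferInstance,
    Algebra.FinitePresentation.of_finiteType.1 hB2, hBF, inferInstance, ⟨?_⟩⟩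
  exact (Algebra.TensorProduct.cancelBaseChange A₀ B A A M).trans e

lemma descent (R A S : Type u) [CommRing R] [CommRing A] [CommRing S] [Algebra R A] [Algebra A S]
    [Module.Flat A S] [Algebra.FinitePresentation A S] :
    ∃ (A0 : Type u) (_ : CommRing A0) (_ : Algebra R A0) (_ : Algebra A0 A) (_ : IsScalarTower R A0 A)
      (S0 : Type u) (_ : CommRing S0)
      (_ : Algebra A0 S0), Algebra.FinitePresentation R A0 ∧ Module.Flat A0 S0 ∧
      Algebra.FinitePresentation A0 S0 ∧ Nonempty (A ⊗[A0] S0 ≃ₐ[A] S) := by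
  obtain ⟨A0, _, _, S0, _, _, h1, h2, h3, ⟨e⟩⟩ := descentZ A S
  let A1 := R ⊗[ℤ] A0
  let φ : A1 →ₐ[R] A := Algebra.TensorProduct.lift (Algebra.ofId R A)
    (IsScalarTower.toAlgHom ℤ A0 A) (fun _ _ => Commute.all _ _)
  let _ : Algebra A1 A := φ.toRingHom.toAlgebra
  let _ : Algebra A0 A1 := Algebra.TensorProduct.rightAlgebra
  have t1 : IsScalarTower R A1 A := IsScalarTower.of_algebraMap_eq (fun r => (φ.commutes r).symm)
  have t2 : IsScalarTower A0 A1 A := IsScalarTower.of_algebraMap_eq (fun r => by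
    change _ = φ (1 ⊗ₜ r)
    erw [Algebra.TensorProduct.lift_tmul]
    simp)
  refine ⟨A1, inferInstance, inferInstance, inferInstance, inferInstance, A1 ⊗[A0] S0, inferInstance,
    inferInstance, inferInstance, inferInstance, inferInstance, ⟨?_⟩⟩
  exact (Algebra.TensorProduct.cancelBaseChange A0 A1 A A S0).trans e

/-- Generators and relations of a finitely presented algebra. -/
lemma fp_data (A P : Type u) [CommRing A] [CommRing P] [Algebra A P] [Algebra.FinitePresentation A P] :
    ∃ (n : ℕ) (x : Fin n → P) (r : Finset (MvPolynomial (Fin n) A)),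
      (∀ (C : Type u) [CommRing C] [Algebra A C] (φ ψ : P →ₐ[A] C), (∀ i, φ (x i) = ψ (x i)) → φ = ψ) ∧
      (∀ f ∈ r, MvPolynomial.aeval x f = 0) ∧
      (∀ (C : Type u) [CommRing C] [Algebra A C] (c : Fin n → C), (∀ f ∈ r, MvPolynomial.aeval c f = 0) →
        ∃ φ : P →ₐ[A] C, ∀ i, φ (x i) = c i) := by
  obtain ⟨n, f, hf, r, hr⟩ := Algebra.FinitePresentation.out (R := A) (A := P)
  refine ⟨n, fun i => f (MvPolynomial.X i), r, ?_, ?_, ?_⟩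
  · intro C _ _ φ ψ h
    have : φ.comp f = ψ.comp f := MvPolynomial.algHom_ext h
    ext y
    obtain ⟨y, rfl⟩ := hf y
    exact DFunLike.congr_fun this y
  · intro g hg
    have : g ∈ RingHom.ker f.toRingHom := by
      rw [← hr]; exact Ideal.subset_span hg
    have e : MvPolynomial.aeval (fun i => f (MvPolynomial.X i)) = f := MvPolynomial.algHom_ext (by simp)
    rw [e]; exact this
  · intro C _ _ c hc
    let φ : P →ₐ[A] C := AlgHom.liftOfSurjective f hf (MvPolynomial.aeval c) (by
      change RingHom.ker f.toRingHom ≤ _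
      rw [← hr, Ideal.span_le]
      intro g hg
      exact hc g hg)
    refine ⟨φ, fun i => ?_⟩
    change φ (f _) = _
    simp [φ]

/-- kernel elements die in a finitely generated quotient -/
lemma ker_fg {A Q B S : Type u} [CommRing A] [CommRing Q] [CommRing B] [CommRing S]
    [Algebra A Q] [Algebra A B] [Algebra A S] [Module.Flat A S] (β : Q →ₐ[A] B) (w : Q ⊗[A] S)
    (hw : Algebra.TensorProduct.map β (AlgHom.id A S) w = 0) :
    ∃ K : Ideal Q, K.FG ∧ K ≤ RingHom.ker β ∧
      Algebra.TensorProduct.map (Ideal.Quotient.mkₐ A K) (AlgHom.id A S) w = 0 := by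
  let N : Submodule A Q := LinearMap.ker β.toLinearMap
  have hex : Function.Exact (LinearMap.rTensor S N.subtype) (LinearMap.rTensor S β.toLinearMap) :=
    Module.Flat.rTensor_exact S (LinearMap.exact_subtype_ker_map β.toLinearMap)
  obtain ⟨v, rfl⟩ := (hex w).1 hw
  clear hw
  induction v with
  | zero => exact ⟨⊥, Submodule.fg_bot, bot_le, by simp⟩
  | tmul x y =>
    refine ⟨Ideal.span {x.1}, ⟨{x.1}, by simp⟩, ?_, ?_⟩
    · rw [Ideal.span_singleton_le_iff_mem]; exact x.2
    · simp only [LinearMap.rTensor_tmul, Submodule.subtype_apply, Algebra.TensorProduct.map_tmul]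
      have : Ideal.Quotient.mkₐ A (Ideal.span {x.1}) x.1 = 0 :=
        Ideal.Quotient.eq_zero_iff_mem.2 (Ideal.mem_span_singleton_self _)
      rw [this, zero_tmul]
  | add x y hx hy =>
    obtain ⟨K, h1, h2, h3⟩ := hx
    obtain ⟨K', h1', h2', h3'⟩ := hy
    refine ⟨K ⊔ K', Submodule.FG.sup h1 h1', sup_le h2 h2', ?_⟩
    have key : ∀ (K K' : Ideal Q) (hK : K ≤ K') (z : Q ⊗[A] S), 
        Algebra.TensorProduct.map (Ideal.Quotient.mkₐ A K) (AlgHom.id A S) z = 0 →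
        Algebra.TensorProduct.map (Ideal.Quotient.mkₐ A K') (AlgHom.id A S) z = 0 := by
      intro K K' hK z hz
      have : (Ideal.Quotient.mkₐ A K') = (Ideal.Quotient.factorₐ A hK).comp (Ideal.Quotient.mkₐ A K) := by
        ext; rfl
      rw [this, ← AlgHom.comp_id (AlgHom.id A S), Algebra.TensorProduct.map_comp, AlgHom.comp_apply,
        hz, map_zero]
    rw [map_add, map_add, key _ _ le_sup_left _ h3, key _ _ le_sup_right _ h3', add_zero]

lemma ker_fg_finset {A Q B S : Type u} [CommRing A] [CommRing Q] [CommRing B] [CommRing S]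
    [Algebra A Q] [Algebra A B] [Algebra A S] [Module.Flat A S] (β : Q →ₐ[A] B) {ι : Type*} (r : Finset ι)
    (w : ι → Q ⊗[A] S)
    (hw : ∀ i ∈ r, Algebra.TensorProduct.map β (AlgHom.id A S) (w i) = 0) :
    ∃ K : Ideal Q, K.FG ∧ K ≤ RingHom.ker β ∧
      ∀ i ∈ r, Algebra.TensorProduct.map (Ideal.Quotient.mkₐ A K) (AlgHom.id A S) (w i) = 0 := by
  classical
  have key : ∀ (K K' : Ideal Q) (hK : K ≤ K') (z : Q ⊗[A] S), 
      Algebra.TensorProduct.map (Ideal.Quotient.mkₐ A K) (AlgHom.id A S) z = 0 →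
      Algebra.TensorProduct.map (Ideal.Quotient.mkₐ A K') (AlgHom.id A S) z = 0 := by
    intro K K' hK z hz
    have : (Ideal.Quotient.mkₐ A K') = (Ideal.Quotient.factorₐ A hK).comp (Ideal.Quotient.mkₐ A K) := by
      ext; rfl
    rw [this, ← AlgHom.comp_id (AlgHom.id A S), Algebra.TensorProduct.map_comp, AlgHom.comp_apply,
      hz, map_zero]
  induction r using Finset.induction with
  | empty => exact ⟨⊥, Submodule.fg_bot, bot_le, by simp⟩
  | insert a s ha ih =>
    obtain ⟨K, h1, h2, h3⟩ := ih (fun i hi => hw i (Finset.mem_insert_of_mem hi))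
    obtain ⟨K', h1', h2', h3'⟩ := ker_fg β (w a) (hw a (Finset.mem_insert_self _ _))
    refine ⟨K ⊔ K', Submodule.FG.sup h1 h1', sup_le h2 h2', ?_⟩
    intro i hi
    rcases Finset.mem_insert.1 hi with rfl | hi
    · exact key _ _ le_sup_right _ h3'
    · exact key _ _ le_sup_left _ (h3 i hi)

/-- finitely many elements of `B ⊗ S` lift to `Q ⊗ S` with `Q` a polynomial ring -/
lemma lift_elems {A B S : Type u} [CommRing A] [CommRing B] [CommRing S]
    [Algebra A B] [Algebra A S] {n : ℕ} (z : Fin n → B ⊗[A] S) :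
    ∃ (Q : Type u) (_ : CommRing Q) (_ : Algebra A Q) (β : Q →ₐ[A] B), Algebra.FinitePresentation A Q ∧
      ∀ i, z i ∈ (Algebra.TensorProduct.map β (AlgHom.id A S)).range := by
  have h1 : ∀ i, ∃ X : Subalgebra A B, X.FG ∧ z i ∈ (Algebra.TensorProduct.map X.val (AlgHom.id A S)).range := by
    intro i
    obtain ⟨X, hX, h⟩ := TensorProduct.Algebra.exists_of_fg (z i)
    exact ⟨X, hX, h⟩
  choose X hX hz using h1
  let Y := Finset.univ.sup X
  have hY : Y.FG := Finset.sup_induction (Subalgebra.fg_bot) (fun a ha b hb => ha.sup hb) (fun i _ => hX i)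
  have hY' : Algebra.FiniteType A Y := (Subalgebra.fg_iff_finiteType _).1 hY
  obtain ⟨m, f, hf⟩ := Algebra.FiniteType.iff_quotient_mvPolynomial''.1 hY'
  refine ⟨MvPolynomial (Fin m) A, inferInstance, inferInstance, Y.val.comp f, inferInstance, ?_⟩
  intro i
  obtain ⟨w, hw⟩ := hz i
  have hXY : X i ≤ Y := Finset.le_sup (Finset.mem_univ i)
  obtain ⟨v, hv⟩ := (Algebra.TensorProduct.map_surjective f (AlgHom.id A S) hf Function.surjective_id) 
    (Algebra.TensorProduct.map (Subalgebra.inclusion hXY) (AlgHom.id A S) w)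
  refine ⟨v, ?_⟩
  have e1 : Algebra.TensorProduct.map (Y.val.comp f) (AlgHom.id A S) = 
    (Algebra.TensorProduct.map Y.val (AlgHom.id A S)).comp (Algebra.TensorProduct.map f (AlgHom.id A S)) := by
    rw [← Algebra.TensorProduct.map_comp]; rfl
  have e2 : Algebra.TensorProduct.map (X i).val (AlgHom.id A S) = 
    (Algebra.TensorProduct.map Y.val (AlgHom.id A S)).comp
      (Algebra.TensorProduct.map (Subalgebra.inclusion hXY) (AlgHom.id A S)) := by
    rw [← Algebra.TensorProduct.map_comp]; rfl
  rw [← hw]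
  change Algebra.TensorProduct.map (Y.val.comp f) (AlgHom.id A S) v = Algebra.TensorProduct.map (X i).val (AlgHom.id A S) w
  rw [e1, e2, AlgHom.comp_apply, hv]; rfl

lemma factor_tensor {A B S P : Type u} [CommRing A] [CommRing B] [CommRing S] [CommRing P]
    [Algebra A B] [Algebra A S] [Module.Flat A S] [Algebra A P] [Algebra.FinitePresentation A P]
    (ψ : P →ₐ[A] B ⊗[A] S) :
    ∃ (Q : Type u) (_ : CommRing Q) (_ : Algebra A Q) (β : Q →ₐ[A] B) (α : P →ₐ[A] Q ⊗[A] S),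
      Algebra.FinitePresentation A Q ∧ (Algebra.TensorProduct.map β (AlgHom.id A S)).comp α = ψ := by
  obtain ⟨n, x, r, hext, hrel, hlift⟩ := fp_data A P
  obtain ⟨Q, _, _, β, hQ, hz⟩ := lift_elems (fun i => ψ (x i))
  choose Z hZ using hz
  obtain ⟨K, h1, h2, h3⟩ := ker_fg_finset β r (fun f => MvPolynomial.aeval Z f) (by
    intro f hf
    rw [← AlgHom.comp_apply, MvPolynomial.comp_aeval]
    have : (fun i => Algebra.TensorProduct.map β (AlgHom.id A S) (Z i)) = fun i => ψ (x i) := funext hZ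
    rw [this]
    rw [← MvPolynomial.comp_aeval, AlgHom.comp_apply, hrel f hf, map_zero])
  have hQK : Algebra.FinitePresentation A (Q ⧸ K) := Algebra.FinitePresentation.quotient h1
  let γ := Algebra.TensorProduct.map (Ideal.Quotient.mkₐ A K) (AlgHom.id A S)
  obtain ⟨α, hα⟩ := hlift ((Q ⧸ K) ⊗[A] S) (fun i => γ (Z i)) (by
    intro f hf
    rw [← MvPolynomial.comp_aeval, AlgHom.comp_apply]
    exact h3 f hf)
  refine ⟨Q ⧸ K, inferInstance, inferInstance, Ideal.Quotient.liftₐ K β (fun a ha => h2 ha), α, hQK, ?_⟩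
  apply hext
  intro i
  rw [AlgHom.comp_apply, hα]
  rw [← AlgHom.comp_apply, ← Algebra.TensorProduct.map_comp]
  have : (Ideal.Quotient.liftₐ K β (fun a ha => h2 ha)).comp (Ideal.Quotient.mkₐ A K) = β := by
    ext; rfl
  rw [this]
  exact hZ i
end
end IndFppf

namespace IndFppf
open TensorProduct
section

/-- Every map from a finitely presented algebra factors through a flat finitely presented one. -/
def IndFlat (R B : Type u) [CommRing R] [CommRing B] [Algebra R B] : Prop :=
  ∀ (P : Type u) [CommRing P] [Algebra R P] [Algebra.FinitePresentation R P] (ψ : P →ₐ[R] B),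
    ∃ (Q : Type u) (_ : CommRing Q) (_ : Algebra R Q) (α : P →ₐ[R] Q) (β : Q →ₐ[R] B),
      Algebra.FinitePresentation R Q ∧ Module.Flat R Q ∧ β.comp α = ψ

lemma indFlat_self (R : Type u) [CommRing R] : IndFlat R R := by
  intro P _ _ _ ψ
  exact ⟨R, inferInstance, inferInstance, ψ, AlgHom.id R R, inferInstance, inferInstance, by ext; rfl⟩

lemma indFlat_trans {R B S : Type u} [CommRing R] [CommRing B] [CommRing S] [Algebra R B] [Algebra B S]
    [Algebra R S] [IsScalarTower R B S] (h : IndFlat R B) [Module.Flat B S] [Algebra.FinitePresentation B S] :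
    IndFlat R S := by
  intro P _ _ _ ψ
  obtain ⟨A1, _, _, _, _, S1, _, _, h1, h2, h3, ⟨e⟩⟩ := descent R B S
  let ψ1 : A1 ⊗[R] P →ₐ[A1] B ⊗[A1] S1 := Algebra.TensorProduct.lift (Algebra.ofId A1 _)
    ((e.symm.toAlgHom.restrictScalars R).comp ψ) (fun _ _ => Commute.all _ _)
  obtain ⟨Q, _, _, β, α, hQ, hα⟩ := factor_tensor ψ1
  let _ : Algebra R Q := ((algebraMap A1 Q).comp (algebraMap R A1)).toAlgebra
  have : IsScalarTower R A1 Q := IsScalarTower.of_algebraMap_eq (fun _ => rfl)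
  have : Algebra.FinitePresentation R Q := Algebra.FinitePresentation.trans R A1 Q
  obtain ⟨Q3, _, _, α3, β3, hQ3, hQ3', h3β⟩ := h Q (β.restrictScalars R)
  let _ : Algebra A1 Q3 := (α3.toRingHom.comp (algebraMap A1 Q)).toAlgebra
  have : IsScalarTower R A1 Q3 := IsScalarTower.of_algebraMap_eq (fun r => by
    change _ = α3 (algebraMap A1 Q _)
    rw [← IsScalarTower.algebraMap_apply, AlgHom.commutes])
  let α3' : Q →ₐ[A1] Q3 := { α3 with commutes' := fun a => rfl }
  have hc : ∀ a, β3 (algebraMap A1 Q3 a) = algebraMap A1 B a := by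
    intro a
    have : β3 (α3 (algebraMap A1 Q a)) = β (algebraMap A1 Q a) := DFunLike.congr_fun h3β _
    rw [AlgHom.commutes] at this
    exact this
  let β3' : Q3 →ₐ[A1] B := { β3 with commutes' := hc }
  have hβ' : β3'.comp α3' = β := AlgHom.ext fun q => DFunLike.congr_fun h3β q
  have hFP : Algebra.FinitePresentation R (Q3 ⊗[A1] S1) := Algebra.FinitePresentation.trans R Q3 _
  have hFl : Module.Flat R (Q3 ⊗[A1] S1) := Module.Flat.trans R Q3 _
  refine ⟨Q3 ⊗[A1] S1, inferInstance, inferInstance, 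
    ((((Algebra.TensorProduct.map α3' (AlgHom.id A1 S1)).comp α).restrictScalars R).comp 
      Algebra.TensorProduct.includeRight), 
    (e.toAlgHom.restrictScalars R).comp ((Algebra.TensorProduct.map β3' (AlgHom.id A1 S1)).restrictScalars R), 
    hFP, hFl, ?_⟩
  ext p
  have e1 : (Algebra.TensorProduct.map β3' (AlgHom.id A1 S1)) 
      ((Algebra.TensorProduct.map α3' (AlgHom.id A1 S1)) (α (1 ⊗ₜ p))) = ψ1 (1 ⊗ₜ p) := by
    rw [← AlgHom.comp_apply, ← Algebra.TensorProduct.map_comp, hβ', ← hα]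
    rfl
  change e ((Algebra.TensorProduct.map β3' (AlgHom.id A1 S1)) 
      ((Algebra.TensorProduct.map α3' (AlgHom.id A1 S1)) (α (1 ⊗ₜ p)))) = ψ p
  rw [e1]
  simp only [ψ1, Algebra.TensorProduct.lift_tmul, map_one, one_mul]
  exact e.apply_symm_apply _

lemma indFlat_flat {R B : Type u} [CommRing R] [CommRing B] [Algebra R B] (h : IndFlat R B) :
    Module.Flat R B := by
  rw [Module.Flat.iff_forall_isTrivialRelation]
  intro l f x hx
  let p : MvPolynomial (Fin l) R := ∑ i, MvPolynomial.C (f i) * MvPolynomial.X i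
  let P := MvPolynomial (Fin l) R ⧸ Ideal.span {p}
  have hP : Algebra.FinitePresentation R P := Algebra.FinitePresentation.quotient ⟨{p}, by simp⟩
  have hp : MvPolynomial.aeval x p = 0 := by
    simp only [p, map_sum, map_mul, MvPolynomial.aeval_X, MvPolynomial.aeval_C, ← Algebra.smul_def]
    exact hx
  let ψ : P →ₐ[R] B := Ideal.Quotient.liftₐ _ (MvPolynomial.aeval x) (by
    intro a ha
    obtain ⟨b, rfl⟩ := Ideal.mem_span_singleton'.1 ha
    rw [map_mul, hp, mul_zero])
  obtain ⟨Q, _, _, α, β, hQ, hQ', hαβ⟩ := h P ψ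
  let y : Fin l → Q := fun i => α (Ideal.Quotient.mk _ (MvPolynomial.X i))
  have hy : ∑ i, f i • y i = 0 := by
    have : α (Ideal.Quotient.mk _ p) = 0 := by
      rw [Ideal.Quotient.eq_zero_iff_mem.2 (Ideal.mem_span_singleton_self p), map_zero]
    rw [← this]
    simp only [y, p, map_sum, map_mul]
    refine Finset.sum_congr rfl fun i _ => ?_
    rw [Algebra.smul_def, ← α.commutes]
    rfl
  have hxy : ∀ i, x i = β (y i) := by
    intro i
    have : β (α (Ideal.Quotient.mk _ (MvPolynomial.X i))) = ψ (Ideal.Quotient.mk _ (MvPolynomial.X i)) := 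
      DFunLike.congr_fun hαβ _
    rw [this]
    change _ = MvPolynomial.aeval x _
    simp
  obtain ⟨k, a, z, h1, h2⟩ := Module.Flat.iff_forall_isTrivialRelation.1 hQ' hy
  refine ⟨k, a, fun i => β (z i), ?_, h2⟩
  intro i
  rw [hxy, h1, map_sum]
  simp

/-- directed system of algebras -/
structure Sys (A : Type u) [CommRing A] where
  ι : Type u
  [preorder : Preorder ι]
  directed : IsDirected ι (· ≤ ·)
  nonempty : Nonempty ι
  G : ι → Type u
  [ring : ∀ i, CommRing (G i)]
  [alg : ∀ i, Algebra A (G i)]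
  t : ∀ {i j : ι}, i ≤ j → (G i →ₐ[A] G j)
  t_id : ∀ i x, t (le_refl i) x = x
  t_comp : ∀ {i j k : ι} (h : i ≤ j) (h' : j ≤ k) x, t h' (t h x) = t (h.trans h') x

attribute [instance] Sys.preorder Sys.ring Sys.alg

/-- colimit of a directed system -/
structure IsColim {A : Type u} [CommRing A] (D : Sys A) (L : Type u) [CommRing L] [Algebra A L] where
  g : ∀ i, D.G i →ₐ[A] L
  g_comp : ∀ {i j : D.ι} (h : i ≤ j) x, g j (D.t h x) = g i x
  surj : ∀ y : L, ∃ i x, g i x = y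
  eq : ∀ i (x y : D.G i), g i x = g i y → ∃ j, ∃ h : i ≤ j, D.t h x = D.t h y

lemma exists_colim {A : Type u} [CommRing A] (D : Sys A) : ∃ (L : Type u) (_ : CommRing L) (_ : Algebra A L),
    Nonempty (IsColim D L) := by
  have := D.directed
  have : IsDirectedOrder D.ι := D.directed
  have := D.nonempty
  let f : ∀ i j : D.ι, i ≤ j → (D.G i →+* D.G j) := fun i j h => (D.t h : D.G i →+* D.G j)
  have hD : DirectedSystem D.G (fun i j h => f i j h) := 
    ⟨fun i x => D.t_id i x, fun k j i h h' x => D.t_comp h h' x⟩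
  let L := DirectLimit D.G f
  let g : ∀ i, D.G i →+* L := fun i =>
    { toFun := fun x => ⟦⟨i, x⟩⟧
      map_one' := (DirectLimit.one_def i).symm
      map_zero' := (DirectLimit.zero_def i).symm
      map_mul' := fun x y => (DirectLimit.mul_def i x y).symm
      map_add' := fun x y => (DirectLimit.add_def i x y).symm }
  have hg : ∀ {i j : D.ι} (h : i ≤ j) x, g j (D.t h x) = g i x := by
    intro i j h x
    exact (DirectLimit.mk_apply (f := f) i j x h)
  let i0 : D.ι := Classical.arbitrary _
  let _ : Algebra A L := ((g i0).comp (algebraMap A (D.G i0))).toAlgebra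
  refine ⟨L, inferInstance, inferInstance, ⟨⟨fun i => { g i with commutes' := ?_ }, ?_, ?_, ?_⟩⟩⟩
  · intro a
    obtain ⟨j, h1, h2⟩ := D.directed.directed i i0
    change g i (algebraMap A _ a) = g i0 (algebraMap A _ a)
    rw [← hg h1, ← hg h2, AlgHom.commutes, AlgHom.commutes]
  · intro i j h x; exact hg h x
  · intro y
    obtain ⟨i, x, rfl⟩ := DirectLimit.exists_eq_mk _ y
    exact ⟨i, x, rfl⟩
  · intro i x y h
    obtain ⟨j, h1, h2, h3⟩ := Quotient.exact h
    exact ⟨j, h1, h3⟩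

variable {A : Type u} [CommRing A] {D : Sys A} {L : Type u} [CommRing L] [Algebra A L]

lemma Sys.bound (D : Sys A) {α : Type*} (r : Finset α) (f : α → D.ι) : ∃ j, ∀ a ∈ r, f a ≤ j := by
  classical
  have := D.directed
  have := D.nonempty
  have : IsDirectedOrder D.ι := D.directed
  obtain ⟨j, hj⟩ := Finset.exists_le (r.image f)
  exact ⟨j, fun a ha => hj _ (Finset.mem_image_of_mem f ha)⟩

lemma IsColim.fp_lift (c : IsColim D L) (P : Type u) [CommRing P] [Algebra A P] [Algebra.FinitePresentation A P]
    (ψ : P →ₐ[A] L) : ∃ i, ∃ α : P →ₐ[A] D.G i, (c.g i).comp α = ψ := by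
  obtain ⟨n, x, r, hext, hrel, hlift⟩ := fp_data A P
  have h1 : ∀ k, ∃ i z, c.g i z = ψ (x k) := fun k => c.surj _
  choose i z hz using h1
  obtain ⟨i0, hi0⟩ := D.bound Finset.univ i
  let w : Fin n → D.G i0 := fun k => D.t (hi0 k (Finset.mem_univ k)) (z k)
  have hw : ∀ k, c.g i0 (w k) = ψ (x k) := fun k => by rw [c.g_comp, hz]
  have h2 : ∀ f : MvPolynomial (Fin n) A, ∃ j, ∃ h : i0 ≤ j, f ∈ r → D.t h (MvPolynomial.aeval w f) = 0 := by
    intro f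
    by_cases hf : f ∈ r
    · obtain ⟨j, h, e⟩ := c.eq i0 (MvPolynomial.aeval w f) 0 (by
        rw [map_zero, ← AlgHom.comp_apply, MvPolynomial.comp_aeval]
        simp only [hw]
        rw [← MvPolynomial.comp_aeval, AlgHom.comp_apply, hrel f hf, map_zero])
      exact ⟨j, h, fun _ => by rw [e, map_zero]⟩
    · exact ⟨i0, le_rfl, fun h => (hf h).elim⟩
  choose j hj hj' using h2
  obtain ⟨j1, hj1⟩ := D.bound r j
  obtain ⟨j0, h3, h4⟩ := D.directed.directed i0 j1
  obtain ⟨α, hα⟩ := hlift (D.G j0) (fun k => D.t h3 (w k)) (by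
    intro f hf
    rw [← MvPolynomial.comp_aeval, AlgHom.comp_apply, ← D.t_comp (hj f) ((hj1 f hf).trans h4), hj' f hf, map_zero])
  refine ⟨j0, α, hext _ _ _ fun k => ?_⟩
  rw [AlgHom.comp_apply, hα, c.g_comp, hw]

lemma IsColim.ideal_mem (c : IsColim D L) (i : D.ι) (J : Ideal (D.G i)) :
    ∀ y ∈ J.map (c.g i), ∃ j, ∃ hij : i ≤ j, ∃ z ∈ J.map (D.t hij), c.g j z = y := by
  intro y hy
  refine Submodule.span_induction ?_ ?_ ?_ ?_ hy
  · rintro _ ⟨x, hx, rfl⟩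
    exact ⟨i, le_rfl, x, by
      have := Ideal.mem_map_of_mem (D.t (le_refl i)) hx
      rwa [D.t_id] at this, rfl⟩
  · exact ⟨i, le_rfl, 0, zero_mem _, map_zero _⟩
  · rintro x y _ _ ⟨j, hj, z, hz, rfl⟩ ⟨j', hj', z', hz', rfl⟩
    obtain ⟨k, hk, hk'⟩ := D.directed.directed j j'
    refine ⟨k, hj.trans hk, D.t hk z + D.t hk' z', add_mem ?_ ?_, by rw [map_add, c.g_comp, c.g_comp]⟩
    · have := Ideal.mem_map_of_mem (D.t hk) hz
      rw [Ideal.map_mapₐ] at this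
      convert this using 2
      ext x; exact (D.t_comp _ _ x).symm
    · have := Ideal.mem_map_of_mem (D.t hk') hz'
      rw [Ideal.map_mapₐ] at this
      convert this using 2
      ext x; exact (D.t_comp _ _ x).symm
  · rintro a y _ ⟨j, hj, z, hz, rfl⟩
    obtain ⟨j', a, rfl⟩ := c.surj a
    obtain ⟨k, hk, hk'⟩ := D.directed.directed j j'
    refine ⟨k, hj.trans hk, D.t hk' a * D.t hk z, Ideal.mul_mem_left _ _ ?_, by
      rw [map_mul, c.g_comp, c.g_comp, smul_eq_mul]⟩
    have := Ideal.mem_map_of_mem (D.t hk) hz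
    rw [Ideal.map_mapₐ] at this
    convert this using 2
    ext x; exact (D.t_comp _ _ x).symm

lemma IsColim.ideal_top (c : IsColim D L) (i : D.ι) (J : Ideal (D.G i)) 
    (h : J.map (c.g i) = ⊤) : ∃ j, ∃ hij : i ≤ j, J.map (D.t hij) = ⊤ := by
  obtain ⟨j, hj, z, hz, e⟩ := c.ideal_mem i J 1 (by rw [h]; trivial)
  obtain ⟨k, hk, e'⟩ := c.eq j z 1 (by rw [e, map_one])
  refine ⟨k, hj.trans hk, ?_⟩
  rw [Ideal.eq_top_iff_one, ← map_one (D.t hk), ← e']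
  have := Ideal.mem_map_of_mem (D.t hk) hz
  rw [Ideal.map_mapₐ] at this
  convert this using 2
  ext x; exact (D.t_comp _ _ x).symm

lemma IsColim.indFlat (c : IsColim D L) (h : ∀ i, IndFlat A (D.G i)) : IndFlat A L := by
  intro P _ _ _ ψ
  obtain ⟨i, α, rfl⟩ := c.fp_lift P ψ
  obtain ⟨Q, _, _, α', β, h1, h2, rfl⟩ := h i P α
  exact ⟨Q, inferInstance, inferInstance, α', (c.g i).comp β, h1, h2, rfl⟩
end
end IndFppf

namespace IndFppf
open TensorProduct
section
variable {R B : Type u} [CommRing R] [CommRing B] [Algebra R B]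

/-- inclusion of finite sets of variables -/
def incl {V : Type u} {F F' : Finset V} (h : F ⊆ F') : F → F' := fun v => ⟨v.1, h v.2⟩

/-- evaluation of variables -/
noncomputable def evF (R : Type u) {B : Type u} [CommRing R] [CommRing B] [Algebra R B] (F : Finset (B × ℕ)) : MvPolynomial F R →ₐ[R] B :=
  MvPolynomial.aeval (fun v : F => v.1.1)

lemma evF_rename {F F' : Finset (B × ℕ)} (h : F ⊆ F') (p : MvPolynomial F R) :
    evF R F' (MvPolynomial.rename (incl h) p) = evF R F p := by
  simp only [evF, MvPolynomial.aeval_rename]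
  rfl

/-- Indices for the canonical system -/
structure Idx (R B : Type u) [CommRing R] [CommRing B] [Algebra R B] where
  F : Finset (B × ℕ)
  J : Ideal (MvPolynomial F R)
  fg : J.FG
  le : ∀ p ∈ J, evF R F p = 0
  flat : Module.Flat R (MvPolynomial F R ⧸ J)

instance : Preorder (Idx R B) where
  le X Y := ∃ h : X.F ⊆ Y.F, ∀ p ∈ X.J, MvPolynomial.rename (incl h) p ∈ Y.J
  le_refl X := ⟨subset_rfl, fun p hp => by
    have : (incl (subset_rfl : X.F ⊆ X.F)) = id := rfl
    rw [this, MvPolynomial.rename_id]; exact hp⟩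
  le_trans X Y Z := by
    rintro ⟨h, h1⟩ ⟨h', h2⟩
    refine ⟨h.trans h', fun p hp => ?_⟩
    have := h2 _ (h1 p hp)
    rw [MvPolynomial.rename_rename] at this
    exact this

lemma idx_refine (hB : IndFlat R B) (F0 : Finset (B × ℕ)) (J0 : Ideal (MvPolynomial F0 R)) (hfg : J0.FG)
    (hle : ∀ p ∈ J0, evF R F0 p = 0) :
    ∃ X : Idx R B, ∃ h : F0 ⊆ X.F, ∀ p ∈ J0, MvPolynomial.rename (incl h) p ∈ X.J := by
  classical
  have hP : Algebra.FinitePresentation R (MvPolynomial F0 R ⧸ J0) := Algebra.FinitePresentation.quotient hfg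
  obtain ⟨Q, _, _, α, β, hQ, hQ', hαβ⟩ := hB (MvPolynomial F0 R ⧸ J0) (Ideal.Quotient.liftₐ J0 (evF R F0) hle)
  obtain ⟨n, f, hf, -⟩ := Algebra.FinitePresentation.out (R := R) (A := Q)
  let N := F0.sup (fun v => v.2) + 1
  have hN : ∀ v ∈ F0, v.2 < N := fun v hv => Nat.lt_succ_of_le (Finset.le_sup (f := fun v : B × ℕ => v.2) hv)
  let q : ℕ → Q := fun k => if h : k < n then f (MvPolynomial.X ⟨k, h⟩) else 0
  let F : Finset (B × ℕ) := F0 ∪ (Finset.range n).image (fun k => (β (q k), N + k))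
  have hF : F0 ⊆ F := Finset.subset_union_left
  let y : F → Q := fun v => if h : v.1 ∈ F0 then α (Ideal.Quotient.mk _ (MvPolynomial.X ⟨v.1, h⟩)) else q (v.1.2 - N)
  have hαβ' : ∀ p, β (α (Ideal.Quotient.mk _ p)) = evF R F0 p := fun p => DFunLike.congr_fun hαβ _
  have hy : ∀ v, β (y v) = v.1.1 := by
    intro v
    by_cases h : v.1 ∈ F0
    · simp only [y, h, dif_pos]
      rw [hαβ']
      simp [evF]
    · simp only [y, h, dif_neg, not_false_iff]
      rcases Finset.mem_union.1 v.2 with h' | h'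
      · exact (h h').elim
      · obtain ⟨k, hk, e⟩ := Finset.mem_image.1 h'
        rw [← e]
        simp
  let Y : MvPolynomial F R →ₐ[R] Q := MvPolynomial.aeval y
  have hYsurj : Function.Surjective Y := by
    have h1 : f.range ≤ Y.range := by
      have : f = MvPolynomial.aeval (fun i => f (MvPolynomial.X i)) := MvPolynomial.algHom_ext (by simp)
      rw [this, ← Algebra.adjoin_range_eq_range_aeval]
      apply Algebra.adjoin_le
      rintro _ ⟨i, rfl⟩
      have hm : (β (q i), N + (i : ℕ)) ∈ F := Finset.mem_union_right _ (Finset.mem_image.2 ⟨i, by simp, rfl⟩)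
      refine ⟨MvPolynomial.X ⟨_, hm⟩, ?_⟩
      change Y _ = _
      have hn : (β (q i), N + (i : ℕ)) ∉ F0 := fun h => by
        have := hN _ h
        simp at this
      simp only [Y, MvPolynomial.aeval_X, y, hn, dif_neg, not_false_iff, add_tsub_cancel_left]
      simp [q]
    intro z
    obtain ⟨w, rfl⟩ := hf z
    exact h1 ⟨w, rfl⟩
  have hker : (RingHom.ker Y).FG := Algebra.FinitePresentation.ker_fG_of_surjective Y hYsurj
  have hβY : ∀ p, β (Y p) = evF R F p := by
    intro p
    have : β.comp Y = evF R F := MvPolynomial.algHom_ext (fun v => by simp [Y, evF, hy])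
    exact DFunLike.congr_fun this p
  let e := Ideal.quotientKerAlgEquivOfSurjective hYsurj
  refine ⟨⟨F, RingHom.ker Y, hker, fun p hp => by
    rw [← hβY, (RingHom.mem_ker).1 hp, map_zero], 
    Module.Flat.of_linearEquiv (M := Q) e.toLinearEquiv⟩, hF, ?_⟩
  intro p hp
  rw [RingHom.mem_ker]
  have : Y.comp (MvPolynomial.rename (incl hF)) = α.comp (Ideal.Quotient.mkₐ R J0) := by
    apply MvPolynomial.algHom_ext
    intro v
    simp only [AlgHom.comp_apply, MvPolynomial.rename_X, Y, MvPolynomial.aeval_X, y, incl, v.2, dif_pos]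
    rfl
  have := DFunLike.congr_fun this p
  simp only [AlgHom.comp_apply] at this
  rw [this]
  have h0 : Ideal.Quotient.mkₐ R J0 p = 0 := Ideal.Quotient.eq_zero_iff_mem.2 hp
  rw [h0, map_zero]

/-- transition maps -/
noncomputable def idxMap {X Y : Idx R B} (h : X ≤ Y) : 
    (MvPolynomial X.F R ⧸ X.J) →ₐ[R] (MvPolynomial Y.F R ⧸ Y.J) :=
  Ideal.Quotient.liftₐ X.J ((Ideal.Quotient.mkₐ R Y.J).comp (MvPolynomial.rename (incl h.1)))
    (fun p hp => Ideal.Quotient.eq_zero_iff_mem.2 (h.2 p hp))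

lemma idxMap_mk {X Y : Idx R B} (h : X ≤ Y) (p) : idxMap h (Ideal.Quotient.mk X.J p) = 
    Ideal.Quotient.mk Y.J (MvPolynomial.rename (incl h.1) p) := rfl

/-- the canonical system -/
noncomputable def lazSys (hB : IndFlat R B) : Sys R where
  ι := Idx R B
  directed := by
    classical
    refine ⟨fun X Y => ?_⟩
    have h1 : X.F ⊆ X.F ∪ Y.F := Finset.subset_union_left
    have h2 : Y.F ⊆ X.F ∪ Y.F := Finset.subset_union_right
    obtain ⟨Z, h, hZ⟩ := idx_refine hB (X.F ∪ Y.F) (X.J.map (MvPolynomial.rename (incl h1)) ⊔ 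
      Y.J.map (MvPolynomial.rename (incl h2))) (Submodule.FG.sup (X.fg.map _) (Y.fg.map _)) (by
        have : X.J.map (MvPolynomial.rename (incl h1)) ⊔ Y.J.map (MvPolynomial.rename (incl h2)) ≤ 
            RingHom.ker (evF R (X.F ∪ Y.F)) := by
          refine sup_le ?_ ?_
          · rw [Ideal.map_le_iff_le_comap]
            intro p hp
            change evF R (X.F ∪ Y.F) _ = 0
            rw [evF_rename, X.le p hp]
          · rw [Ideal.map_le_iff_le_comap]
            intro p hp
            change evF R (X.F ∪ Y.F) _ = 0
            rw [evF_rename, Y.le p hp]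
        exact fun p hp => this hp)
    refine ⟨Z, ⟨h1.trans h, fun p hp => ?_⟩, ⟨h2.trans h, fun p hp => ?_⟩⟩
    · have := hZ _ (Ideal.mem_sup_left (Ideal.mem_map_of_mem _ hp))
      rw [MvPolynomial.rename_rename] at this
      exact this
    · have := hZ _ (Ideal.mem_sup_right (Ideal.mem_map_of_mem _ hp))
      rw [MvPolynomial.rename_rename] at this
      exact this
  nonempty := by
    obtain ⟨X, -⟩ := idx_refine hB ∅ ⊥ Submodule.fg_bot (by
      intro p hp
      rw [(Submodule.mem_bot _).1 hp, map_zero])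
    exact ⟨X⟩
  G X := MvPolynomial X.F R ⧸ X.J
  t h := idxMap h
  t_id X x := by
    obtain ⟨p, rfl⟩ := Ideal.Quotient.mk_surjective x
    rw [idxMap_mk]
    have : (incl (subset_rfl : X.F ⊆ X.F)) = id := rfl
    rw [this, MvPolynomial.rename_id]; rfl
  t_comp h h' x := by
    obtain ⟨p, rfl⟩ := Ideal.Quotient.mk_surjective x
    rw [idxMap_mk, idxMap_mk, idxMap_mk, MvPolynomial.rename_rename]
    rfl

lemma lazard (hB : IndFlat R B) : ∃ D : Sys R, (∀ i, Module.Flat R (D.G i)) ∧ 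
    (∀ i, Algebra.FinitePresentation R (D.G i)) ∧ Nonempty (IsColim D B) := by
  refine ⟨lazSys hB, fun X => X.flat, fun X => Algebra.FinitePresentation.quotient X.fg, ⟨⟨
    fun X => Ideal.Quotient.liftₐ X.J (evF R X.F) X.le, ?_, ?_, ?_⟩⟩⟩
  · intro X Y h x
    obtain ⟨p, rfl⟩ := Ideal.Quotient.mk_surjective x
    exact evF_rename h.1 p
  · intro b
    obtain ⟨X, h, hX⟩ := idx_refine hB {(b, 0)} ⊥ Submodule.fg_bot (by
      intro p hp
      rw [(Submodule.mem_bot _).1 hp, map_zero])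
    refine ⟨X, Ideal.Quotient.mk _ (MvPolynomial.X ⟨(b, 0), h (by simp)⟩), ?_⟩
    change evF R X.F _ = b
    simp [evF]
  · intro (X : Idx R B) x y hxy
    obtain ⟨p, rfl⟩ := Ideal.Quotient.mk_surjective x
    obtain ⟨q, rfl⟩ := Ideal.Quotient.mk_surjective y
    change evF R X.F p = evF R X.F q at hxy
    obtain ⟨Z, h, hZ⟩ := idx_refine hB X.F (X.J ⊔ Ideal.span {p - q}) (Submodule.FG.sup X.fg ⟨{p - q}, by simp⟩) (by
      have : X.J ⊔ Ideal.span {p - q} ≤ RingHom.ker (evF R X.F) := by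
        refine sup_le (fun p hp => X.le p hp) ?_
        rw [Ideal.span_singleton_le_iff_mem, RingHom.mem_ker, map_sub, hxy, sub_self]
      exact fun p hp => this hp)
    have hXZ : X ≤ Z := ⟨h, fun p hp => hZ p (Ideal.mem_sup_left hp)⟩
    refine ⟨Z, hXZ, ?_⟩
    change idxMap hXZ _ = idxMap hXZ _
    refine (Ideal.Quotient.eq (x := MvPolynomial.rename (incl h) p) (y := MvPolynomial.rename (incl h) q)).2 ?_
    rw [← map_sub]
    exact hZ _ (Ideal.mem_sup_right (Ideal.mem_span_singleton_self _))
end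
end IndFppf

namespace IndFppf
open TensorProduct
section

/-- `S` has points over all fields killing `j`. -/
def Good {B : Type u} [CommRing B] (j : Ideal B) (S : Type u) [CommRing S] [Algebra B S] : Prop :=
  ∀ (k : Type u) [Field k] (φ : B →+* k), j ≤ RingHom.ker φ →
    ∃ (k' : Type u) (_ : Field k') (θ : k →+* k') (ψ : S →+* k'), ψ.comp (algebraMap B S) = θ.comp φ

variable {B : Type u} [CommRing B] (j : Ideal B)

lemma good_of_hom {S S' : Type u} [CommRing S] [CommRing S'] [Algebra B S] [Algebra B S'] (f : S →ₐ[B] S')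
    (h : Good j S') : Good j S := by
  intro k _ φ hφ
  obtain ⟨k', _, θ, ψ, e⟩ := h k φ hφ
  refine ⟨k', inferInstance, θ, ψ.comp f.toRingHom, ?_⟩
  rw [RingHom.comp_assoc, ← e]
  congr 1
  exact f.comp_algebraMap

lemma good_self : Good j B := by
  intro k _ φ _
  exact ⟨k, inferInstance, RingHom.id k, φ, by ext; rfl⟩

lemma good_ff (S : Type u) [CommRing S] [Algebra B S] [Module.FaithfullyFlat B S] : Good j S := by
  intro k _ φ _
  let _ : Algebra B k := φ.toAlgebra
  have : Nontrivial (k ⊗[B] S) := Module.FaithfullyFlat.rTensor_nontrivial B S k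
  obtain ⟨M, hM⟩ := Ideal.exists_maximal (k ⊗[B] S)
  let _ : Field ((k ⊗[B] S) ⧸ M) := Ideal.Quotient.field M
  refine ⟨(k ⊗[B] S) ⧸ M, inferInstance, (Ideal.Quotient.mk M).comp
    (Algebra.TensorProduct.includeLeftRingHom), (Ideal.Quotient.mk M).comp
    (Algebra.TensorProduct.includeRight : S →ₐ[B] k ⊗[B] S).toRingHom, ?_⟩
  rw [RingHom.comp_assoc, RingHom.comp_assoc]
  congr 1
  ext b
  simp only [AlgHom.toRingHom_eq_coe, RingHom.comp_apply, RingHom.coe_coe, AlgHom.commutes]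
  rfl

lemma good_tensor {S S' : Type u} [CommRing S] [CommRing S'] [Algebra B S] [Algebra B S'] 
    (h : Good j S) (h' : Good j S') : Good j (S ⊗[B] S') := by
  intro k _ φ hφ
  obtain ⟨k1, _, θ1, ψ1, e1⟩ := h k φ hφ
  obtain ⟨k2, _, θ2, ψ2, e2⟩ := h' k1 (θ1.comp φ) (hφ.trans (fun x hx => by
    rw [RingHom.mem_ker] at hx ⊢
    rw [RingHom.comp_apply, hx, map_zero]))
  let _ : Algebra B k2 := (θ2.comp (θ1.comp φ)).toAlgebra
  have c1 : ∀ b, θ2.comp ψ1 (algebraMap B S b) = algebraMap B k2 b := fun b => by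
    change θ2 (ψ1.comp (algebraMap B S) b) = _
    rw [e1]; rfl
  have c2 : ∀ b, ψ2 (algebraMap B S' b) = algebraMap B k2 b := fun b => by
    change ψ2.comp (algebraMap B S') b = _
    rw [e2]; rfl
  let f1 : S →ₐ[B] k2 := { θ2.comp ψ1 with commutes' := c1 }
  let f2 : S' →ₐ[B] k2 := { ψ2 with commutes' := c2 }
  refine ⟨k2, inferInstance, θ2.comp θ1, (Algebra.TensorProduct.lift f1 f2 (fun _ _ => Commute.all _ _)).toRingHom, ?_⟩
  ext b
  exact (Algebra.TensorProduct.lift f1 f2 (fun _ _ => Commute.all _ _)).commutes b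

lemma good_away (a : B) (ha : a ∈ j) : Good j (Localization.Away (1 + a)) := by
  intro k _ φ hφ
  have : φ (1 + a) = 1 := by
    rw [map_add, map_one, (RingHom.mem_ker).1 (hφ ha), add_zero]
  refine ⟨k, inferInstance, RingHom.id k, IsLocalization.Away.lift (1 + a) (g := φ) (by rw [this]; exact isUnit_one), ?_⟩
  ext b
  simp

/-- codes of good flat finitely presented algebras -/
structure Code where
  n : ℕ
  J : Ideal (MvPolynomial (Fin n) B)
  fp : Algebra.FinitePresentation B (MvPolynomial (Fin n) B ⧸ J)
  flat : Module.Flat B (MvPolynomial (Fin n) B ⧸ J)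
  good : Good j (MvPolynomial (Fin n) B ⧸ J)

variable {j}
/-- the algebra of a code -/
abbrev Code.S (c : Code j) : Type u := MvPolynomial (Fin c.n) B ⧸ c.J

lemma exists_code (S : Type u) [CommRing S] [Algebra B S] [Module.Flat B S] [Algebra.FinitePresentation B S]
    (h : Good j S) : ∃ c : Code j, Nonempty (c.S ≃ₐ[B] S) := by
  obtain ⟨n, f, hf, -⟩ := Algebra.FinitePresentation.out (R := B) (A := S)
  let e := Ideal.quotientKerAlgEquivOfSurjective hf
  exact ⟨⟨n, RingHom.ker f, Algebra.FinitePresentation.equiv e.symm, Module.Flat.of_linearEquiv (M := S) e.toLinearEquiv,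
    good_of_hom j e.toAlgHom h⟩, ⟨e⟩⟩

/-- finite coproducts -/
structure Cop (T : Finset (Code j)) where
  E : Type u
  [ring : CommRing E]
  [alg : Algebra B E]
  flat : Module.Flat B E
  fp : Algebra.FinitePresentation B E
  good : Good j E
  inc : ∀ c ∈ T, c.S →ₐ[B] E
  hext : ∀ (X : Type u) [CommRing X] [Algebra B X] (f g : E →ₐ[B] X), 
    (∀ c hc, f.comp (inc c hc) = g.comp (inc c hc)) → f = g
  lift : ∀ (X : Type u) [CommRing X] [Algebra B X] (f : ∀ c ∈ T, c.S →ₐ[B] X), 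
    ∃ F : E →ₐ[B] X, ∀ c hc, F.comp (inc c hc) = f c hc

attribute [instance] Cop.ring Cop.alg

open Classical in
lemma cop_nonempty (T : Finset (Code j)) : Nonempty (Cop T) := by
  induction T using Finset.induction with
  | empty =>
    exact ⟨{
      E := B
      flat := inferInstance
      fp := inferInstance
      good := good_self j
      inc := fun c hc => (Finset.notMem_empty c hc).elim
      hext := fun X _ _ f g _ => by ext
      lift := fun X _ _ f => ⟨Algebra.ofId B X, fun c hc => (Finset.notMem_empty c hc).elim⟩ }⟩
  | insert a s ha ih =>
    obtain ⟨C⟩ := ih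
    have := C.flat
    have := C.fp
    have := a.flat
    have := a.fp
    let inc : ∀ c ∈ insert a s, c.S →ₐ[B] a.S ⊗[B] C.E := fun c hc =>
      if h : c = a then h ▸ Algebra.TensorProduct.includeLeft else
        Algebra.TensorProduct.includeRight.comp (C.inc c (Finset.mem_of_mem_insert_of_ne hc h))
    have i1 : ∀ h, inc a h = Algebra.TensorProduct.includeLeft := fun h => by simp [inc]
    have i2 : ∀ c (h : c ∈ s), inc c (Finset.mem_insert_of_mem h) = 
        Algebra.TensorProduct.includeRight.comp (C.inc c h) := fun c h => by
      have : c ≠ a := fun e => ha (e ▸ h)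
      simp [inc, this]
    refine ⟨{
      E := a.S ⊗[B] C.E
      flat := inferInstance
      fp := Algebra.FinitePresentation.trans B a.S _
      good := good_tensor j a.good C.good
      inc := inc
      hext := ?_
      lift := ?_ }⟩
    · intro X _ _ f g h
      apply Algebra.TensorProduct.ext'
      have e1 : ∀ x, f (x ⊗ₜ 1) = g (x ⊗ₜ 1) := fun x => by
        have := h a (Finset.mem_insert_self _ _)
        rw [i1 (Finset.mem_insert_self _ _)] at this
        exact DFunLike.congr_fun this x
      have e2 : ∀ y, f (1 ⊗ₜ y) = g (1 ⊗ₜ y) := fun y => by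
        have : f.comp Algebra.TensorProduct.includeRight = g.comp Algebra.TensorProduct.includeRight := by
          apply C.hext
          intro c hc
          have := h c (Finset.mem_insert_of_mem hc)
          rw [i2 c hc] at this
          exact this
        exact DFunLike.congr_fun this y
      intro x y
      have : x ⊗ₜ[B] y = (x ⊗ₜ 1) * (1 ⊗ₜ y) := by simp
      rw [this, map_mul, map_mul, e1, e2]
    · intro X _ _ f
      obtain ⟨F, hF⟩ := C.lift X (fun c hc => f c (Finset.mem_insert_of_mem hc))
      refine ⟨Algebra.TensorProduct.lift (f a (Finset.mem_insert_self _ _)) F (fun _ _ => Commute.all _ _), ?_⟩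
      intro c hc
      rcases Finset.mem_insert.1 hc with rfl | hc'
      · rw [i1 (Finset.mem_insert_self _ _)]
        apply AlgHom.ext
        intro x
        simp
      · rw [i2 c hc', ← hF c hc']
        apply AlgHom.ext
        intro x
        simp

/-- chosen coproduct -/
noncomputable def cop (T : Finset (Code j)) : Cop T := (cop_nonempty T).some

/-- transition -/
noncomputable def copMap {T T' : Finset (Code j)} (h : T ≤ T') : (cop T).E →ₐ[B] (cop T').E :=
  ((cop T).lift _ (fun c hc => (cop T').inc c (h hc))).choose

lemma copMap_inc {T T' : Finset (Code j)} (h : T ≤ T') (c) (hc : c ∈ T) : 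
    (copMap h).comp ((cop T).inc c hc) = (cop T').inc c (h hc) :=
  ((cop T).lift _ (fun c hc => (cop T').inc c (h hc))).choose_spec c hc

open Classical in
/-- the system of finite coproducts -/
noncomputable def copSys (j : Ideal B) : Sys B where
  ι := Finset (Code j)
  directed := ⟨fun S T => ⟨S ∪ T, Finset.subset_union_left, Finset.subset_union_right⟩⟩
  nonempty := ⟨∅⟩
  G T := (cop T).E
  t h := copMap h
  t_id T x := by
    have : copMap (le_refl T) = AlgHom.id B _ := by
      apply (cop T).hext
      intro c hc
      rw [copMap_inc]; rfl
    rw [this]; rfl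
  t_comp h h' x := by
    have : (copMap h').comp (copMap h) = copMap (h.trans h') := by
      apply (cop _).hext
      intro c hc
      rw [AlgHom.comp_assoc, copMap_inc, copMap_inc, copMap_inc]
    exact DFunLike.congr_fun this x

end

/-- stages of the tower -/
structure Stage (R : Type u) [CommRing R] where
  B : Type u
  [ring : CommRing B]
  [alg : Algebra R B]
  indFlat : IndFlat R B
  proper : ∀ m : Ideal R, m.IsMaximal → m.map (algebraMap R B) ≠ ⊤

attribute [instance] Stage.ring Stage.alg

section

lemma good_proper {R : Type u} [CommRing R] (I : Ideal R) (hI : ∀ m : Ideal R, m.IsMaximal → I ≤ m)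
    {B : Type u} [CommRing B] [Algebra R B] (m : Ideal R) (hm : m.IsMaximal)
    (hB : m.map (algebraMap R B) ≠ ⊤) (S : Type u) [CommRing S] [Algebra B S] [Algebra R S] [IsScalarTower R B S]
    (hS : Good (I.map (algebraMap R B)) S) : m.map (algebraMap R S) ≠ ⊤ := by
  obtain ⟨M, hM, hmM⟩ := Ideal.exists_le_maximal _ hB
  let _ : Field (B ⧸ M) := Ideal.Quotient.field M
  obtain ⟨k', _, θ, ψ, e⟩ := hS (B ⧸ M) (Ideal.Quotient.mk M) (by
    rw [Ideal.mk_ker]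
    exact (Ideal.map_mono (hI m hm)).trans hmM)
  intro h
  have : m.map (algebraMap R S) ≤ RingHom.ker ψ := by
    rw [Ideal.map_le_iff_le_comap]
    intro x hx
    rw [Ideal.mem_comap, RingHom.mem_ker, IsScalarTower.algebraMap_apply R B S, ← RingHom.comp_apply ψ, e,
      RingHom.comp_apply, Ideal.Quotient.eq_zero_iff_mem.2 (hmM (Ideal.mem_map_of_mem _ hx)), map_zero]
  rw [h, top_le_iff, Ideal.eq_top_iff_one, RingHom.mem_ker, map_one] at this
  exact one_ne_zero this

lemma step {R : Type u} [CommRing R] (I : Ideal R) (hI : ∀ m : Ideal R, m.IsMaximal → I ≤ m) (X : Stage R) : ∃ (Y : Stage R) (h : X.B →ₐ[R] Y.B), ∀ (S : Type u) [CommRing S] [Algebra X.B S]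
    [Module.Flat X.B S] [Algebra.FinitePresentation X.B S], Good (I.map (algebraMap R X.B)) S → 
    ∃ σ : S →+* Y.B, σ.comp (algebraMap X.B S) = h.toRingHom := by
  let j := I.map (algebraMap R X.B)
  let D := copSys j
  obtain ⟨L, _, _, ⟨c⟩⟩ := exists_colim D
  let _ : Algebra R L := ((algebraMap X.B L).comp (algebraMap R X.B)).toAlgebra
  have : IsScalarTower R X.B L := IsScalarTower.of_algebraMap_eq (fun _ => rfl)
  have hFlat : IndFlat R L := by
    intro P _ _ _ ψ
    let ψ1 : X.B ⊗[R] P →ₐ[X.B] L := Algebra.TensorProduct.lift (Algebra.ofId X.B _) ψ (fun _ _ => Commute.all _ _)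
    obtain ⟨T, α, hα⟩ := c.fp_lift _ ψ1
    let _ : Algebra R (D.G T) := ((algebraMap X.B (D.G T)).comp (algebraMap R X.B)).toAlgebra
    have : IsScalarTower R X.B (D.G T) := IsScalarTower.of_algebraMap_eq (fun _ => rfl)
    have : Module.Flat X.B (D.G T) := (cop T).flat
    have : Algebra.FinitePresentation X.B (D.G T) := (cop T).fp
    have hT : IndFlat R (D.G T) := indFlat_trans X.indFlat
    obtain ⟨Q, _, _, α', β, h1, h2, h3⟩ := hT P ((α.restrictScalars R).comp Algebra.TensorProduct.includeRight)
    refine ⟨Q, inferInstance, inferInstance, α', ((c.g T).restrictScalars R).comp β, h1, h2, ?_⟩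
    rw [AlgHom.comp_assoc, h3]
    ext p
    have := DFunLike.congr_fun hα (1 ⊗ₜ p)
    refine this.trans ?_
    simp only [ψ1, Algebra.TensorProduct.lift_tmul, map_one, one_mul]
  have hprop : ∀ m : Ideal R, m.IsMaximal → m.map (algebraMap R L) ≠ ⊤ := by
    intro m hm h
    obtain ⟨T0⟩ := D.nonempty
    obtain ⟨T, hT, e⟩ := c.ideal_top T0 ((m.map (algebraMap R X.B)).map (algebraMap X.B (D.G T0))) (by
      rw [← h]
      rw [Ideal.map_map]
      change Ideal.map (c.g T0 : D.G T0 →+* L) _ = _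
      rw [Ideal.map_map, ← RingHom.comp_assoc]
      congr 1
      rw [IsScalarTower.algebraMap_eq R X.B L]
      congr 1
      exact (c.g T0).comp_algebraMap)
    let _ : Algebra R (D.G T) := ((algebraMap X.B (D.G T)).comp (algebraMap R X.B)).toAlgebra
    have : IsScalarTower R X.B (D.G T) := IsScalarTower.of_algebraMap_eq (fun _ => rfl)
    refine good_proper I hI m hm (X.proper m hm) (D.G T) (cop T).good ?_
    rw [← e]
    rw [Ideal.map_map]
    change _ = Ideal.map (D.t hT : D.G T0 →+* D.G T) _
    rw [Ideal.map_map, ← RingHom.comp_assoc]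
    congr 1
    rw [IsScalarTower.algebraMap_eq R X.B (D.G T)]
    congr 1
    exact (D.t hT).comp_algebraMap.symm
  refine ⟨⟨L, hFlat, hprop⟩, IsScalarTower.toAlgHom R X.B L, ?_⟩
  intro S _ _ _ _ hS
  obtain ⟨cd, ⟨e⟩⟩ := exists_code S hS
  let T : D.ι := ({cd} : Finset (Code j))
  let f : S →ₐ[X.B] L := ((c.g T).comp 
    ((cop ({cd} : Finset (Code j))).inc cd (Finset.mem_singleton_self cd))).comp e.symm.toAlgHom
  exact ⟨f.toRingHom, f.comp_algebraMap⟩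
end
end IndFppf

namespace IndFppf
open TensorProduct
section
variable {R : Type u} [CommRing R] (I : Ideal R) (hI : ∀ m : Ideal R, m.IsMaximal → I ≤ m)

/-- trivial stage -/
def stage0 (R : Type u) [CommRing R] : Stage R where
  B := R
  indFlat := indFlat_self R
  proper m hm := by
    rw [Algebra.algebraMap_self, Ideal.map_id]
    exact hm.ne_top

/-- next stage -/
noncomputable def nxt (X : Stage R) : Stage R := (step I hI X).choose

/-- map to the next stage -/
noncomputable def nxtHom (X : Stage R) : X.B →ₐ[R] (nxt I hI X).B := (step I hI X).choose_spec.choose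

lemma nxt_spec (X : Stage R) (S : Type u) [CommRing S] [Algebra X.B S]
    [Module.Flat X.B S] [Algebra.FinitePresentation X.B S] (h : Good (I.map (algebraMap R X.B)) S) :
    ∃ σ : S →+* (nxt I hI X).B, σ.comp (algebraMap X.B S) = (nxtHom I hI X).toRingHom :=
  (step I hI X).choose_spec.choose_spec S h

/-- the tower -/
noncomputable def tower : ℕ → Stage R
  | 0 => stage0 R
  | n + 1 => nxt I hI (tower n)

/-- transition maps of the tower -/
noncomputable def towerMap {n m : ℕ} (h : n ≤ m) : (tower I hI n).B →ₐ[R] (tower I hI m).B :=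
  Nat.leRecOn (C := fun k => (tower I hI n).B →ₐ[R] (tower I hI k).B) h
    (fun {k} f => (nxtHom I hI (tower I hI k)).comp f) (AlgHom.id R _)

lemma towerMap_self (n : ℕ) : towerMap I hI (le_refl n) = AlgHom.id R _ := Nat.leRecOn_self _

lemma towerMap_succ {n m : ℕ} (h : n ≤ m) : towerMap I hI (h.trans (Nat.le_succ m)) = 
    (nxtHom I hI (tower I hI m)).comp (towerMap I hI h) := Nat.leRecOn_succ h _

lemma towerMap_trans {n m k : ℕ} (h : n ≤ m) (h' : m ≤ k) : 
    (towerMap I hI h').comp (towerMap I hI h) = towerMap I hI (h.trans h') := by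
  induction k, h' using Nat.le_induction with
  | base => rw [towerMap_self]; exact AlgHom.id_comp _
  | succ k hk ih => 
    apply AlgHom.ext
    intro x
    have h1 := DFunLike.congr_fun (towerMap_succ I hI hk) (towerMap I hI h x)
    have h2 := DFunLike.congr_fun (towerMap_succ I hI (h.trans hk)) x
    have h3 := DFunLike.congr_fun ih x
    refine h1.trans (Eq.trans ?_ h2.symm)
    exact congrArg (nxtHom I hI (tower I hI k)) h3

/-- the tower as a system -/
noncomputable def towerSys : Sys R where
  ι := ULift.{u} ℕ
  directed := ⟨fun a b => ⟨⟨max a.down b.down⟩, le_max_left a.down b.down, le_max_right a.down b.down⟩⟩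
  nonempty := ⟨⟨0⟩⟩
  G n := (tower I hI n.down).B
  t {n m} h := towerMap I hI (n := n.down) (m := m.down) h
  t_id n x := by rw [towerMap_self]; rfl
  t_comp h h' x := DFunLike.congr_fun (towerMap_trans I hI h h') x

lemma exists_tower (I : Ideal R) (hI : ∀ m : Ideal R, m.IsMaximal → I ≤ m) : ∃ D : Sys R, (∀ i, IndFlat R (D.G i)) ∧ 
    (∀ i, ∀ m : Ideal R, m.IsMaximal → m.map (algebraMap R (D.G i)) ≠ ⊤) ∧
    ∀ i, ∃ j, ∃ h : i ≤ j, ∀ (S : Type u) [CommRing S] [Algebra (D.G i) S]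
      [Module.Flat (D.G i) S] [Algebra.FinitePresentation (D.G i) S], Good (I.map (algebraMap R (D.G i))) S → 
      ∃ σ : S →+* D.G j, σ.comp (algebraMap (D.G i) S) = (D.t h).toRingHom := by
  refine ⟨towerSys I hI, fun i => (tower I hI i.down).indFlat, fun i => (tower I hI i.down).proper, ?_⟩
  intro i
  refine ⟨⟨i.down + 1⟩, Nat.le_succ i.down, ?_⟩
  intro S i1 i2 i3 i4 hS
  obtain ⟨σ, hσ⟩ := @nxt_spec R _ I hI (tower I hI i.down) S i1 i2 i3 i4 hS
  refine ⟨σ, hσ.trans ?_⟩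
  have h1 := towerMap_succ I hI (le_refl i.down)
  have h2 : (nxtHom I hI (tower I hI i.down)).comp (towerMap I hI (le_refl i.down)) = 
      nxtHom I hI (tower I hI i.down) := by rw [towerMap_self]; exact AlgHom.comp_id _
  exact congrArg (fun f : (tower I hI i.down).B →ₐ[R] (nxt I hI (tower I hI i.down)).B => f.toRingHom) 
    (h1.trans h2).symm
end
end IndFppf

namespace IndFppf
open TensorProduct
section

lemma exists_point {A S : Type u} [CommRing A] [CommRing S] [Algebra A S] (J : Ideal A)
    (hJ : ∀ p : PrimeSpectrum A, ¬ J ≤ p.asIdeal → p ∈ Set.range (PrimeSpectrum.comap (algebraMap A S)))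
    (k : Type u) [Field k] [Algebra A k] (h : ¬ J ≤ RingHom.ker (algebraMap A k)) : 
    Nontrivial (k ⊗[A] S) := by
  have hp : (RingHom.ker (algebraMap A k)).IsPrime := RingHom.ker_isPrime _
  let p : PrimeSpectrum A := ⟨RingHom.ker (algebraMap A k), hp⟩
  have h1 : Nontrivial (p.asIdeal.ResidueField ⊗[A] S) := 
    (PrimeSpectrum.nontrivial_iff_mem_rangeComap p).2 (hJ p h)
  let f : p.asIdeal.ResidueField →+* k := Ideal.ResidueField.lift p.asIdeal (algebraMap A k) le_rfl (by
    intro x hx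
    exact isUnit_iff_ne_zero.2 (fun e => hx e))
  let _ : Algebra p.asIdeal.ResidueField k := f.toAlgebra
  have : IsScalarTower A p.asIdeal.ResidueField k := IsScalarTower.of_algebraMap_eq (fun a => 
    (Ideal.ResidueField.lift_algebraMap _ _ _ _ a).symm)
  have : Nontrivial (k ⊗[p.asIdeal.ResidueField] (p.asIdeal.ResidueField ⊗[A] S)) := 
    Module.FaithfullyFlat.lTensor_nontrivial _ _ _
  exact (AlgebraTensorModule.cancelBaseChange A p.asIdeal.ResidueField k k S).symm.toEquiv.nontrivial

lemma faithfullyFlat_of_points {A S : Type u} [CommRing A] [CommRing S] [Algebra A S] [Module.Flat A S] (J : Ideal A)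
    (hJ : ∀ p : PrimeSpectrum A, ¬ J ≤ p.asIdeal → p ∈ Set.range (PrimeSpectrum.comap (algebraMap A S)))
    (B : Type u) [CommRing B] [Algebra A B] (h : J.map (algebraMap A B) = ⊤) : 
    Module.FaithfullyFlat B (B ⊗[A] S) := by
  apply Module.FaithfullyFlat.of_comap_surjective
  intro q
  rw [← Set.mem_range, ← PrimeSpectrum.nontrivial_iff_mem_rangeComap]
  have := exists_point J hJ q.asIdeal.ResidueField (by
    intro h'
    have : J.map (algebraMap A B) ≤ q.asIdeal := by
      rw [Ideal.map_le_iff_le_comap]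
      intro x hx
      have := h' hx
      rw [RingHom.mem_ker, IsScalarTower.algebraMap_apply A B, Ideal.algebraMap_residueField_eq_zero] at this
      exact this
    rw [h] at this
    exact q.2.ne_top (top_le_iff.1 this))
  exact (AlgebraTensorModule.cancelBaseChange A B q.asIdeal.ResidueField q.asIdeal.ResidueField S).toEquiv.nontrivial

lemma exists_open_ideal {A S : Type u} [CommRing A] [CommRing S] [Algebra A S] [Module.Flat A S]
    [Algebra.FinitePresentation A S] : ∃ J : Ideal A, ∀ p : PrimeSpectrum A, ¬ J ≤ p.asIdeal ↔
      p ∈ Set.range (PrimeSpectrum.comap (algebraMap A S)) := by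
  have h : IsOpen (Set.range (PrimeSpectrum.comap (algebraMap A S))) := 
    PrimeSpectrum.isOpenMap_comap_of_hasGoingDown_of_finitePresentation.isOpen_range
  obtain ⟨J, hJ⟩ := (PrimeSpectrum.isClosed_iff_zeroLocus_ideal _).1 h.isClosed_compl
  refine ⟨J, fun p => ?_⟩
  have : p ∈ (Set.range (PrimeSpectrum.comap (algebraMap A S)))ᶜ ↔ J ≤ p.asIdeal := by
    rw [hJ]; exact PrimeSpectrum.mem_zeroLocus _ _
  rw [← this]; simp

end
section
variable {R : Type u} [CommRing R] (I : Ideal R) {D : Sys R} {L : Type u} [CommRing L] [Algebra R L]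
  (c : IsColim D L)
  (hD : ∀ i, ∃ j, ∃ h : i ≤ j, ∀ (S : Type u) [CommRing S] [Algebra (D.G i) S]
      [Module.Flat (D.G i) S] [Algebra.FinitePresentation (D.G i) S], Good (I.map (algebraMap R (D.G i))) S → 
      ∃ σ : S →+* D.G j, σ.comp (algebraMap (D.G i) S) = (D.t h).toRingHom)

lemma jac_of_tower (I : Ideal R) (c : IsColim D L)
  (hD : ∀ i, ∃ j, ∃ h : i ≤ j, ∀ (S : Type u) [CommRing S] [Algebra (D.G i) S]
      [Module.Flat (D.G i) S] [Algebra.FinitePresentation (D.G i) S], Good (I.map (algebraMap R (D.G i))) S → 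
      ∃ σ : S →+* D.G j, σ.comp (algebraMap (D.G i) S) = (D.t h).toRingHom) :
    I.map (algebraMap R L) ≤ Ideal.jacobson ⊥ := by
  have key : ∀ a ∈ I.map (algebraMap R L), IsUnit (1 + a) := by
    intro a ha
    obtain ⟨i0⟩ := D.nonempty
    have e0 : (I.map (algebraMap R (D.G i0))).map (c.g i0) = I.map (algebraMap R L) := by
      change Ideal.map (c.g i0 : D.G i0 →+* L) _ = _
      rw [Ideal.map_map, (c.g i0).comp_algebraMap]
    rw [← e0] at ha
    obtain ⟨j, hj, z, hz, rfl⟩ := c.ideal_mem i0 _ a ha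
    have e1 : (I.map (algebraMap R (D.G i0))).map (D.t hj) = I.map (algebraMap R (D.G j)) := by
      change Ideal.map (D.t hj : D.G i0 →+* D.G j) _ = _
      rw [Ideal.map_map, (D.t hj).comp_algebraMap]
    rw [e1] at hz
    obtain ⟨k, hk, H⟩ := hD j
    have : Module.Flat (D.G j) (Localization.Away (1 + z)) := IsLocalization.flat _ (Submonoid.powers (1 + z))
    have : Algebra.FinitePresentation (D.G j) (Localization.Away (1 + z)) := 
      IsLocalization.Away.finitePresentation (1 + z)
    obtain ⟨σ, hσ⟩ := H _ (good_away _ z hz)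
    have h1 : IsUnit (D.t hk (1 + z)) := by
      have : D.t hk (1 + z) = σ (algebraMap _ _ (1 + z)) := (DFunLike.congr_fun hσ (1 + z)).symm
      rw [this]
      exact (IsLocalization.Away.algebraMap_isUnit (1 + z)).map σ
    have h2 := h1.map (c.g k)
    rwa [c.g_comp, map_add, map_one] at h2
  intro a ha
  rw [Ideal.mem_jacobson_bot]
  intro y
  rw [add_comm]
  exact key _ (Ideal.mul_mem_right _ _ ha)

lemma split_of_tower (I : Ideal R) (c : IsColim D L)
  (hD : ∀ i, ∃ j, ∃ h : i ≤ j, ∀ (S : Type u) [CommRing S] [Algebra (D.G i) S]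
      [Module.Flat (D.G i) S] [Algebra.FinitePresentation (D.G i) S], Good (I.map (algebraMap R (D.G i))) S → 
      ∃ σ : S →+* D.G j, σ.comp (algebraMap (D.G i) S) = (D.t h).toRingHom)
    (S : Type u) [CommRing S] [Algebra L S] [Module.FaithfullyFlat L S] [Algebra.FinitePresentation L S] : 
    Nonempty (S →ₐ[L] L) := by
  obtain ⟨A1, _, _, _, _, S1, _, _, hfp, hfl, hfp1, ⟨e⟩⟩ := descent R L S
  obtain ⟨i, α, hα⟩ := c.fp_lift A1 (IsScalarTower.toAlgHom R A1 L)
  obtain ⟨J, hJ⟩ := exists_open_ideal (A := A1) (S := S1)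
  have hJL : J.map (algebraMap A1 L) = ⊤ := by
    by_contra hne
    obtain ⟨M, hM, hJM⟩ := Ideal.exists_le_maximal _ hne
    obtain ⟨Q, hQ⟩ := PrimeSpectrum.comap_surjective_of_faithfullyFlat (A := L) (B := S) ⟨M, hM.isPrime⟩
    let s : S1 →+* S := e.toRingEquiv.toRingHom.comp 
      (Algebra.TensorProduct.includeRight : S1 →ₐ[A1] L ⊗[A1] S1).toRingHom
    have hs : s.comp (algebraMap A1 S1) = (algebraMap L S).comp (algebraMap A1 L) := by
      ext a
      change e ((Algebra.TensorProduct.includeRight : S1 →ₐ[A1] L ⊗[A1] S1) (algebraMap A1 S1 a)) = _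
      rw [AlgHom.commutes, IsScalarTower.algebraMap_apply A1 L (L ⊗[A1] S1), AlgEquiv.commutes]
      rfl
    refine (hJ (PrimeSpectrum.comap (algebraMap A1 L) ⟨M, hM.isPrime⟩)).2 ⟨PrimeSpectrum.comap s Q, ?_⟩ 
      (Ideal.map_le_iff_le_comap.1 hJM)
    rw [← PrimeSpectrum.comap_comp_apply, hs, PrimeSpectrum.comap_comp_apply, hQ]
  obtain ⟨j, hij, hj⟩ := c.ideal_top i (J.map α) (by
    rw [Ideal.map_mapₐ, hα]
    exact hJL)
  let α' := (D.t hij).comp α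
  let _ : Algebra A1 (D.G j) := α'.toRingHom.toAlgebra
  have hff : Module.FaithfullyFlat (D.G j) (D.G j ⊗[A1] S1) := 
    faithfullyFlat_of_points J (fun p => (hJ p).1) (D.G j) (by rw [← hj, Ideal.map_mapₐ]; rfl)
  obtain ⟨k, hk, H⟩ := hD j
  obtain ⟨σ, hσ⟩ := H (D.G j ⊗[A1] S1) (good_ff _ _)
  let τ : S1 →+* L := (c.g k).toRingHom.comp (σ.comp 
    (Algebra.TensorProduct.includeRight : S1 →ₐ[A1] D.G j ⊗[A1] S1).toRingHom)
  have hτ : ∀ a, τ (algebraMap A1 S1 a) = algebraMap A1 L a := by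
    intro a
    change c.g k (σ ((Algebra.TensorProduct.includeRight : S1 →ₐ[A1] D.G j ⊗[A1] S1) (algebraMap A1 S1 a))) = _
    rw [AlgHom.commutes, IsScalarTower.algebraMap_apply A1 (D.G j)]
    have h1 := DFunLike.congr_fun hσ (algebraMap A1 (D.G j) a)
    change σ _ = D.t hk (D.t hij (α a)) at h1
    rw [h1, c.g_comp, c.g_comp]
    exact DFunLike.congr_fun hα a
  let τ' : S1 →ₐ[A1] L := { τ with commutes' := hτ }
  exact ⟨(Algebra.TensorProduct.lift (Algebra.ofId L L) τ' (fun _ _ => Commute.all _ _)).comp e.symm.toAlgHom⟩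

lemma ff_of_tower (c : IsColim D L) (h1 : ∀ i, IndFlat R (D.G i))
    (h2 : ∀ i, ∀ m : Ideal R, m.IsMaximal → m.map (algebraMap R (D.G i)) ≠ ⊤) : Module.FaithfullyFlat R L := by
  have : Module.Flat R L := indFlat_flat (c.indFlat h1)
  refine ⟨fun m hm h => ?_⟩
  rw [Ideal.smul_top_eq_map, Submodule.restrictScalars_eq_top_iff] at h
  obtain ⟨i0⟩ := D.nonempty
  obtain ⟨j, hj, e⟩ := c.ideal_top i0 (m.map (algebraMap R (D.G i0))) (by
    change Ideal.map (c.g i0 : D.G i0 →+* L) _ = _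
    rw [Ideal.map_map, (c.g i0).comp_algebraMap, h])
  refine h2 j m hm ?_
  rw [← e]
  change _ = Ideal.map (D.t hj : D.G i0 →+* D.G j) _
  rw [Ideal.map_map, (D.t hj).comp_algebraMap]
end
end IndFppf

namespace IndFppf
open TensorProduct
section
open Polynomial

/-- the auxiliary polynomial -/
noncomputable def auxPoly {A : Type u} [CommRing A] (n : ℕ) (c : ℕ → A) (i : A) : A[X] :=
  X ^ n + ∑ j ∈ Finset.range n, C (c (j + 1) * i ^ j) * X ^ (n - 1 - j)

lemma auxPoly_monic {A : Type u} [CommRing A] (n : ℕ) (c : ℕ → A) (i : A) : (auxPoly n c i).Monic := by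
  apply monic_X_pow_add
  refine (degree_sum_le _ _).trans_lt ?_
  rw [Finset.sup_lt_iff (by exact WithBot.bot_lt_coe n)]
  intro j hj
  refine (degree_C_mul_X_pow_le _ _).trans_lt ?_
  rw [Finset.mem_range] at hj
  exact_mod_cast (by omega : n - 1 - j < n)

lemma auxPoly_eval {A : Type u} [CommRing A] (n : ℕ) (c : ℕ → A) (i z w : A) (h : z * w = 1) 
    (hz : (auxPoly n c i).eval z = 0) (h0 : c 0 = i) : ∑ j ∈ Finset.range (n + 1), c j * (i * w) ^ j = 0 := by
  have h1 : i * w ^ n * (auxPoly n c i).eval z = 0 := by rw [hz, mul_zero]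
  rw [← h1, Finset.sum_range_succ']
  simp only [auxPoly, eval_add, eval_pow, eval_X, eval_finset_sum, eval_mul, eval_C, mul_add, Finset.mul_sum, h0,
    pow_zero, mul_one]
  rw [add_comm, mul_assoc, ← mul_pow, mul_comm w z, h, one_pow, mul_one]
  congr 1
  apply Finset.sum_congr rfl
  intro j hj
  rw [Finset.mem_range] at hj
  obtain ⟨t, rfl⟩ := Nat.exists_eq_add_of_lt hj
  have e : j + t + 1 - 1 - j = t := by omega
  rw [e]
  have : z ^ t * w ^ t = 1 := by rw [← mul_pow, h, one_pow]
  linear_combination (-(c (j+1)) * i ^ (j+1) * w ^ (j+1)) * this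

lemma henselian_of_split {A : Type u} [CommRing A] (I : Ideal A) (hI : I ≤ Ideal.jacobson ⊥)
    (hs : ∀ (S : Type u) [CommRing S] [Algebra A S], Module.FaithfullyFlat A S → 
      Algebra.FinitePresentation A S → Nonempty (S →ₐ[A] A)) : HenselianRing A I := by
  refine ⟨hI, ?_⟩
  intro f _ a₀ h0 h1
  let n := f.natDegree + 1
  let c : ℕ → A := (taylor a₀ f).coeff
  have hc0 : c 0 = f.eval a₀ := taylor_coeff_zero _ _
  have hc1 : c 1 = f.derivative.eval a₀ := taylor_coeff_one _ _
  let i := c 0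
  have hi : i ∈ I := by simp only [i]; rw [hc0]; exact h0
  let k := auxPoly n c i
  have hk : k.Monic := auxPoly_monic n c i
  let T := AdjoinRoot k
  let S := Localization.Away (AdjoinRoot.root k)
  have : Module.Free A T := Module.Free.of_basis (AdjoinRoot.powerBasis' hk).basis
  have : Module.Flat T S := IsLocalization.flat _ (Submonoid.powers (AdjoinRoot.root k))
  have : Module.Flat A S := Module.Flat.trans A T S
  have : Algebra.FinitePresentation A T := by
    refine Algebra.FinitePresentation.quotient (A := A[X]) ?_
    exact ⟨{k}, by simp⟩
  have : Algebra.FinitePresentation T S := IsLocalization.Away.finitePresentation (AdjoinRoot.root k)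
  have hfp : Algebra.FinitePresentation A S := Algebra.FinitePresentation.trans A T S
  have hff : Module.FaithfullyFlat A S := by
    refine ⟨fun m hm h => ?_⟩
    rw [Ideal.smul_top_eq_map, Submodule.restrictScalars_eq_top_iff] at h
    have hIm : I ≤ m := hI.trans (by
      rw [Ideal.jacobson]
      exact sInf_le ⟨bot_le, hm⟩)
    let _ : Field (A ⧸ m) := Ideal.Quotient.field m
    let q := Ideal.Quotient.mk m
    have hqi : q i = 0 := Ideal.Quotient.eq_zero_iff_mem.2 (hIm hi)
    have hu : q (c 1) ≠ 0 := by
      intro e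
      rw [hc1] at e
      have h3 := h1.map (Ideal.Quotient.factor hIm)
      rw [Ideal.Quotient.factor_mk] at h3
      exact h3.ne_zero e
    have hroot : k.eval₂ q (- q (c 1)) = 0 := by
      simp only [k, auxPoly, eval₂_add, eval₂_pow, eval₂_X, eval₂_finset_sum, eval₂_mul, eval₂_C, map_mul, map_pow, hqi]
      rw [Finset.sum_eq_single 0]
      · simp only [n, zero_add, pow_zero, mul_one, Nat.add_sub_cancel, Nat.sub_zero]
        ring
      · intro b _ hb
        rw [zero_pow hb]; simp
      · intro h; simp [n] at h
    let p : T →+* A ⧸ m := AdjoinRoot.lift q (- q (c 1)) hroot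
    let p' : S →+* A ⧸ m := IsLocalization.Away.lift (AdjoinRoot.root k) (g := p) (by
      simp only [p, AdjoinRoot.lift_root]
      exact isUnit_iff_ne_zero.2 (neg_ne_zero.2 hu))
    have hp' : ∀ a, p' (algebraMap A S a) = q a := by
      intro a
      rw [IsScalarTower.algebraMap_apply A T S]
      refine (IsLocalization.Away.lift_eq _ _ _).trans ?_
      exact AdjoinRoot.lift_of hroot
    have hle : m.map (algebraMap A S) ≤ RingHom.ker p' := by
      rw [Ideal.map_le_iff_le_comap]
      intro x hx
      rw [Ideal.mem_comap, RingHom.mem_ker, hp']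
      exact Ideal.Quotient.eq_zero_iff_mem.2 hx
    rw [h, top_le_iff, Ideal.eq_top_iff_one, RingHom.mem_ker, map_one] at hle
    exact one_ne_zero hle
  obtain ⟨σ⟩ := hs S hff hfp
  let z : A := σ (algebraMap T S (AdjoinRoot.root k))
  have hz : IsUnit z := (IsLocalization.Away.algebraMap_isUnit (S := S) (AdjoinRoot.root k)).map σ
  obtain ⟨w, hw⟩ := hz.exists_right_inv
  have hkz : k.eval z = 0 := by
    have : aeval (AdjoinRoot.root k) k = 0 := by
      rw [AdjoinRoot.aeval_eq, AdjoinRoot.mk_self]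
    let σ' : T →ₐ[A] A := σ.comp (IsScalarTower.toAlgHom A T S)
    have h2 : aeval (σ' (AdjoinRoot.root k)) k = 0 := by rw [aeval_algHom_apply, this, map_zero]
    rwa [coe_aeval_eq_eval] at h2
  refine ⟨a₀ + i * w, ?_, ?_⟩
  · have h3 := auxPoly_eval n c i z w hw hkz rfl
    have h4 : f.eval (a₀ + i * w) = (taylor a₀ f).eval (i * w) := by
      rw [taylor_eval, add_comm]
    rw [IsRoot, h4, eval_eq_sum_range' (n := n + 1)]
    · exact h3
    · rw [natDegree_taylor]; omega
  · rw [add_sub_cancel_left]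
    exact Ideal.mul_mem_right _ _ hi
end
end IndFppf

/-- For any commutative ring `R` and ideal `I` contained in every maximal ideal of `R`,
there is a faithfully flat, ind-fppf `R`-algebra `R̃` that is Henselian along `I·R̃` and has
no nonsplit fppf covers. -/
theorem exists_ind_fppf_splitting_algebra (R : Type u) [CommRing R] (I : Ideal R)
    (hI : ∀ m : Ideal R, m.IsMaximal → I ≤ m) :
    Nonempty (IndFppfSplittingAlgebra R I) := by
  obtain ⟨D, h1, h2, h3⟩ := IndFppf.exists_tower I hI
  obtain ⟨L, _, _, ⟨c⟩⟩ := IndFppf.exists_colim D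
  obtain ⟨E, e1, e2, ⟨d⟩⟩ := IndFppf.lazard (c.indFlat h1)
  have hs : ∀ (S : Type u) [CommRing S] [Algebra L S], Module.FaithfullyFlat L S →
      Algebra.FinitePresentation L S → Nonempty (S →ₐ[L] L) := by
    intro S _ _ i1 i2
    exact IndFppf.split_of_tower I c h3 S
  exact ⟨{
    At := L
    faithfullyFlat := IndFppf.ff_of_tower c h1 h2
    ι := E.ι
    directed := E.directed
    nonempty_ι := E.nonempty
    A := E.G
    flatA := e1
    fpA := e2
    t := E.t
    t_id := E.t_id
    t_comp := E.t_comp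
    g := d.g
    g_comp := d.g_comp
    g_jointly_surjective := d.surj
    g_eq_eventually := d.eq
    henselian := IndFppf.henselian_of_split _ (IndFppf.jac_of_tower I c h3) hs
    splits := hs }⟩
end
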